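/- arXiv:2307.01815 — 5 statements merged into one kernel-verified Lean document; each statement's English description precedes it below -/
import Mathlib

section
/- There are infinitely many triples of integers (x, r, y) with r > 0, gcd(x, r) = 1 and xy ≠ 0 satisfying (x−4r)³ + (x−3r)³ + (x−2r)³ + (x−r)³ + x³ + (x+r)³ + (x+2r)³ + (x+3r)³ + (x+4r)³ = y², equivalently 9x(x² + 20r²) = y². -/
theorem pell_aux (n : ℕ) : ∃ b r : ℤ, (n : ℤ) < r ∧ 0 < b ∧ b ^ 2 = 1 + 20 * r ^ 2 := by
  induction n with
  | zero => exact ⟨9, 2, by norm_num, by norm_num, by norm_num⟩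
  | succ k ih =>
    obtain ⟨b, r, h1, h2, h3⟩ := ih
    refine ⟨9 * b + 40 * r, 2 * b + 9 * r, ?_, ?_, ?_⟩
    · push_cast; omega
    · omega
    · linear_combination h3

theorem infinitely_many_solutions_exponent_two :
    {t : ℤ × ℤ × ℤ | 0 < t.2.1 ∧ Int.gcd t.1 t.2.1 = 1 ∧ t.1 * t.2.2 ≠ 0 ∧
      (t.1 - 4*t.2.1)^3 + (t.1 - 3*t.2.1)^3 + (t.1 - 2*t.2.1)^3 + (t.1 - t.2.1)^3 + t.1^3
        + (t.1 + t.2.1)^3 + (t.1 + 2*t.2.1)^3 + (t.1 + 3*t.2.1)^3 + (t.1 + 4*t.2.1)^3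
        = t.2.2 ^ 2}.Infinite := by
  intro hfin
  obtain ⟨M, hM⟩ := (hfin.image (fun t : ℤ × ℤ × ℤ => t.2.1)).bddAbove
  obtain ⟨b, r, h1, h2, h3⟩ := pell_aux M.toNat
  have hle : r ≤ M := by
    apply hM
    refine ⟨(1, r, 3 * b), ⟨?_, ?_, ?_, ?_⟩, rfl⟩
    · show 0 < r
      omega
    · simp
    · show (1 : ℤ) * (3 * b) ≠ 0
      omega
    · show (1 - 4*r)^3 + (1 - 3*r)^3 + (1 - 2*r)^3 + (1 - r)^3 + 1^3
        + (1 + r)^3 + (1 + 2*r)^3 + (1 + 3*r)^3 + (1 + 4*r)^3 = (3 * b) ^ 2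
      linear_combination (-9) * h3
  omega
end

section
/- There are infinitely many triples of integers (x, r, y) with r > 0, gcd(x, r) = 1 and xy ≠ 0 satisfying (x−4r)³ + (x−3r)³ + (x−2r)³ + (x−r)³ + x³ + (x+r)³ + (x+2r)³ + (x+3r)³ + (x+4r)³ = y³, equivalently 9x(x² + 20r²) = y³. -/
lemma step_aux (n : ℕ) (x r y : ℤ) (hr : 0 < r) (hg : Int.gcd x r = 1) (hxy : x * y ≠ 0)
    (hn : (2:ℤ)^(n+2) ∣ x) (h : 9*x*(x^2+20*r^2) = y^3) :
    ∃ x' r' y' : ℤ, 0 < r' ∧ Int.gcd x' r' = 1 ∧ x' * y' ≠ 0 ∧ (2:ℤ)^(n+1+2) ∣ x' ∧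
      9*x'*(x'^2+20*r'^2) = y'^3 := by
  obtain ⟨w, hw⟩ := hn
  obtain ⟨u, hu⟩ : ∃ u, u = 2^n * w := ⟨_, rfl⟩
  have hxu : x = 4*u := by rw [hw, hu]; ring
  have hu0 : u ≠ 0 := by rintro rfl; simp [hxu] at hxy
  have hy0 : y ≠ 0 := by rintro rfl; simp at hxy
  have hrodd : Odd r := by
    rw [← Int.not_even_iff_odd]
    intro he
    have h2 : (2:ℤ) ∣ Int.gcd x r := Int.dvd_coe_gcd ⟨2*u, by rw [hxu]; ring⟩ he.two_dvd
    rw [hg] at h2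
    norm_num at h2
  obtain ⟨R, hR⟩ : ∃ R, R = 25*r^4 - 360*r^2*u^2 - 432*u^4 := ⟨_, rfl⟩
  obtain ⟨X, hX⟩ : ∃ X, X = 800*r^3*u := ⟨_, rfl⟩
  obtain ⟨Y, hY⟩ : ∃ Y, Y = 10*r*y*(36*u^2+5*r^2) := ⟨_, rfl⟩
  have hRodd : Odd R := by
    obtain ⟨k, hk⟩ := hrodd.pow (n := 4)
    exact ⟨25*k + 12 - 180*r^2*u^2 - 216*u^4, by rw [hR, hk]; ring⟩
  have hR0 : R ≠ 0 := by rintro rfl; simp at hRodd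
  have hX0 : X ≠ 0 := by rw [hX]; positivity
  have hY0 : Y ≠ 0 := by rw [hY]; positivity
  have hE : 9*X*(X^2+20*R^2) = Y^3 := by
    have : Y^3 = 1000*r^3*(36*u^2+5*r^2)^3 * y^3 := by rw [hY]; ring
    rw [this, ← h, hX, hR, hxu]; ring
  obtain ⟨g, hgR, x', r', hx', hr', hco⟩ : ∃ g : ℤ, g ≠ 0 ∧ ∃ x' r' : ℤ, X = g*x' ∧ R = g*r' ∧ Int.gcd x' r' = 1 := by
    have hp : 0 < Int.gcd X R := Int.gcd_pos_of_ne_zero_left _ hX0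
    obtain ⟨a, b, hab, h1, h2⟩ := Int.exists_gcd_one hp
    exact ⟨Int.gcd X R, by exact_mod_cast hp.ne', a, b, by rw [mul_comm]; exact h1, by rw [mul_comm]; exact h2, hab⟩
  have hgY : g ∣ Y := by
    rw [← Int.pow_dvd_pow_iff (n := 3) (by norm_num), ← hE, hx', hr']
    exact ⟨9*x'*(x'^2+20*r'^2), by ring⟩
  obtain ⟨y', hy'⟩ := hgY
  have hE' : 9*x'*(x'^2+20*r'^2) = y'^3 := by
    have h3 : g^3 ≠ 0 := pow_ne_zero _ hgR
    apply mul_left_cancel₀ h3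
    rw [hx', hr', hy'] at hE
    linarith
  have hx0' : x' ≠ 0 := by rintro rfl; simp at hx'; exact hX0 hx'
  have hy0' : y' ≠ 0 := by rintro rfl; simp at hy'; exact hY0 hy'
  have hr0' : r' ≠ 0 := by rintro rfl; simp at hr'; exact hR0 hr'
  have hgodd : Odd g := by rw [hr'] at hRodd; exact (Int.odd_mul.1 hRodd).1
  have hd : (2:ℤ)^(n+1+2) ∣ x' := by
    have hc : IsCoprime ((2:ℤ)^(n+1+2)) g := by
      apply IsCoprime.pow_left
      obtain ⟨k, hk⟩ := hgodd
      exact ⟨-k, 1, by rw [hk]; ring⟩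
    apply hc.dvd_of_dvd_mul_left
    rw [← hx', hX, hu]
    exact ⟨100*r^3*w, by ring⟩
  rcases lt_or_gt_of_ne hr0' with hneg | hpos
  · exact ⟨-x', -r', -y', by linarith, by simpa using hco, by simp [hx0', hy0'], by simpa using hd,
      by linear_combination -hE'⟩
  · exact ⟨x', r', y', hpos, hco, mul_ne_zero hx0' hy0', hd, hE'⟩

lemma exists_aux (n : ℕ) : ∃ x r y : ℤ, 0 < r ∧ Int.gcd x r = 1 ∧ x * y ≠ 0 ∧ (2:ℤ)^(n+2) ∣ x ∧
      9*x*(x^2+20*r^2) = y^3 := by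
  induction n with
  | zero => exact ⟨25600, 4933, 64080, by norm_num, by norm_num, by norm_num, by norm_num, by norm_num⟩
  | succ n ih =>
    obtain ⟨x, r, y, h1, h2, h3, h4, h5⟩ := ih
    exact step_aux n x r y h1 h2 h3 h4 h5

theorem infinitely_many_solutions_exponent_three :
    {t : ℤ × ℤ × ℤ | 0 < t.2.1 ∧ Int.gcd t.1 t.2.1 = 1 ∧ t.1 * t.2.2 ≠ 0 ∧
      (t.1 - 4*t.2.1)^3 + (t.1 - 3*t.2.1)^3 + (t.1 - 2*t.2.1)^3 + (t.1 - t.2.1)^3 + t.1^3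
        + (t.1 + t.2.1)^3 + (t.1 + 2*t.2.1)^3 + (t.1 + 3*t.2.1)^3 + (t.1 + 4*t.2.1)^3
        = t.2.2 ^ 3}.Infinite := by
  intro hfin
  obtain ⟨B, hB⟩ := (hfin.image (fun t => t.1.natAbs)).bddAbove
  obtain ⟨x, r, y, h1, h2, h3, h4, h5⟩ := exists_aux B
  have hle : x.natAbs ≤ B := by
    apply hB
    refine ⟨(x, r, y), ⟨h1, h2, h3, ?_⟩, rfl⟩
    dsimp only
    rw [← h5]; ring
  have hx0 : x ≠ 0 := left_ne_zero_of_mul h3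
  have h6 := Nat.le_of_dvd (Int.natAbs_pos.2 hx0) (Int.natAbs_dvd_natAbs.2 h4)
  rw [Int.natAbs_pow] at h6
  have h7 : B + 2 < 2^(B+2) := Nat.lt_two_pow_self
  change 2^(B+2) ≤ _ at h6
  omega
end

section
/- Let x, r, y be integers with gcd(x, r) = 1 and 0 < r < 10^6. If (x−4r)³ + (x−3r)³ + (x−2r)³ + (x−r)³ + x³ + (x+r)³ + (x+2r)³ + (x+3r)³ + (x+4r)³ = y⁵ (equivalently, 9x(x² + 20r²) = y⁵), then xy = 0. -/
lemma form_rep : ∀ n : ℕ, ∀ A B C : ℤ, 0 < A → A ≤ n → A * C - B ^ 2 = 5 →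
    ∃ x y : ℤ, A * x ^ 2 + 2 * B * x * y + C * y ^ 2 = 1 ∨
      A * x ^ 2 + 2 * B * x * y + C * y ^ 2 = 2 := by
  intro n
  induction n with
  | zero => intro A B C h1 h2; push_cast at h2; omega
  | succ n ih =>
    intro A B C hA hn h
    obtain ⟨k, B', hB, h1, h2⟩ : ∃ k B' : ℤ, B = B' + k * A ∧ -A ≤ 2 * B' ∧ 2 * B' ≤ A := by
      refine ⟨(2 * B + A) / (2 * A), B - (2 * B + A) / (2 * A) * A, by ring, ?_, ?_⟩
      · have := Int.emod_add_mul_ediv (2 * B + A) (2 * A)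
        have := Int.emod_nonneg (2 * B + A) (b := 2 * A) (by omega)
        nlinarith
      · have := Int.emod_add_mul_ediv (2 * B + A) (2 * A)
        have := Int.emod_lt_of_pos (2 * B + A) (b := 2 * A) (by omega)
        nlinarith
    obtain ⟨C', hC⟩ : ∃ C' : ℤ, C' = C - 2 * k * B + k ^ 2 * A := ⟨_, rfl⟩
    have h' : A * C' - B' ^ 2 = 5 := by
      subst hC; subst hB; linear_combination h
    have hB2 : 4 * B' ^ 2 ≤ A ^ 2 := by nlinarith
    by_cases hlt : C' < A
    · have hC0 : 0 < C' := by
        by_contra hc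
        push Not at hc
        nlinarith [sq_nonneg B']
      obtain ⟨x, y, hxy⟩ := ih C' B' A hC0 (by push_cast at hn; omega) (by linarith)
      refine ⟨y - k * x, x, ?_⟩
      have e : A * (y - k * x) ^ 2 + 2 * B * (y - k * x) * x + C * x ^ 2
        = C' * x ^ 2 + 2 * B' * x * y + A * y ^ 2 := by subst hC; subst hB; ring
      rw [e]; exact hxy
    · have : A ≤ 2 := by
        by_contra hc
        push Not at hc hlt
        nlinarith
      refine ⟨1, 0, ?_⟩
      simp; omega

lemma class_lemma (R S v κ : ℤ) (hv : 0 < v) (hc : IsCoprime R S)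
    (h : R ^ 2 + 5 * S ^ 2 = κ * v ^ 5) :
    ∃ a b c d k : ℤ, (k = 1 ∨ k = 2) ∧ a ^ 2 + 5 * b ^ 2 = k * v ∧
      c ^ 2 + 5 * d ^ 2 = κ * k ^ 5 ∧
      k ^ 5 * R = c * (a * (a^4 - 50*a^2*b^2 + 125*b^4)) - 5 * d * (5*b*(a^4 - 10*a^2*b^2+5*b^4)) ∧
      k ^ 5 * S = c * (5*b*(a^4 - 10*a^2*b^2+5*b^4)) + d * (a * (a^4 - 50*a^2*b^2 + 125*b^4)) := by
  have hSv : IsCoprime S (v ^ 5) := by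
    by_contra hn
    have hn' : ¬ IsCoprime S v := fun h => hn h.pow_right
    rw [Int.isCoprime_iff_gcd_eq_one] at hn'
    obtain ⟨p, hp, hpd⟩ := Nat.exists_prime_and_dvd hn'
    have hpS : (p : ℤ) ∣ S := (Int.natCast_dvd_natCast.2 hpd).trans (Int.gcd_dvd_left ..)
    have hpv : (p : ℤ) ∣ v := (Int.natCast_dvd_natCast.2 hpd).trans (Int.gcd_dvd_right ..)
    have hpp : Prime (p : ℤ) := Nat.prime_iff_prime_int.1 hp
    have : (p : ℤ) ∣ R ^ 2 := by
      have e : R ^ 2 = κ * v ^ 5 - 5 * S ^ 2 := by linarith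
      rw [e]
      exact dvd_sub (Dvd.dvd.mul_left (dvd_pow hpv (by norm_num)) _)
        (Dvd.dvd.mul_left (dvd_pow hpS (by norm_num)) _)
    have hpR := hpp.dvd_of_dvd_pow this
    exact hpp.not_isUnit (hc.isUnit_of_dvd' hpR hpS)
  obtain ⟨S', k', hS'⟩ := hSv
  -- S' * S + k' * v^5 = 1
  obtain ⟨t, ht⟩ : ∃ t : ℤ, t = R * S' := ⟨_, rfl⟩
  obtain ⟨c', hc'⟩ : ∃ c' : ℤ, R = t * S + v ^ 5 * c' :=
    ⟨R * k', by subst ht; linear_combination (-R) * hS'⟩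
  obtain ⟨e, he⟩ : ∃ e : ℤ, t ^ 2 + 5 = v ^ 5 * e := by
    refine ⟨κ * S' ^ 2 + 5 * k' * (2 - v ^ 5 * k'), ?_⟩
    have h1 : S' * S = 1 - k' * v ^ 5 := by linarith
    have h2 : (S' * S) ^ 2 = (1 - k' * v ^ 5) ^ 2 := by rw [h1]
    subst ht
    linear_combination S' ^ 2 * h - 5 * h2
  obtain ⟨x, y, hxy⟩ := form_rep v.toNat v t (v ^ 4 * e) hv (by omega)
    (by linear_combination -he)
  obtain ⟨k, hk, hk2⟩ : ∃ k : ℤ, (k = 1 ∨ k = 2) ∧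
      v * x ^ 2 + 2 * t * x * y + v ^ 4 * e * y ^ 2 = k := by
    rcases hxy with h | h
    · exact ⟨1, Or.inl rfl, h⟩
    · exact ⟨2, Or.inr rfl, h⟩
  obtain ⟨a, ha⟩ : ∃ a : ℤ, a = v * x + t * y := ⟨_, rfl⟩
  have hab : a ^ 2 + 5 * y ^ 2 = k * v := by
    subst ha; linear_combination v * hk2 + y ^ 2 * he
  -- conj z ^ 5
  obtain ⟨P, hP⟩ : ∃ P : ℤ, P = a * (a^4 - 50*a^2*y^2 + 125*y^4) := ⟨_, rfl⟩
  obtain ⟨Q, hQ⟩ : ∃ Q : ℤ, Q = 5*y*(a^4 - 10*a^2*y^2+5*y^4) := ⟨_, rfl⟩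
  have hPQ : P ^ 2 + 5 * Q ^ 2 = (k * v) ^ 5 := by
    rw [← hab, hP, hQ]; ring
  -- w * conj(z)^5 = (R P + 5 S Q) + (S P - R Q) ω
  let w : ℤ√(-5) := ⟨R, S⟩
  let z : ℤ√(-5) := ⟨a, -y⟩
  have hz5 : z ^ 5 = ⟨P, -Q⟩ := by
    ext <;> simp [z, pow_succ, hP, hQ] <;> ring
  have hdiv : ((v ^ 5 : ℤ) : ℤ√(-5)) ∣ w * z ^ 5 := by
    let o : ℤ√(-5) := ⟨t, 1⟩
    let o' : ℤ√(-5) := ⟨t, -1⟩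
    have hw : w = (S : ℤ√(-5)) * o + ((v ^ 5 : ℤ) : ℤ√(-5)) * (c' : ℤ√(-5)) := by
      ext
      · simp only [w, o, Zsqrtd.re_add, Zsqrtd.re_mul, Zsqrtd.re_intCast, Zsqrtd.im_intCast]
        linear_combination hc'
      · simp only [w, o, Zsqrtd.im_add, Zsqrtd.im_mul, Zsqrtd.re_intCast, Zsqrtd.im_intCast]
        ring
    have hz : z = (y : ℤ√(-5)) * o' + (v : ℤ√(-5)) * (x : ℤ√(-5)) := by
      ext
      · simp [z, o']; linear_combination ha
      · simp [z, o']
    have hoo : o * o' = ((v ^ 5 : ℤ) : ℤ√(-5)) * (e : ℤ√(-5)) := by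
      ext
      · simp only [o, o', Zsqrtd.re_mul, Zsqrtd.re_intCast, Zsqrtd.im_intCast]
        linear_combination he
      · simp only [o, o', Zsqrtd.im_mul, Zsqrtd.re_intCast, Zsqrtd.im_intCast]; ring
    have key : ∃ K : ℤ√(-5), z ^ 5 = o' * K + ((v ^ 5 : ℤ) : ℤ√(-5)) * (x : ℤ√(-5)) ^ 5 := by
      have := sub_dvd_pow_sub_pow z ((v : ℤ√(-5)) * (x : ℤ√(-5))) 5
      obtain ⟨K, hK⟩ := this
      refine ⟨y * K, ?_⟩
      have h2 : z - (v : ℤ√(-5)) * x = y * o' := by rw [hz]; ring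
      rw [h2] at hK
      push_cast
      linear_combination hK
    obtain ⟨K, hK⟩ := key
    refine ⟨(S : ℤ√(-5)) * e * K + (c' : ℤ√(-5)) * (o' * K) + w * (x : ℤ√(-5)) ^ 5, ?_⟩
    calc w * z ^ 5 = w * (o' * K) + w * (((v ^ 5 : ℤ) : ℤ√(-5)) * (x : ℤ√(-5)) ^ 5) := by rw [hK]; ring
      _ = (S : ℤ√(-5)) * (o * o') * K + ((v ^ 5 : ℤ) : ℤ√(-5)) * (c' : ℤ√(-5)) * (o' * K)
          + w * (((v ^ 5 : ℤ) : ℤ√(-5)) * (x : ℤ√(-5)) ^ 5) := by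
            conv_lhs => rw [show w * (o' * K) = ((S : ℤ√(-5)) * o + ((v ^ 5 : ℤ) : ℤ√(-5)) * (c' : ℤ√(-5))) * (o' * K) by rw [← hw]]
            ring
      _ = _ := by rw [hoo]; ring
  obtain ⟨q, hq⟩ := hdiv
  rw [hz5] at hq
  have h1 : R * P + 5 * S * Q = v ^ 5 * q.re := by
    have := congrArg Zsqrtd.re hq
    simp only [w, Zsqrtd.re_mul, Zsqrtd.re_intCast, Zsqrtd.im_intCast] at this
    linear_combination this
  have h2 : S * P - R * Q = v ^ 5 * q.im := by
    have := congrArg Zsqrtd.im hq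
    simp only [w, Zsqrtd.im_mul, Zsqrtd.re_intCast, Zsqrtd.im_intCast] at this
    linear_combination this
  have hv5 : v ^ 5 ≠ 0 := by positivity
  refine ⟨a, y, q.re, q.im, k, hk, hab, ?_, ?_, ?_⟩
  · apply mul_left_cancel₀ (mul_ne_zero hv5 hv5)
    linear_combination (-(v ^ 5 * q.re) - (R * P + 5 * S * Q)) * h1 -
      5 * (v ^ 5 * q.im + (S * P - R * Q)) * h2 + (P ^ 2 + 5 * Q ^ 2) * h + κ * v ^ 5 * hPQ
  · rw [← hP, ← hQ]
    apply mul_left_cancel₀ hv5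
    linear_combination P * h1 - 5 * Q * h2 - R * hPQ
  · rw [← hP, ← hQ]
    apply mul_left_cancel₀ hv5
    linear_combination Q * h1 + P * h2 - S * hPQ

set_option maxRecDepth 100000 in
lemma mod19_aux : ∀ a b u : ZMod 19,
    32 * u ^ 5 = 7 * (a * (a^4 - 50*a^2*b^2 + 125*b^4)) - 5 * (5*b*(a^4 - 10*a^2*b^2+5*b^4)) →
    (u = 0 ∧ 7 * (5*b*(a^4 - 10*a^2*b^2+5*b^4)) + a * (a^4 - 50*a^2*b^2 + 125*b^4) = 0) ∨
    (u ≠ 0 ∧ (a ^ 2 + 5 * b ^ 2 = 2 * (3 * u ^ 2) ∨ a ^ 2 + 5 * b ^ 2 = 2 * (6 * u ^ 2) ∨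
      a ^ 2 + 5 * b ^ 2 = 2 * (9 * u ^ 2) ∨ a ^ 2 + 5 * b ^ 2 = 2 * (13 * u ^ 2))) := by
  decide +kernel

/-- the shape of the class lemma for `κ = 27`. -/
lemma class27 (R S v : ℤ) (hv : 0 < v) (hc : IsCoprime R S)
    (h : R ^ 2 + 5 * S ^ 2 = 27 * v ^ 5) :
    ∃ a b ε : ℤ, (ε = 1 ∨ ε = -1) ∧ a ^ 2 + 5 * b ^ 2 = 2 * v ∧
      8 * (ε * R) = 7 * (a * (a^4 - 50*a^2*b^2 + 125*b^4)) - 5 * (5*b*(a^4 - 10*a^2*b^2+5*b^4)) ∧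
      (8 * S = 7 * (5*b*(a^4 - 10*a^2*b^2+5*b^4)) + a * (a^4 - 50*a^2*b^2 + 125*b^4) ∨
       8 * S = -(7 * (5*b*(a^4 - 10*a^2*b^2+5*b^4)) + a * (a^4 - 50*a^2*b^2 + 125*b^4))) := by
  obtain ⟨a, b, c, d, k, hk, hab, hcd, h1, h2⟩ := class_lemma R S v 27 hv hc h
  have key : ∀ m : ℤ, m ^ 2 ≤ 864 → -29 ≤ m ∧ m ≤ 29 := by intro m hm; constructor <;> nlinarith
  rcases hk with rfl | rfl
  · exfalso
    have hd : d ^ 2 ≤ 5 := by nlinarith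
    have hd1 : -2 ≤ d := by nlinarith
    have hd2 : d ≤ 2 := by nlinarith
    have hc1 : -6 ≤ c := by nlinarith
    have hc2 : c ≤ 6 := by nlinarith
    interval_cases d <;> interval_cases c <;> omega
  · have hd : d ^ 2 ≤ 172 := by nlinarith
    have hd1 : -13 ≤ d := by nlinarith
    have hd2 : d ≤ 13 := by nlinarith
    have hcc : c ^ 2 ≤ 864 := by nlinarith
    obtain ⟨hc1, hc2⟩ := key c hcc
    have hcases : ((c = 28 ∨ c = -28) ∧ (d = 4 ∨ d = -4)) ∨ ((c = 12 ∨ c = -12) ∧ (d = 12 ∨ d = -12)) := by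
      clear h1 h2 hab h
      interval_cases d <;> first | (exfalso; interval_cases c <;> omega) | (interval_cases c <;> omega)
    generalize hA : a * (a^4 - 50*a^2*b^2 + 125*b^4) = A at *
    generalize hB : 5*b*(a^4 - 10*a^2*b^2+5*b^4) = B at *
    rcases hcases with ⟨hc', hd'⟩ | ⟨hc', hd'⟩
    · have hA' : a * (a^4 - 50*a^2*(-b)^2 + 125*(-b)^4) = A := by rw [← hA]; ring
      have hB' : 5*(-b)*(a^4 - 10*a^2*(-b)^2+5*(-b)^4) = -B := by rw [← hB]; ring
      rcases hc' with rfl | rfl <;> rcases hd' with rfl | rfl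
      · exact ⟨a, b, 1, by simp, hab, by rw [hA, hB]; omega, by rw [hA, hB]; omega⟩
      · exact ⟨a, -b, 1, by simp, by rw [← hab]; ring, by rw [hA', hB']; omega, by rw [hA', hB']; omega⟩
      · exact ⟨a, -b, -1, by simp, by rw [← hab]; ring, by rw [hA', hB']; omega, by rw [hA', hB']; omega⟩
      · exact ⟨a, b, -1, by simp, hab, by rw [hA, hB]; omega, by rw [hA, hB]; omega⟩
    · exfalso
      have h3R : (3 : ℤ) ∣ R := by rcases hc' with rfl | rfl <;> rcases hd' with rfl | rfl <;> omega
      have h3S : (3 : ℤ) ∣ S := by rcases hc' with rfl | rfl <;> rcases hd' with rfl | rfl <;> omega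
      exact Int.prime_three.not_isUnit (hc.isUnit_of_dvd' h3R h3S)

/-- the shape of the class lemma for `κ = 1`. -/
lemma class1 (R S v : ℤ) (hv : 0 < v) (hc : IsCoprime R S)
    (h : R ^ 2 + 5 * S ^ 2 = v ^ 5) :
    ∃ a b ε : ℤ, (ε = 1 ∨ ε = -1) ∧ a ^ 2 + 5 * b ^ 2 = v ∧
      R = ε * (a * (a^4 - 50*a^2*b^2 + 125*b^4)) ∧
      S = ε * (5*b*(a^4 - 10*a^2*b^2+5*b^4)) := by
  obtain ⟨a, b, c, d, k, hk, hab, hcd, h1, h2⟩ := class_lemma R S v 1 hv hc (by linarith)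
  generalize hA : a * (a^4 - 50*a^2*b^2 + 125*b^4) = A at *
  generalize hB : 5*b*(a^4 - 10*a^2*b^2+5*b^4) = B at *
  rcases hk with rfl | rfl
  · have hd1 : -1 < d := by nlinarith
    have hd2 : d < 1 := by nlinarith
    obtain rfl : d = 0 := by omega
    have : c = 1 ∨ c = -1 := by
      have h0 : (c - 1) * (c + 1) = 0 := by linarith
      rcases mul_eq_zero.1 h0 with h | h <;> omega
    refine ⟨a, b, c, this, by linarith, ?_, ?_⟩
    · rw [hA]; linarith
    · rw [hB]; linarith
  · exfalso
    have hd1 : -3 < d := by nlinarith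
    have hd2 : d < 3 := by nlinarith
    have hc1 : -6 < c := by nlinarith
    have hc2 : c < 6 := by nlinarith
    clear h1 h2 hab h
    interval_cases d <;> interval_cases c <;> omega
open NumberTheorySymbols in
lemma jac_ne {a : ℤ} {b : ℕ} (h : IsCoprime a (b : ℤ)) : J(a | b) = 1 ∨ J(a | b) = -1 :=
  jacobiSym.eq_one_or_neg_one (Int.isCoprime_iff_gcd_eq_one.1 h)

open NumberTheorySymbols in
lemma jac_sq {a : ℤ} {b : ℕ} (h : IsCoprime a (b : ℤ)) : J(a ^ 2 | b) = 1 :=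
  jacobiSym.sq_one' (Int.isCoprime_iff_gcd_eq_one.1 h)

open NumberTheorySymbols in
lemma jac_congr {a b m : ℤ} {n : ℕ} (h : a = b + n * m) : J(a | n) = J(b | n) := by
  apply jacobiSym.mod_left'
  rw [h]; simp

open NumberTheorySymbols in
/-- common: from `15 r² = G H + c U⁴ N`. -/
lemma jac_rel {N G : ℕ} {U r H c : ℤ} (hc : IsCoprime c (G : ℤ)) (hU : IsCoprime U (G : ℤ))
    (hN : IsCoprime (N : ℤ) (G : ℤ)) (e2 : 15 * r ^ 2 = c * U ^ 4 * N + G * H) :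
    J(15 | G) = J(c | G) * J(N | G) := by
  have h1 : J(15 * r ^ 2 | G) = J(c | G) * J(N | G) := by
    rw [jac_congr e2, jacobiSym.mul_left, jacobiSym.mul_left,
      show U ^ 4 = (U ^ 2) ^ 2 by ring, jac_sq (hU.pow_left)]
    ring
  have h2 : J(r | G) ≠ 0 := by
    intro h0
    rw [jacobiSym.mul_left, jacobiSym.pow_left, h0] at h1
    rcases jac_ne hc with h | h <;> rcases jac_ne hN with h' | h' <;> rw [h, h'] at h1 <;> simp at h1
  rw [jacobiSym.mul_left, jacobiSym.pow_left] at h1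
  rcases jacobiSym.trichotomy r G with h | h | h
  · exact absurd h h2
  all_goals (rw [h] at h1; simpa using h1)

open NumberTheorySymbols in
lemma JA {N G j : ℕ} {K U r H M : ℤ} (hG : Odd G) (h3 : IsCoprime (3 : ℤ) (G : ℤ))
    (h19 : IsCoprime (19 : ℤ) (G : ℤ))
    (hU : IsCoprime U (G : ℤ)) (hNG : IsCoprime (N : ℤ) (G : ℤ)) (hK : IsCoprime K (N : ℤ))
    (hN3 : N % 3 = 2)
    (e1 : 3 * (2 ^ j * (G : ℤ)) = K ^ 2 + N * M)
    (e2 : 15 * r ^ 2 = 57 * U ^ 4 * N + G * H)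
    (h5 : J(2 ^ j * G | 5) = -1)
    (hcase : N % 8 = 7 ∨ (N % 8 = 5 ∧ j = 0 ∧ G % 4 = 3)) :
    J(2 ^ j * G | 19) = -1 := by
  have hNo : Odd N := by rw [Nat.odd_iff]; omega
  have r1 := jac_rel (c := 57) (by
    rw [show (57 : ℤ) = 3 * 19 by norm_num]; exact h3.mul_left h19) hU hNG e2
  rw [show (57 : ℤ) = 3 * 19 by norm_num, show (15 : ℤ) = 3 * 5 by norm_num,
    jacobiSym.mul_left, jacobiSym.mul_left] at r1
  have r2 : J(5 | G) = J(19 | G) * J(N | G) := by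
    rcases jac_ne h3 with h | h <;> rw [h] at r1 <;> linarith
  have r3 : J(3 | N) * (J(2 | N) ^ j * J(G | N)) = 1 := by
    rw [← jacobiSym.pow_left, ← jacobiSym.mul_left, ← jacobiSym.mul_left, jac_congr e1, jac_sq hK]
  have q5 : J(5 | G) = J(G | 5) := by
    exact_mod_cast jacobiSym.quadratic_reciprocity_one_mod_four (a := 5) (b := G) (by norm_num) hG
  have q3' : J(N | 3) = -1 := by
    rw [jacobiSym.mod_left, show ((N : ℤ) % (3 : ℕ)) = 2 by omega]; norm_num
  have t5 : J(2 | 5) = -1 := by norm_num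
  have t19 : J(2 | 19) = -1 := by norm_num
  rw [jacobiSym.mul_left, jacobiSym.pow_left, t5] at h5
  rw [jacobiSym.mul_left, jacobiSym.pow_left, t19]
  suffices h : J(G | 5) = J(G | 19) by rw [← h]; exact h5
  rw [← q5, r2]
  rcases hcase with h | ⟨h, rfl, hG4⟩
  · have q3 : J(3 | N) = 1 := by
      have := jacobiSym.quadratic_reciprocity_three_mod_four (a := 3) (b := N) (by norm_num) (by omega)
      push_cast at this
      rw [this, q3']; norm_num
    have q2 : J(2 | N) = 1 := by
      rw [jacobiSym.at_two hNo, ZMod.χ₈_nat_eq_if_mod_eight]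
      simp [h]; omega
    rw [q3, q2] at r3
    simp at r3
    rcases Nat.odd_mod_four_iff.1 (Nat.odd_iff.1 hG) with hg | hg
    · have a1 := jacobiSym.quadratic_reciprocity_one_mod_four (a := G) (b := N) hg hNo
      have a2 := jacobiSym.quadratic_reciprocity_one_mod_four (a := G) (b := 19) hg (by decide)
      push_cast at a2
      rw [← a1, r3, ← a2]; ring
    · have a1 := jacobiSym.quadratic_reciprocity_three_mod_four (a := G) (b := N) hg (by omega)
      have a2 := jacobiSym.quadratic_reciprocity_three_mod_four (a := G) (b := 19) hg (by norm_num)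
      push_cast at a2
      rw [a2]
      rw [r3] at a1
      rw [show J(N | G) = -1 by linarith]; ring
  · have q3 : J(3 | N) = -1 := by
      have := jacobiSym.quadratic_reciprocity_one_mod_four' (a := 3) (b := N) (by decide) (by omega)
      push_cast at this
      rw [this, q3']
    rw [q3] at r3
    simp at r3
    have a1 := jacobiSym.quadratic_reciprocity_one_mod_four (a := N) (b := G) (by omega) hG
    have a2 := jacobiSym.quadratic_reciprocity_three_mod_four (a := G) (b := 19) hG4 (by norm_num)
    push_cast at a2
    rw [a1, a2, show J(G | N) = -1 by linarith]; ring

open NumberTheorySymbols in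
lemma JB {N G j : ℕ} {U r H M : ℤ} (hG : Odd G) (h3 : IsCoprime (3 : ℤ) (G : ℤ))
    (hU : IsCoprime U (G : ℤ)) (hNG : IsCoprime (N : ℤ) (G : ℤ)) (hUN : IsCoprime U (N : ℤ))
    (h5N : IsCoprime (5 : ℤ) (N : ℤ)) 
    (hN3 : N % 3 = 1)
    (e1 : 75 * (2 ^ j * (G : ℤ)) = 304 * U ^ 2 + N * M)
    (e2 : 15 * r ^ 2 = (-3) * U ^ 4 * N + G * H)
    (h5 : J(2 ^ j * G | 5) = -1)
    (hcase : (N % 8 = 7 ∧ j = 1 ∧ G % 4 = 1) ∨ (N % 8 = 1 ∧ j = 0 ∧ G % 4 = 3)) :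
    J(N | 19) = 1 := by
  have hNo : Odd N := by rw [Nat.odd_iff]; omega
  have r1 := jac_rel (c := -3) h3.neg_left hU hNG e2
  rw [show (-3 : ℤ) = 3 * -1 by norm_num, show (15 : ℤ) = 3 * 5 by norm_num,
    jacobiSym.mul_left, jacobiSym.mul_left] at r1
  have r2 : J(5 | G) = J(-1 | G) * J(N | G) := by
    rcases jac_ne h3 with h | h <;> rw [h] at r1 <;> linarith
  have h4N : IsCoprime (4 : ℤ) (N : ℤ) := by
    have : IsCoprime (2 : ℤ) (N : ℤ) := by
      rw [Int.isCoprime_iff_gcd_eq_one]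
      exact (Nat.coprime_two_left.2 hNo)
    rw [show (4 : ℤ) = 2 * 2 by norm_num]; exact this.mul_left this
  have r3 : J(3 | N) * (J(2 | N) ^ j * J(G | N)) = J(19 | N) := by
    have := jac_congr e1
    rw [show (75 : ℤ) = 3 * 5 ^ 2 by norm_num, show (304 : ℤ) * U ^ 2 = 19 * (4 * U) ^ 2 by ring,
      jacobiSym.mul_left, jacobiSym.mul_left, jacobiSym.mul_left, jacobiSym.mul_left,
      jac_sq h5N, jac_sq (h4N.mul_left hUN), jacobiSym.pow_left] at this
    linarith
  have q5 : J(5 | G) = J(G | 5) := by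
    exact_mod_cast jacobiSym.quadratic_reciprocity_one_mod_four (a := 5) (b := G) (by norm_num) hG
  have q3' : J(N | 3) = 1 := by
    rw [jacobiSym.mod_left, show ((N : ℤ) % (3 : ℕ)) = 1 by omega]; norm_num
  have t5 : J(2 | 5) = -1 := by norm_num
  rw [jacobiSym.mul_left, jacobiSym.pow_left, t5] at h5
  rw [q5, jacobiSym.at_neg_one hG] at r2
  rcases hcase with ⟨h, rfl, hG4⟩ | ⟨h, rfl, hG4⟩
  · have q3 : J(3 | N) = -1 := by
      have := jacobiSym.quadratic_reciprocity_three_mod_four (a := 3) (b := N) (by norm_num) (by omega)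
      push_cast at this
      rw [this, q3']
    have q2 : J(2 | N) = 1 := by
      rw [jacobiSym.at_two hNo, ZMod.χ₈_nat_eq_if_mod_eight]
      simp [h]; omega
    have a1 := jacobiSym.quadratic_reciprocity_one_mod_four (a := G) (b := N) hG4 hNo
    have a2 := jacobiSym.quadratic_reciprocity_three_mod_four (a := N) (b := 19) (by omega) (by norm_num)
    push_cast at a2
    rw [ZMod.χ₄_nat_one_mod_four hG4] at r2
    rw [q3, q2, a1] at r3
    rw [a2]
    linarith
  · have q3 : J(3 | N) = 1 := by
      have := jacobiSym.quadratic_reciprocity_one_mod_four' (a := 3) (b := N) (by decide) (by omega)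
      push_cast at this
      rw [this, q3']
    have a1 := jacobiSym.quadratic_reciprocity_one_mod_four (a := N) (b := G) (by omega) hG
    have a2 := jacobiSym.quadratic_reciprocity_one_mod_four (a := N) (b := 19) (by omega) (by decide)
    push_cast at a2
    rw [ZMod.χ₄_nat_three_mod_four hG4] at r2
    rw [q3, ← a1] at r3
    rw [a2]
    linarith

lemma cop_of_prime {p : ℕ} (hp : p.Prime) {a : ℤ} (h : ¬ (p : ℤ) ∣ a) : IsCoprime (p : ℤ) a :=
  (Nat.prime_iff_prime_int.1 hp).coprime_iff_not_dvd.2 h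

lemma modq {q N : ℤ} (hq : q = 1 ∨ q = 7) : (q ^ 2 * N) % 24 = N % 24 := by
  rcases hq with rfl | rfl <;> omega

open NumberTheorySymbols in
set_option maxHeartbeats 1600000 in
lemma testA {u v U r K N G q : ℤ} (hq : q = 1 ∨ q = 7) (hN0 : 0 < N) (hG0 : 0 < G)
    (hU3 : IsCoprime U 3) (hUv : IsCoprime U v) (hK : IsCoprime K N)
    (hu : U = u ^ 2) (h5u : ¬ (5 : ℤ) ∣ u)
    (hv8 : v % 8 = 7) (hU8 : U % 8 = 1 ∨ U % 4 = 0) (hU3' : U % 3 = 1)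
    (hv5 : (v - 3 * U) % 5 = 0)
    (hG19 : ¬ (19 : ℤ) ∣ G)
    (hqN : q ^ 2 * N = 3 * v + 26 * U)
    (hqG : q ^ 2 * G = 3 * v ^ 2 - 3 * v * U + 10 * U ^ 2)
    (e1 : 3 * G = K ^ 2 + N * (3 * v - 29 * U))
    (e2 : 15 * r ^ 2 = 57 * U ^ 4 * N + G * (27*v^3+27*v^2*U-63*v*U^2-153*U^3)) :
    ¬ IsSquare (G : ZMod 19) := by
  have hU5 : U ^ 2 % 5 = 1 := by
    have : u % 5 = 1 ∨ u % 5 = 2 ∨ u % 5 = 3 ∨ u % 5 = 4 := by omega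
    rcases this with h | h | h | h <;> simp [hu, pow_two, Int.mul_emod, h]
  have hG5 : (q ^ 2 * G) % 5 = 3 := by
    rw [hqG]
    obtain ⟨k, hk⟩ := Int.dvd_of_emod_eq_zero hv5
    have : v = 3 * U + 5 * k := by linarith
    have e : 3 * v ^ 2 - 3 * v * U + 10 * U ^ 2 = 5 * (U ^ 2 * 5 + 18 * U * k + 15 * k ^ 2 - 3 * k * U) + 3 * U ^ 2 := by
      rw [this]; ring
    omega
  have hG3 : (q ^ 2 * G) % 3 = 1 := by
    rw [hqG]
    have : U ^ 2 % 3 = 1 := by simp [pow_two, Int.mul_emod, hU3']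
    have e : 3 * v ^ 2 - 3 * v * U + 10 * U ^ 2 = 3 * (v ^ 2 - v * U + 3 * U ^ 2) + U ^ 2 := by ring
    omega
  have hUG' : IsCoprime U (q ^ 2 * G) := by
    rw [hqG, show 3 * v ^ 2 - 3 * v * U + 10 * U ^ 2 = 3 * v ^ 2 + U * (-3 * v + 10 * U) by ring]
    exact (hU3.mul_right hUv.pow_right).add_mul_left_right _
  have hUG : IsCoprime U G := hUG'.of_mul_right_right
  have hG3' : IsCoprime (3 : ℤ) G := by
    apply cop_of_prime Nat.prime_three
    rcases hq with rfl | rfl <;> push_cast <;> omega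
  have hG19' : IsCoprime (19 : ℤ) G := cop_of_prime (p := 19) (by norm_num) hG19
  have hNG : IsCoprime N G := by
    have : IsCoprime N (3 * G) := by
      rw [e1]; exact (hK.symm.pow_right).add_mul_left_right _
    exact this.of_mul_right_right
  have j5 : J(G | 5) = -1 := by
    rcases hq with rfl | rfl
    · rw [jacobiSym.mod_left, show G % (5 : ℕ) = 3 by push_cast; omega]; norm_num
    · rw [jacobiSym.mod_left, show G % (5 : ℕ) = 2 by push_cast; omega]; norm_num
  have : Fact (Nat.Prime 19) := ⟨by norm_num⟩
  rw [← ZMod.nonsquare_iff_jacobiSym_eq_neg_one]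
  have hN24 : N % 24 = (3 * v + 26 * U) % 24 := by rw [← hqN, modq hq]
  have hG24 : (q ^ 2 * G) % 24 = G % 24 := modq hq
  obtain ⟨n, rfl⟩ := Int.eq_ofNat_of_zero_le hN0.le
  obtain ⟨g, rfl⟩ := Int.eq_ofNat_of_zero_le hG0.le
  have hn3 : n % 3 = 2 := by
    clear e1 e2 hqG hqN hG24 hG3 hG5 hG19; omega
  rcases hU8 with h8 | h8
  · obtain ⟨j, m, hm, hgm⟩ := Nat.exists_eq_two_pow_mul_odd (n := g) (by rintro rfl; simp at hG0)
    subst hgm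
    have hd : (m : ℤ) ∣ ((2 ^ j * m : ℕ) : ℤ) := ⟨2 ^ j, by push_cast; ring⟩
    have := JA (N := n) (G := m) (j := j) (K := K) (U := U) (r := r) (M := 3 * v - 29 * U)
      (H := 2 ^ j * (27*v^3+27*v^2*U-63*v*U^2-153*U^3)) hm
      (hG3'.of_isCoprime_of_dvd_right hd) (hG19'.of_isCoprime_of_dvd_right hd)
      (hUG.of_isCoprime_of_dvd_right hd) (hNG.of_isCoprime_of_dvd_right hd) hK hn3
      (by push_cast at e1; exact e1) (by push_cast at e2; linear_combination e2)
      (by push_cast at j5; exact j5)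
      (Or.inl (by clear e1 e2 hqG hqN hG24 hG3 hG5 hG19; omega))
    push_cast
    exact this
  · have h4 : (q ^ 2 * (g : ℤ)) % 4 = 3 := by
      rw [hqG]
      have hv4 : v % 4 = 3 := by omega
      simp [pow_two, Int.add_emod, Int.sub_emod, Int.mul_emod, hv4, h8]
    have hg4 : g % 4 = 3 := by
      clear e1 e2 hqG hqN
      generalize q ^ 2 * (g : ℤ) = z at *
      omega
    have := JA (N := n) (G := g) (j := 0) (K := K) (U := U) (r := r) (M := 3 * v - 29 * U)
      (H := (27*v^3+27*v^2*U-63*v*U^2-153*U^3)) (by rw [Nat.odd_iff]; omega)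
      hG3' hG19' hUG hNG hK hn3
      (by rw [pow_zero, one_mul]; exact e1) e2
      (by rw [pow_zero, one_mul]; exact j5)
      (Or.inr ⟨(by clear e1 e2 hqG hqN hG24 hG3 hG5 hG19; omega), rfl, hg4⟩)
    rw [pow_zero, one_mul] at this
    exact this

open NumberTheorySymbols in
lemma testB {u v U r N G : ℤ} (hN0 : 0 < N) (hG0 : 0 < G)
    (hU3 : IsCoprime U 3) (hU5c : IsCoprime U 5) (hUv : IsCoprime U v)
    (hu : U = u ^ 2) (h5u : ¬ (5 : ℤ) ∣ u)
    (hv8 : v % 8 = 7) (hU8 : U % 8 = 1 ∨ U % 4 = 0) (hU3' : U % 3 = 1)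
    (hv5 : (v - 3 * U) % 5 = 0)
    (hN19 : ¬ (19 : ℤ) ∣ N)
    (hqN : N = 15 * v + 22 * U)
    (hqG : G = 3 * v ^ 2 + 3 * v * U + 2 * U ^ 2)
    (e : 16 * U ^ 5 + 5 * r ^ 2 = 27 * v ^ 5) :
    IsSquare (N : ZMod 19) := by
  have e1 : 75 * G = 304 * U ^ 2 + N * (15 * v - 7 * U) := by rw [hqN, hqG]; ring
  have e2 : 15 * r ^ 2 = (-3) * U ^ 4 * N + G * (27*v^3-27*v^2*U+9*v*U^2+9*U^3) := by
    rw [hqN, hqG]; linear_combination 3 * e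
  have hU5 : U ^ 2 % 5 = 1 := by
    have : u % 5 = 1 ∨ u % 5 = 2 ∨ u % 5 = 3 ∨ u % 5 = 4 := by omega
    rcases this with h | h | h | h <;> simp [hu, pow_two, Int.mul_emod, h]
  have hG5 : G % 5 = 3 := by
    rw [hqG]
    obtain ⟨k, hk⟩ := Int.dvd_of_emod_eq_zero hv5
    have : v = 3 * U + 5 * k := by linarith
    have e : 3 * v ^ 2 + 3 * v * U + 2 * U ^ 2 = 5 * (U ^ 2 * 7 + 18 * U * k + 15 * k ^ 2 + 3 * k * U) + 3 * U ^ 2 := by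
      rw [this]; ring
    omega
  have hG3 : G % 3 = 2 := by
    rw [hqG]
    have : U ^ 2 % 3 = 1 := by simp [pow_two, Int.mul_emod, hU3']
    have e : 3 * v ^ 2 + 3 * v * U + 2 * U ^ 2 = 3 * (v ^ 2 + v * U) + 2 * U ^ 2 := by ring
    omega
  have hUG : IsCoprime U G := by
    rw [hqG, show 3 * v ^ 2 + 3 * v * U + 2 * U ^ 2 = 3 * v ^ 2 + U * (3 * v + 2 * U) by ring]
    exact (hU3.mul_right hUv.pow_right).add_mul_left_right _
  have hUN : IsCoprime U N := by
    rw [hqN, show 15 * v + 22 * U = (3 * 5) * v + U * 22 by ring]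
    exact ((hU3.mul_right hU5c).mul_right hUv).add_mul_left_right _
  have hG3' : IsCoprime (3 : ℤ) G := by
    apply cop_of_prime Nat.prime_three
    push_cast; omega
  have hU5' : ¬ (5 : ℤ) ∣ U := by
    rw [hu]; exact fun h => h5u ((Nat.prime_iff_prime_int.1 Nat.prime_five).dvd_of_dvd_pow h)
  have hN5' : IsCoprime (5 : ℤ) N := by
    apply cop_of_prime Nat.prime_five
    push_cast; omega
  have hN2 : IsCoprime (2 : ℤ) N := by
    apply cop_of_prime Nat.prime_two
    push_cast; omega
  have hN19' : IsCoprime (19 : ℤ) N := cop_of_prime (p := 19) (by norm_num) hN19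
  have hNG : IsCoprime N G := by
    have : IsCoprime N (75 * G) := by
      rw [e1, show (304 : ℤ) * U ^ 2 = 2 ^ 4 * 19 * U ^ 2 by ring]
      exact (((hN2.symm.pow_right).mul_right hN19'.symm).mul_right hUN.symm.pow_right).add_mul_left_right _
    exact this.of_mul_right_right
  have j5 : J(G | 5) = -1 := by
    rw [jacobiSym.mod_left, show G % (5 : ℕ) = 3 by push_cast; omega]; norm_num
  have : Fact (Nat.Prime 19) := ⟨by norm_num⟩
  apply ZMod.isSquare_of_jacobiSym_eq_one
  rcases hU8 with h8 | h8
  · have h4 : G % 8 = 2 := by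
      rw [hqG]
      simp [pow_two, Int.add_emod, Int.mul_emod, hv8, h8]
    obtain ⟨G', rfl⟩ : ∃ G', G = 2 * G' := ⟨G / 2, by omega⟩
    obtain ⟨n, rfl⟩ := Int.eq_ofNat_of_zero_le hN0.le
    obtain ⟨g, rfl⟩ := Int.eq_ofNat_of_zero_le (show 0 ≤ G' by omega)
    exact JB (N := n) (G := g) (j := 1) (U := U) (r := r) (M := 15 * v - 7 * U)
      (H := 2 * (27*v^3-27*v^2*U+9*v*U^2+9*U^3)) (by rw [Nat.odd_iff]; omega)
      hG3'.of_mul_right_right hUG.of_mul_right_right hNG.of_mul_right_right hUN hN5' (by omega)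
      (by rw [pow_one]; exact e1) (by linear_combination e2)
      (by rw [pow_one]; exact j5)
      (Or.inl ⟨by omega, rfl, by omega⟩)
  · have h4 : G % 4 = 3 := by
      rw [hqG]
      have hv4 : v % 4 = 3 := by omega
      simp [pow_two, Int.add_emod, Int.mul_emod, hv4, h8]
    obtain ⟨n, rfl⟩ := Int.eq_ofNat_of_zero_le hN0.le
    obtain ⟨g, rfl⟩ := Int.eq_ofNat_of_zero_le hG0.le
    exact JB (N := n) (G := g) (j := 0) (U := U) (r := r) (M := 15 * v - 7 * U)
      (H := (27*v^3-27*v^2*U+9*v*U^2+9*U^3)) (by rw [Nat.odd_iff]; omega)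
      hG3' hUG hNG hUN hN5' (by omega)
      (by rw [pow_zero, one_mul]; exact e1) e2
      (by rw [pow_zero, one_mul]; exact j5)
      (Or.inr ⟨by omega, rfl, by omega⟩)

set_option maxRecDepth 100000 in
set_option synthInstance.maxHeartbeats 400000 in
set_option synthInstance.maxSize 1000 in
lemma sqA : ∀ u v g : ZMod 19, u ≠ 0 → (v = 3 * u ^ 2 ∨ v = 6 * u ^ 2 ∨ v = 9 * u ^ 2) →
    (g = 3 * v ^ 2 - 3 * v * u ^ 2 + 10 * (u ^ 2) ^ 2 ∨
      49 * g = 3 * v ^ 2 - 3 * v * u ^ 2 + 10 * (u ^ 2) ^ 2) → g ≠ 0 ∧ IsSquare g := by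
  decide +kernel

set_option maxRecDepth 100000 in
lemma sqB : ∀ u : ZMod 19, u ≠ 0 → 15 * (13 * u ^ 2) + 22 * u ^ 2 ≠ 0 ∧
    ¬ IsSquare (15 * (13 * u ^ 2) + 22 * u ^ 2) := by
  decide +kernel

set_option maxHeartbeats 1600000 in
lemma leaf6 (u v r : ℤ) (hv : 0 < v) (hr2 : r % 2 = 1) (h3u : ¬ (3 : ℤ) ∣ u) (h5u : ¬ (5 : ℤ) ∣ u)
    (hc : IsCoprime (4 * u ^ 5) r) (h : (4 * u ^ 5) ^ 2 + 5 * r ^ 2 = 27 * v ^ 5) : False := by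
  obtain ⟨U, hU⟩ : ∃ U, U = u ^ 2 := ⟨_, rfl⟩
  have e : 16 * U ^ 5 + 5 * r ^ 2 = 27 * v ^ 5 := by rw [hU]; linarith
  have hur : IsCoprime u r := by
    have := hc.of_mul_left_right
    exact (IsCoprime.pow_left_iff (by norm_num)).1 this
  have hu5c : IsCoprime u 5 := (cop_of_prime Nat.prime_five h5u).symm
  have hu3c : IsCoprime u 3 := (cop_of_prime Nat.prime_three h3u).symm
  have huv : IsCoprime u v := by
    have h1 : IsCoprime u (27 * v ^ 5) := by
      rw [← h, show (4 * u ^ 5) ^ 2 + 5 * r ^ 2 = 5 * r ^ 2 + u * (16 * u ^ 9) by ring]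
      exact (hu5c.mul_right hur.pow_right).add_mul_left_right _
    exact (IsCoprime.pow_right_iff (by norm_num)).1 h1.of_mul_right_right
  have hUv : IsCoprime U v := by rw [hU]; exact huv.pow_left
  have hU5c : IsCoprime U 5 := by rw [hU]; exact hu5c.pow_left
  have hU3c : IsCoprime U 3 := by rw [hU]; exact hu3c.pow_left
  have hU0 : 0 < U := by
    rw [hU]
    have : u ≠ 0 := by rintro rfl; simp at h3u
    positivity
  have hU3' : U % 3 = 1 := by
    have : u % 3 = 1 ∨ u % 3 = 2 := by omega
    rcases this with h | h <;> simp [hU, pow_two, Int.mul_emod, h]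
  have hU8 : U % 8 = 1 ∨ U % 4 = 0 := by
    have : u % 8 = 0 ∨ u % 8 = 1 ∨ u % 8 = 2 ∨ u % 8 = 3 ∨ u % 8 = 4 ∨ u % 8 = 5 ∨ u % 8 = 6 ∨ u % 8 = 7 := by omega
    have h8 : U % 8 = 1 ∨ U % 8 = 0 ∨ U % 8 = 4 := by
      rcases this with h | h | h | h | h | h | h | h <;> simp [hU, pow_two, Int.mul_emod, h]
    omega
  have hv8 : v % 8 = 7 := by
    have hr8 : r ^ 2 % 8 = 1 := by
      have : r % 8 = 1 ∨ r % 8 = 3 ∨ r % 8 = 5 ∨ r % 8 = 7 := by omega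
      rcases this with h | h | h | h <;> simp [pow_two, Int.mul_emod, h]
    have h8 : (27 * v ^ 5) % 8 = 5 := by rw [← e]; omega
    have : v % 8 = 0 ∨ v % 8 = 1 ∨ v % 8 = 2 ∨ v % 8 = 3 ∨ v % 8 = 4 ∨ v % 8 = 5 ∨ v % 8 = 6 ∨ v % 8 = 7 := by omega
    rcases this with h | h | h | h | h | h | h | h <;> simp [pow_succ, Int.mul_emod, h] at h8 ⊢
  have hv5 : (v - 3 * U) % 5 = 0 := by
    have h5 : (27 * v ^ 5 - 16 * U ^ 5) % 5 = 0 := by rw [← e]; omega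
    have hh : ∀ v U : ZMod 5, 27 * v ^ 5 - 16 * U ^ 5 = 0 → v - 3 * U = 0 := by decide
    have := hh (v : ZMod 5) (U : ZMod 5) (by
      have := (ZMod.intCast_zmod_eq_zero_iff_dvd (27 * v ^ 5 - 16 * U ^ 5) 5).2 (Int.dvd_of_emod_eq_zero h5)
      exact_mod_cast this)
    exact Int.emod_eq_zero_of_dvd ((ZMod.intCast_zmod_eq_zero_iff_dvd (v - 3 * U) 5).1 (by exact_mod_cast this))
  -- mod 19
  have h19 : (u : ZMod 19) ≠ 0 ∧ ((v : ZMod 19) = 3 * u ^ 2 ∨ (v : ZMod 19) = 6 * u ^ 2 ∨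
      (v : ZMod 19) = 9 * u ^ 2 ∨ (v : ZMod 19) = 13 * u ^ 2) := by
    obtain ⟨a, b, ε, hε, hab, h1, h2⟩ := class27 (4 * u ^ 5) r v hv hc h
    have h1' : 32 * (ε * u) ^ 5 = 7 * (a * (a^4 - 50*a^2*b^2 + 125*b^4)) - 5 * (5*b*(a^4 - 10*a^2*b^2+5*b^4)) := by
      rw [← h1]; rcases hε with rfl | rfl <;> ring
    have h1z := congrArg (fun t : ℤ => (t : ZMod 19)) h1'
    have habz := congrArg (fun t : ℤ => (t : ZMod 19)) hab
    push_cast at h1z habz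
    have hε2 : ((ε : ZMod 19) * u) ^ 2 = u ^ 2 := by
      rcases hε with rfl | rfl <;> push_cast <;> ring
    have c2 : ∀ x y : ZMod 19, 2 * x = 2 * y → x = y := by decide
    rcases mod19_aux (a : ZMod 19) b (ε * u) h1z with ⟨h0, h0'⟩ | ⟨h0, h0'⟩
    · exfalso
      have hu0 : (19 : ℤ) ∣ u := by
        apply (ZMod.intCast_zmod_eq_zero_iff_dvd u 19).1
        rcases hε with rfl | rfl
        · simpa using h0
        · simpa using h0
      have hr0 : (19 : ℤ) ∣ 8 * r := by
        have : (19 : ℤ) ∣ 7 * (5*b*(a^4 - 10*a^2*b^2+5*b^4)) + a * (a^4 - 50*a^2*b^2 + 125*b^4) :=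
          (ZMod.intCast_zmod_eq_zero_iff_dvd _ 19).1 (by push_cast; exact h0')
        rcases h2 with h2 | h2 <;> rw [h2]
        · exact this
        · exact this.neg_right
      have hr0' : (19 : ℤ) ∣ r := by omega
      have := hur.isUnit_of_dvd' hu0 hr0'
      rw [Int.isUnit_iff] at this; omega
    · refine ⟨?_, ?_⟩
      · intro hz; apply h0; rw [hz, mul_zero]
      · rw [hε2, habz] at h0'
        rcases h0' with h | h | h | h
        · exact Or.inl (c2 _ _ h)
        · exact Or.inr (Or.inl (c2 _ _ h))
        · exact Or.inr (Or.inr (Or.inl (c2 _ _ h)))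
        · exact Or.inr (Or.inr (Or.inr (c2 _ _ h)))
  obtain ⟨hu19, hs⟩ := h19
  have hUz : (U : ZMod 19) = u ^ 2 := by rw [hU]; push_cast; rfl
  by_cases hs13 : (v : ZMod 19) = 13 * u ^ 2
  · obtain ⟨hb1, hb2⟩ := sqB u hu19
    have hNz : ((15 * v + 22 * U : ℤ) : ZMod 19) = 15 * (13 * u ^ 2) + 22 * u ^ 2 := by
      push_cast; rw [hUz, hs13]
    have := testB (u := u) (v := v) (U := U) (r := r) (N := 15 * v + 22 * U)
      (G := 3 * v ^ 2 + 3 * v * U + 2 * U ^ 2) (by positivity) (by positivity) hU3c hU5c hUv hU h5u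
      hv8 hU8 hU3' hv5 (by
        intro hd
        have := (ZMod.intCast_zmod_eq_zero_iff_dvd _ 19).2 hd
        rw [hNz] at this; exact hb1 this) rfl rfl e
    rw [hNz] at this
    exact hb2 this
  · have hs' : (v : ZMod 19) = 3 * u ^ 2 ∨ (v : ZMod 19) = 6 * u ^ 2 ∨ (v : ZMod 19) = 9 * u ^ 2 := by
      tauto
    have hUN : IsCoprime U (3 * v + 26 * U) := by
      rw [show 3 * v + 26 * U = 3 * v + U * 26 by ring]
      exact (hU3c.mul_right hUv).add_mul_left_right _
    have h2N : IsCoprime (2 : ℤ) (3 * v + 26 * U) := by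
      apply cop_of_prime Nat.prime_two
      push_cast; omega
    have hG0 : 0 < 3 * v ^ 2 - 3 * v * U + 10 * U ^ 2 := by nlinarith [sq_nonneg (v - U)]
    by_cases h7 : (7 : ℤ) ∣ 3 * v + 26 * U
    · obtain ⟨w, hw⟩ : ∃ w, v = 3 * U + 7 * w := by
        obtain ⟨t, ht⟩ := h7
        exact ⟨(v - 3 * U) / 7, by clear e h hG0 hc; omega⟩
      have p7 : Prime (7 : ℤ) := Nat.prime_iff_prime_int.1 (by norm_num)
      have h7U : ¬ (7 : ℤ) ∣ U := by
        intro hd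
        have hv7 : (7 : ℤ) ∣ v := by rw [hw]; exact dvd_add (hd.mul_left 3) ⟨w, rfl⟩
        exact p7.not_isUnit (hUv.isUnit_of_dvd' hd hv7)
      have hF : 45 * r ^ 2 = (9 * U + 21 * w) ^ 5 - 144 * U ^ 5 := by
        rw [hw] at e; linear_combination 9 * e
      obtain ⟨r', rfl⟩ : (7 : ℤ) ∣ r := by
        have : (7 : ℤ) ∣ 45 * r ^ 2 := by
          rw [hF]
          exact ⟨8415 * U ^ 5 + 3 * 5 * (9 * U) ^ 4 * w + 10 * (9*U)^3 * 63 * w ^ 2 + 10 * (9*U)^2 * (3*21^2*w^3)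
            + 5 * (9 * U) * (3 * 21^3 * w^4) + 3 * 21 ^ 4 * w ^ 5, by ring⟩
        rcases p7.dvd_or_dvd this with h | h
        · norm_num at h
        · exact p7.dvd_of_dvd_pow h
      obtain ⟨t, ht⟩ : (7 : ℤ) ∣ U + 2 * w := by
        have : (7 : ℤ) ∣ U ^ 4 * (U + 2 * w) := by
          refine ⟨45 * r' ^ 2 - 1202 * U ^ 5 - 14059 * U ^ 4 * w - 65610 * U ^ 3 * w ^ 2
            - 153090 * U ^ 2 * w ^ 3 - 178605 * U * w ^ 4 - 83349 * w ^ 5, ?_⟩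
          apply mul_left_cancel₀ (show (7 : ℤ) ≠ 0 by norm_num)
          linear_combination -hF
        rcases p7.dvd_or_dvd this with h | h
        · exact absurd (p7.dvd_of_dvd_pow h) h7U
        · exact h
      have hUt : U = 7 * t - 2 * w := by linarith
      have hvt : v = 21 * t + w := by rw [hw, hUt]; ring
      have hqN : (7 : ℤ) ^ 2 * (5 * t - w) = 3 * v + 26 * U := by rw [hUt, hvt]; ring
      have hqG : (7 : ℤ) ^ 2 * (28 * t ^ 2 - t * w + w ^ 2) = 3 * v ^ 2 - 3 * v * U + 10 * U ^ 2 := by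
        rw [hUt, hvt]; ring
      obtain ⟨ha1, ha2⟩ := sqA u v ((28 * t ^ 2 - t * w + w ^ 2 : ℤ) : ZMod 19) hu19 hs' (Or.inr (by
        have := congrArg (fun t : ℤ => (t : ZMod 19)) hqG
        push_cast at this ⊢
        rw [hUz] at this
        rw [← this]))
      refine testA (u := u) (v := v) (U := U) (r := r') (K := 4 * U) (N := 5 * t - w)
        (G := 28 * t ^ 2 - t * w + w ^ 2) (q := 7) (by simp) (by linarith) (by linarith)
        hU3c hUv ?_ hU h5u hv8 hU8 hU3' hv5 ?_ hqN hqG ?_ ?_ ha2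
      · have h1 : IsCoprime (4 * U) (3 * v + 26 * U) := by
          rw [show (4 : ℤ) = 2 * 2 by norm_num]
          exact (h2N.mul_left h2N).mul_left hUN
        rw [← hqN] at h1
        exact h1.of_mul_right_right
      · intro hd; exact ha1 ((ZMod.intCast_zmod_eq_zero_iff_dvd _ 19).2 hd)
      · rw [hUt, hvt]; ring
      · rw [hUt, hvt] at e ⊢; apply mul_left_cancel₀ (show (49 : ℤ) ≠ 0 by norm_num)
        linear_combination 3 * e
    · obtain ⟨ha1, ha2⟩ := sqA u v ((3 * v ^ 2 - 3 * v * U + 10 * U ^ 2 : ℤ) : ZMod 19) hu19 hs' (Or.inl (by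
        push_cast; rw [hUz]))
      refine testA (u := u) (v := v) (U := U) (r := r) (K := 28 * U) (N := 3 * v + 26 * U)
        (G := 3 * v ^ 2 - 3 * v * U + 10 * U ^ 2) (q := 1) (by simp) (by positivity) hG0
        hU3c hUv ?_ hU h5u hv8 hU8 hU3' hv5 ?_ (by ring) (by ring) (by ring) (by linear_combination 3 * e) ha2
      · rw [show (28 : ℤ) = 2 * 2 * 7 by norm_num]
        exact ((h2N.mul_left h2N).mul_left (cop_of_prime (p := 7) (by norm_num) h7)).mul_left hUN
      · intro hd; exact ha1 ((ZMod.intCast_zmod_eq_zero_iff_dvd _ 19).2 hd)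

set_option maxRecDepth 100000 in
lemma mod25_1 : ∀ u a : ZMod 25, (27 * u ^ 5 = a ^ 5 ∨ 27 * u ^ 5 = - a ^ 5) → 5 * u = 0 := by
  decide +kernel
set_option maxRecDepth 100000 in
lemma mod25_2 : ∀ u r v : ZMod 25, (108 * u ^ 5) ^ 2 + 5 * r ^ 2 = v ^ 5 → 5 * u = 0 := by
  decide +kernel
set_option maxRecDepth 100000 in
lemma mod25_5 : ∀ u r v : ZMod 25, (u ^ 5) ^ 2 + 20 * r ^ 2 = 27 * v ^ 5 → 5 * u = 0 := by
  decide +kernel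

lemma five_dvd_of {u : ℤ} (h : 5 * (u : ZMod 25) = 0) : (5 : ℤ) ∣ u := by
  have : ((5 * u : ℤ) : ZMod 25) = 0 := by push_cast; exact h
  have := (ZMod.intCast_zmod_eq_zero_iff_dvd (5 * u) 25).1 this
  push_cast at this
  omega

lemma leaf1 (u r v : ℤ) (hv : 0 < v) (h5u : ¬ (5 : ℤ) ∣ u) (hc : IsCoprime (27 * u ^ 5) (2 * r))
    (h : (27 * u ^ 5) ^ 2 + 20 * r ^ 2 = v ^ 5) : False := by
  obtain ⟨a, b, ε, hε, hab, h1, h2⟩ := class1 (27 * u ^ 5) (2 * r) v hv hc (by linarith)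
  apply h5u
  apply five_dvd_of
  apply mod25_1 (u : ZMod 25) (a : ZMod 25)
  have h1z := congrArg (fun t : ℤ => (t : ZMod 25)) h1
  have z25 : (25 : ZMod 25) = 0 := by decide
  push_cast at h1z
  rcases hε with rfl | rfl
  · left; rw [h1z]; push_cast; linear_combination (-2 * (a : ZMod 25) ^ 3 * b ^ 2 + 5 * a * b ^ 4) * z25
  · right; rw [h1z]; push_cast; linear_combination (2 * (a : ZMod 25) ^ 3 * b ^ 2 - 5 * a * b ^ 4) * z25

lemma leaf2 (u r v : ℤ) (h5u : ¬ (5 : ℤ) ∣ u)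
    (h : (108 * u ^ 5) ^ 2 + 5 * r ^ 2 = v ^ 5) : False :=
  h5u (five_dvd_of (mod25_2 u r v (by exact_mod_cast congrArg (fun t : ℤ => (t : ZMod 25)) h)))

lemma leaf5 (u r v : ℤ) (h5u : ¬ (5 : ℤ) ∣ u)
    (h : (u ^ 5) ^ 2 + 20 * r ^ 2 = 27 * v ^ 5) : False :=
  h5u (five_dvd_of (mod25_5 u r v (by exact_mod_cast congrArg (fun t : ℤ => (t : ZMod 25)) h)))

lemma leaf78 (R S' v : ℤ) (hv : 0 < v) (hc : IsCoprime R (125 * S'))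
    (h : R ^ 2 + 5 * (125 * S') ^ 2 = 27 * v ^ 5) : False := by
  obtain ⟨a, b, ε, hε, hab, h1, h2⟩ := class27 R (125 * S') v hv hc h
  have p5 : Prime (5 : ℤ) := Nat.prime_iff_prime_int.1 Nat.prime_five
  obtain ⟨W, hW⟩ : ∃ W : ℤ, 7 * (5*b*(a^4 - 10*a^2*b^2+5*b^4)) + a * (a^4 - 50*a^2*b^2 + 125*b^4) = 125 * W := by
    rcases h2 with h2 | h2
    · exact ⟨8 * S', by linarith⟩
    · exact ⟨-(8 * S'), by linarith⟩
  obtain ⟨a', rfl⟩ : (5 : ℤ) ∣ a := by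
    apply p5.dvd_of_dvd_pow (n := 5)
    exact ⟨25 * W - 7 * (b*(a^4 - 10*a^2*b^2+5*b^4)) + a * (10*a^2*b^2 - 25*b^4), by linear_combination hW⟩
  obtain ⟨b', rfl⟩ : (5 : ℤ) ∣ b := by
    have : (5 : ℤ) ∣ 7 * b ^ 5 := by
      refine ⟨W - 7 * b * (25 * a' ^ 4 - 10 * a' ^ 2 * b ^ 2) - a' * (25 * a' ^ 4 - 50 * a' ^ 2 * b ^ 2 + 5 * b ^ 4), ?_⟩
      apply mul_left_cancel₀ (show (25 : ℤ) ≠ 0 by norm_num)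
      linear_combination hW
    rcases p5.dvd_or_dvd this with h | h
    · norm_num at h
    · exact p5.dvd_of_dvd_pow h
  have hR : (5 : ℤ) ∣ 8 * (ε * R) := by
    rw [h1]
    exact ⟨7 * (a' * ((5*a')^4 - 50*(5*a')^2*(5*b')^2 + 125*(5*b')^4)) - (5*(5*b')*((5*a')^4 - 10*(5*a')^2*(5*b')^2+5*(5*b')^4)), by ring⟩
  have hR' : (5 : ℤ) ∣ R := by rcases hε with rfl | rfl <;> omega
  exact p5.not_isUnit (hc.isUnit_of_dvd' hR' ⟨25 * S', by ring⟩)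

lemma gap {a b n1 n2 M : ℤ} (ha : 0 < a) (hn1 : 0 ≤ n1) (hn2 : 0 ≤ n2)
    (d1 : n1 ^ 2 - 25 * b ^ 2 < 0) (f1 : M ≤ (n1 ^ 2 - 25 * b ^ 2) ^ 2 - 500 * b ^ 4)
    (f2 : ((n1 + 1) ^ 2 - 25 * b ^ 2) ^ 2 - 500 * b ^ 4 ≤ -M)
    (f3 : (n2 ^ 2 - 25 * b ^ 2) ^ 2 - 500 * b ^ 4 ≤ -M)
    (d4 : 0 < (n2 + 1) ^ 2 - 25 * b ^ 2) (f4 : M ≤ ((n2 + 1) ^ 2 - 25 * b ^ 2) ^ 2 - 500 * b ^ 4) :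
    M ≤ |a^4 - 50*a^2*b^2 + 125*b^4| := by
  have e : a^4 - 50*a^2*b^2 + 125*b^4 = (a ^ 2 - 25 * b ^ 2) ^ 2 - 500 * b ^ 4 := by ring
  rw [e, le_abs]
  have mono : ∀ x y : ℤ, 0 ≤ x → x ≤ y → x ^ 2 ≤ y ^ 2 := fun x y h1 h2 => pow_le_pow_left₀ h1 h2 2
  have mono' : ∀ x y : ℤ, x ≤ 0 → y ≤ x → x ^ 2 ≤ y ^ 2 := fun x y h1 h2 => by
    have := mono (-x) (-y) (by linarith) (by linarith)
    rwa [neg_sq, neg_sq] at this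
  rcases le_or_gt a n1 with h | h
  · left
    have h1 := mono a n1 ha.le h
    have h2 := mono' (n1 ^ 2 - 25 * b ^ 2) (a ^ 2 - 25 * b ^ 2) d1.le (by linarith)
    linarith
  rcases le_or_gt a n2 with h' | h'
  · right
    have h1 := mono (n1 + 1) a (by linarith) h
    have h2 := mono a n2 ha.le h'
    rcases le_total (a ^ 2 - 25 * b ^ 2) 0 with h0 | h0
    · have := mono' (a ^ 2 - 25 * b ^ 2) ((n1 + 1) ^ 2 - 25 * b ^ 2) h0 (by linarith)
      linarith
    · have := mono (a ^ 2 - 25 * b ^ 2) (n2 ^ 2 - 25 * b ^ 2) h0 (by linarith)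
      linarith
  · left
    have h1 := mono (n2 + 1) a (by linarith) h'
    have h2 := mono ((n2 + 1) ^ 2 - 25 * b ^ 2) (a ^ 2 - 25 * b ^ 2) d4.le (by linarith)
    linarith

set_option maxHeartbeats 1600000 in
lemma leaf34 (R u v m : ℤ) (hv : 0 < v) (hm : m = 675 ∨ (m = 2700 ∧ R % 2 = 1)) (h5R : ¬ (5 : ℤ) ∣ R)
    (hu : u ≠ 0) (hR : |R| < 2 * 10 ^ 6) (hR0 : R ≠ 0) (hc : IsCoprime R (5 * m * u ^ 5))
    (h : R ^ 2 + 5 * (5 * m * u ^ 5) ^ 2 = v ^ 5) : False := by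
  obtain ⟨a, b, ε, hε, hab, h1, h2⟩ := class1 R (5 * m * u ^ 5) v hv hc h
  have p5 : Prime (5 : ℤ) := Nat.prime_iff_prime_int.1 Nat.prime_five
  have p3 : Prime (3 : ℤ) := Int.prime_three
  obtain ⟨f, hf⟩ : ∃ f : ℤ, f = a^4 - 50*a^2*b^2 + 125*b^4 := ⟨_, rfl⟩
  obtain ⟨Q, hQ⟩ : ∃ Q : ℤ, Q = a^4 - 10*a^2*b^2+5*b^4 := ⟨_, rfl⟩
  rw [← hf] at h1
  rw [← hQ] at h2
  have h2' : b * Q = ε * (m * u ^ 5) := by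
    rcases hε with rfl | rfl <;> linarith
  have haR : a ∣ R := ⟨ε * f, by rw [h1]; ring⟩
  have hfR : f ∣ R := ⟨ε * a, by rw [h1]; ring⟩
  have hab' : IsCoprime a b :=
    (hc.of_isCoprime_of_dvd_left haR).of_isCoprime_of_dvd_right ⟨ε * 5 * Q, by rw [h2]; ring⟩
  have h5a : ¬ (5 : ℤ) ∣ a := fun hd => h5R (hd.trans haR)
  have hbQ : IsCoprime b Q := by
    rw [hQ, show a^4 - 10*a^2*b^2+5*b^4 = a ^ 4 + b * (-10 * a ^ 2 * b + 5 * b ^ 3) by ring]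
    exact (hab'.symm.pow_right).add_mul_left_right _
  have h5Q : IsCoprime (5 : ℤ) Q := by
    apply cop_of_prime Nat.prime_five
    intro hd
    apply h5a
    apply p5.dvd_of_dvd_pow (n := 4)
    rw [show a ^ 4 = Q + 5 * (2 * a ^ 2 * b ^ 2 - b ^ 4) by rw [hQ]; ring]
    exact dvd_add hd ⟨_, rfl⟩
  have h3Q : IsCoprime (3 : ℤ) Q := by
    apply cop_of_prime Nat.prime_three
    intro hd
    have hz : ∀ a b : ZMod 3, a^4 - 10*a^2*b^2+5*b^4 = 0 → a = 0 ∧ b = 0 := by decide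
    obtain ⟨z1, z2⟩ := hz (a : ZMod 3) b (by
      have := (ZMod.intCast_zmod_eq_zero_iff_dvd Q 3).2 hd
      rw [hQ] at this; exact_mod_cast this)
    exact p3.not_isUnit (hab'.isUnit_of_dvd' ((ZMod.intCast_zmod_eq_zero_iff_dvd a 3).1 z1)
      ((ZMod.intCast_zmod_eq_zero_iff_dvd b 3).1 z2))
  have hmQ : IsCoprime m Q := by
    rcases hm with rfl | ⟨rfl, hodd⟩
    · rw [show (675 : ℤ) = 3 ^ 3 * 5 ^ 2 by norm_num]
      exact h3Q.pow_left.mul_left h5Q.pow_left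
    · have h2Q : IsCoprime (2 : ℤ) Q := by
        apply cop_of_prime Nat.prime_two
        intro hd
        have hz : ∀ a b : ZMod 2, a^4 - 10*a^2*b^2+5*b^4 = 0 → a * (a^4 - 50*a^2*b^2 + 125*b^4) = 0 := by decide
        have z := hz (a : ZMod 2) b (by
          have := (ZMod.intCast_zmod_eq_zero_iff_dvd Q 2).2 hd
          rw [hQ] at this; exact_mod_cast this)
        have : (2 : ℤ) ∣ a * f := (ZMod.intCast_zmod_eq_zero_iff_dvd (a * f) 2).1 (by rw [hf]; push_cast; exact z)
        have : (2 : ℤ) ∣ R := by rw [h1]; exact this.mul_left _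
        omega
      rw [show (2700 : ℤ) = 2 ^ 2 * (3 ^ 3 * 5 ^ 2) by norm_num]
      exact h2Q.pow_left.mul_left (h3Q.pow_left.mul_left h5Q.pow_left)
  have hm0 : m ≠ 0 := by rcases hm with rfl | ⟨rfl, _⟩ <;> norm_num
  obtain ⟨b', hb'⟩ : m ∣ b := hmQ.dvd_of_dvd_mul_right (by rw [h2']; exact ⟨ε * u ^ 5, by ring⟩)
  have h3' : b' * Q = (ε * u) ^ 5 := by
    apply mul_left_cancel₀ hm0
    have : (ε * u) ^ 5 = ε * u ^ 5 := by rcases hε with rfl | rfl <;> ring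
    rw [this]
    linear_combination h2' - Q * hb'
  obtain ⟨s, hs⟩ : ∃ s, b' = s ^ 5 :=
    Int.eq_pow_of_mul_eq_pow_odd_left (hbQ.of_isCoprime_of_dvd_left ⟨m, by rw [hb']; ring⟩) (by decide) h3'
  have hs0 : s ≠ 0 := by
    rintro rfl
    rw [hs] at h3'
    have : ε * u = 0 := by
      have : (ε * u) ^ 5 = 0 := by rw [← h3']; ring
      exact pow_eq_zero_iff (by norm_num) |>.1 this
    rcases mul_eq_zero.1 this with h | h
    · rcases hε with rfl | rfl <;> norm_num at h
    · exact hu h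
  have hb : b = m * s ^ 5 := by rw [hb', hs]
  have ha0 : a ≠ 0 := by rintro rfl; simp at h1; exact hR0 h1
  have habs : |a| < 2 * 10 ^ 6 := lt_of_le_of_lt (Int.le_of_dvd (abs_pos.2 hR0) ((abs_dvd_abs _ _).2 haR)) hR
  have hfabs : |f| < 2 * 10 ^ 6 := lt_of_le_of_lt (Int.le_of_dvd (abs_pos.2 hR0) ((abs_dvd_abs _ _).2 hfR)) hR
  obtain ⟨t, ht⟩ : ∃ t, t = |s| := ⟨_, rfl⟩
  obtain ⟨A, hA⟩ : ∃ A, A = |a| := ⟨_, rfl⟩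
  obtain ⟨β, hβ⟩ : ∃ β, β = m * t ^ 5 := ⟨_, rfl⟩
  have hm1 : 675 ≤ m := by rcases hm with rfl | ⟨rfl, _⟩ <;> norm_num
  have ht1 : 1 ≤ t := by rw [ht]; exact Int.one_le_abs hs0
  have hA1 : 0 < A := by rw [hA]; exact abs_pos.2 ha0
  have hA2 : A ^ 2 = a ^ 2 := by rw [hA, sq_abs]
  have hβ2 : β ^ 2 = b ^ 2 := by
    have : t ^ 2 = s ^ 2 := by rw [ht, sq_abs]
    rw [hβ, hb, show (m * t ^ 5) ^ 2 = m ^ 2 * (t ^ 2) ^ 5 by ring, this]; ring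
  have hf' : f = A^4 - 50*A^2*β^2 + 125*β^4 := by
    rw [hf, show A ^ 4 = (A ^ 2) ^ 2 by ring, show β ^ 4 = (β ^ 2) ^ 2 by ring, hA2, hβ2]; ring
  have hβm : 675 ≤ β := by
    have : 1 ≤ t ^ 5 := one_le_pow₀ ht1
    rw [hβ]; nlinarith
  rw [← hA] at habs
  have hβA : β ≤ A := by
    by_contra hlt
    push Not at hlt
    have h1 : A ^ 2 ≤ β ^ 2 := pow_le_pow_left₀ hA1.le hlt.le 2
    have h2 : 675 ^ 2 ≤ β ^ 2 := pow_le_pow_left₀ (by norm_num) hβm 2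
    norm_num at h2
    have h3 := (abs_lt.1 hfabs).2
    rw [hf'] at h3
    have h4 : A ^ 2 * β ^ 2 ≤ β ^ 2 * β ^ 2 := mul_le_mul_of_nonneg_right h1 (sq_nonneg β)
    have h5 : 455625 * 455625 ≤ β ^ 2 * β ^ 2 := mul_le_mul h2 h2 (by norm_num) (sq_nonneg β)
    have h6 : 0 ≤ A ^ 4 := by positivity
    have h7 : β ^ 4 = β ^ 2 * β ^ 2 := by ring
    rw [h7] at h3
    linarith
  have htb : t ≤ 4 := by
    by_contra hlt
    push Not at hlt
    have : (5 : ℤ) ^ 5 ≤ t ^ 5 := pow_le_pow_left₀ (by norm_num) (by linarith) 5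
    have : 675 * (5 : ℤ) ^ 5 ≤ m * t ^ 5 := mul_le_mul hm1 this (by norm_num) (by linarith)
    linarith
  have key : ∀ n1 n2 : ℤ, 0 ≤ n1 → 0 ≤ n2 → (n1 ^ 2 - 25 * β ^ 2 < 0) →
    (2 * 10 ^ 6 ≤ (n1 ^ 2 - 25 * β ^ 2) ^ 2 - 500 * β ^ 4) →
    (((n1 + 1) ^ 2 - 25 * β ^ 2) ^ 2 - 500 * β ^ 4 ≤ -(2 * 10 ^ 6)) →
    ((n2 ^ 2 - 25 * β ^ 2) ^ 2 - 500 * β ^ 4 ≤ -(2 * 10 ^ 6)) →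
    (0 < (n2 + 1) ^ 2 - 25 * β ^ 2) → (2 * 10 ^ 6 ≤ ((n2 + 1) ^ 2 - 25 * β ^ 2) ^ 2 - 500 * β ^ 4) → False := by
    intro n1 n2 g1 g2 g3 g4 g5 g6 g7 g8
    have := gap hA1 g1 g2 g3 g4 g5 g6 g7 g8
    rw [← hf'] at this
    linarith
  clear hf hf' hQ h3' h2' h1 h2 hab h hβ2 hA2 hs hb hb'
  have tcases : t = 1 ∨ t = 2 ∨ t = 3 ∨ t = 4 := by omega
  rcases hm with rfl | ⟨rfl, _⟩
  · rcases tcases with h | h | h | h <;> rw [h] at hβ <;> norm_num at hβ <;> subst hβ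
    · exact key 1096 4645 (by norm_num) (by norm_num) (by norm_num) (by norm_num) (by norm_num) (by norm_num) (by norm_num) (by norm_num)
    · exact key 35091 148649 (by norm_num) (by norm_num) (by norm_num) (by norm_num) (by norm_num) (by norm_num) (by norm_num) (by norm_num)
    · exact key 266474 1128805 (by norm_num) (by norm_num) (by norm_num) (by norm_num) (by norm_num) (by norm_num) (by norm_num) (by norm_num)
    · exact key 1122922 4756775 (by norm_num) (by norm_num) (by norm_num) (by norm_num) (by norm_num) (by norm_num) (by norm_num) (by norm_num)
  · rcases tcases with h | h | h | h <;> rw [h] at hβ <;> norm_num at hβ <;> subst hβ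
    · exact key 4386 18581 (by norm_num) (by norm_num) (by norm_num) (by norm_num) (by norm_num) (by norm_num) (by norm_num) (by norm_num)
    · exact key 140365 594596 (by norm_num) (by norm_num) (by norm_num) (by norm_num) (by norm_num) (by norm_num) (by norm_num) (by norm_num)
    · exact key 1065899 4515220 (by norm_num) (by norm_num) (by norm_num) (by norm_num) (by norm_num) (by norm_num) (by norm_num) (by norm_num)
    · omega

lemma split5 {X T w : ℤ} (hc : IsCoprime X T) (hT : 0 < T) (h : X * T = w ^ 5) :
    ∃ u v : ℤ, X = u ^ 5 ∧ T = v ^ 5 ∧ 0 < v := by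
  obtain ⟨u, hu⟩ := Int.eq_pow_of_mul_eq_pow_odd_left hc (by decide : Odd 5) h
  obtain ⟨v, hv⟩ := Int.eq_pow_of_mul_eq_pow_odd_right hc (by decide : Odd 5) h
  refine ⟨u, v, hu, hv, ?_⟩
  rw [hv] at hT
  exact (Odd.pow_pos_iff (by decide : Odd 5)).1 hT

lemma final_step {X ρ β κ x' T w : ℤ} (hκ : κ = 1 ∨ κ = 27) (h5β : ¬ (5 : ℤ) ∣ β)
    (hρ0 : ρ ≠ 0) (hX0 : X ≠ 0) (hX : X = β * x') (hc : IsCoprime X ρ)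
    (h : X ^ 2 + 5 * ρ ^ 2 = κ * T) (hw : x' * T = w ^ 5) :
    ∃ u v : ℤ, 0 < v ∧ u ≠ 0 ∧ u ∣ X ∧
      ((X = β * u ^ 5 ∧ ¬ (5 : ℤ) ∣ u ∧ (β * u ^ 5) ^ 2 + 5 * ρ ^ 2 = κ * v ^ 5 ∧ IsCoprime (β * u ^ 5) ρ) ∨
       (¬ (5 : ℤ) ∣ ρ ∧ ρ ^ 2 + 5 * (125 * β * u ^ 5) ^ 2 = κ * v ^ 5 ∧ IsCoprime ρ (125 * β * u ^ 5))) := by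
  have p5 : Prime (5 : ℤ) := Nat.prime_iff_prime_int.1 Nat.prime_five
  have hκ0 : 0 < κ := by rcases hκ with rfl | rfl <;> norm_num
  have hT : 0 < T := by
    have : 0 < κ * T := by rw [← h]; positivity
    exact pos_of_mul_pos_right this hκ0.le |> fun h => h
  by_cases h5 : (5 : ℤ) ∣ X
  · have h5ρ : ¬ (5 : ℤ) ∣ ρ := fun hd => p5.not_isUnit (hc.isUnit_of_dvd' h5 hd)
    obtain ⟨x5, rfl⟩ : (5 : ℤ) ∣ x' := by
      rw [hX] at h5; exact (p5.dvd_or_dvd h5).resolve_left h5β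
    obtain ⟨T5, rfl⟩ : (5 : ℤ) ∣ T := by
      have : (5 : ℤ) ∣ κ * T := by rw [← h, hX]; exact ⟨5 * (β * x5) ^ 2 + ρ ^ 2, by ring⟩
      rcases hκ with rfl | rfl <;> omega
    have hT5 : 0 < T5 := by linarith
    have h' : 5 * (β * x5) ^ 2 + ρ ^ 2 = κ * T5 := by
      rw [hX] at h
      apply mul_left_cancel₀ (show (5 : ℤ) ≠ 0 by norm_num)
      linear_combination h
    obtain ⟨y5, rfl⟩ : (5 : ℤ) ∣ w := by
      apply p5.dvd_of_dvd_pow (n := 5); rw [← hw]; exact ⟨5 * x5 * T5, by ring⟩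
    have h125 : x5 * T5 = 125 * y5 ^ 5 := by
      apply mul_left_cancel₀ (show (25 : ℤ) ≠ 0 by norm_num)
      linear_combination hw
    have h5T : ¬ (5 : ℤ) ∣ T5 := by
      intro hd
      apply h5ρ
      apply p5.dvd_of_dvd_pow (n := 2)
      rw [show ρ ^ 2 = κ * T5 - 5 * (β * x5) ^ 2 by linarith]
      exact dvd_sub (hd.mul_left _) ⟨_, rfl⟩
    have hc5 : IsCoprime ((5 : ℤ) ^ 3) T5 := (cop_of_prime Nat.prime_five h5T).pow_left
    obtain ⟨z, rfl⟩ : (5 : ℤ) ^ 3 ∣ x5 :=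
      hc5.dvd_of_dvd_mul_right (by rw [h125]; exact ⟨y5 ^ 5, by ring⟩)
    have hz : z * T5 = y5 ^ 5 := by
      apply mul_left_cancel₀ (show (125 : ℤ) ≠ 0 by norm_num)
      linear_combination h125
    have hcz : IsCoprime (125 * β * z) ρ := hc.of_isCoprime_of_dvd_left ⟨5, by rw [hX]; ring⟩
    have hczT : IsCoprime z T5 := by
      have : IsCoprime (125 * β * z) (κ * T5) := by
        rw [← h', show 5 * (β * (5 ^ 3 * z)) ^ 2 + ρ ^ 2 = ρ ^ 2 + (125 * β * z) * (5 * (125 * β * z)) by ring]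
        exact (hcz.pow_right).add_mul_left_right _
      exact this.of_mul_left_right.of_mul_right_right
    obtain ⟨u, v, rfl, rfl, hv⟩ := split5 hczT hT5 hz
    refine ⟨u, v, hv, ?_, ⟨β * 625 * u ^ 4, by rw [hX]; ring⟩, Or.inr ⟨h5ρ, by rw [← h']; ring, hcz.symm⟩⟩
    rintro rfl
    apply hX0; rw [hX]; ring
  · have hcT : IsCoprime x' T := by
      have : IsCoprime X (κ * T) := by
        rw [← h, show X ^ 2 + 5 * ρ ^ 2 = 5 * ρ ^ 2 + X * X by ring]
        exact ((cop_of_prime Nat.prime_five h5).symm.mul_right hc.pow_right).add_mul_left_right _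
      rw [hX] at this
      exact this.of_mul_left_right.of_mul_right_right
    obtain ⟨u, v, rfl, rfl, hv⟩ := split5 hcT hT hw
    have hd : u ∣ X := ⟨β * u ^ 4, by rw [hX]; ring⟩
    refine ⟨u, v, hv, ?_, hd, Or.inl ⟨hX, fun hd' => h5 (hd'.trans hd), by rw [← hX]; exact h, by rw [← hX]; exact hc⟩⟩
    rintro rfl
    apply hX0; rw [hX]; ring

lemma step3 {x P y r : ℤ} (hP : P = x ^ 2 + 20 * r ^ 2) (hc : IsCoprime x r) (h : 9 * x * P = y ^ 5) :
    ∃ α κ x' T w : ℤ, ((α = 27 ∧ κ = 1) ∨ (α = 1 ∧ κ = 27 ∧ ¬ (3 : ℤ) ∣ x)) ∧ x = α * x' ∧ P = κ * T ∧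
      x' * T = w ^ 5 := by
  have p3 : Prime (3 : ℤ) := Int.prime_three
  obtain ⟨y1, rfl⟩ : (3 : ℤ) ∣ y := by
    apply p3.dvd_of_dvd_pow (n := 5); rw [← h]; exact ⟨3 * x * P, by ring⟩
  have h1 : x * P = 27 * y1 ^ 5 := by
    apply mul_left_cancel₀ (show (9 : ℤ) ≠ 0 by norm_num)
    linear_combination h
  by_cases h3 : (3 : ℤ) ∣ x
  · have h3r : ¬ (3 : ℤ) ∣ r := fun hd => p3.not_isUnit (hc.isUnit_of_dvd' h3 hd)
    have h3P : ¬ (3 : ℤ) ∣ P := by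
      intro hd
      have : (3 : ℤ) ∣ 20 * r ^ 2 := by
        rw [show 20 * r ^ 2 = P - x * x by rw [hP]; ring]
        exact dvd_sub hd (h3.mul_left _)
      rcases p3.dvd_or_dvd this with h | h
      · norm_num at h
      · exact h3r (p3.dvd_of_dvd_pow h)
    have hc3 : IsCoprime ((3 : ℤ) ^ 3) P := (cop_of_prime Nat.prime_three h3P).pow_left
    obtain ⟨z, hz⟩ : (3 : ℤ) ^ 3 ∣ x :=
      hc3.dvd_of_dvd_mul_right (by rw [h1]; exact ⟨y1 ^ 5, by ring⟩)
    refine ⟨27, 1, z, P, y1, Or.inl ⟨rfl, rfl⟩, by rw [hz]; ring, by ring, ?_⟩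
    apply mul_left_cancel₀ (show (27 : ℤ) ≠ 0 by norm_num)
    rw [hz] at h1
    linear_combination h1
  · have hc3 : IsCoprime ((3 : ℤ) ^ 3) x := (cop_of_prime Nat.prime_three h3).pow_left
    obtain ⟨z, hz⟩ : (3 : ℤ) ^ 3 ∣ P :=
      hc3.dvd_of_dvd_mul_left (by rw [h1]; exact ⟨y1 ^ 5, by ring⟩)
    refine ⟨1, 27, x, z, y1, Or.inr ⟨rfl, rfl, h3⟩, by ring, by rw [hz]; ring, ?_⟩
    apply mul_left_cancel₀ (show (27 : ℤ) ≠ 0 by norm_num)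
    rw [hz] at h1
    linear_combination h1

lemma step2 {x r α κ x' T w : ℤ} (hc : IsCoprime x r) (h2x : (2 : ℤ) ∣ x)
    (hα : α = 27 ∨ α = 1) (hκ : κ = 1 ∨ κ = 27) (hx : x = α * x') (hP : x ^ 2 + 20 * r ^ 2 = κ * T)
    (hw : x' * T = w ^ 5) : r % 2 = 1 ∧ ∃ X x2 T2 w2 : ℤ, x = 2 * X ∧ X = 4 * α * x2 ∧
      X ^ 2 + 5 * r ^ 2 = κ * T2 ∧ x2 * T2 = w2 ^ 5 := by
  have p2 : Prime (2 : ℤ) := Int.prime_two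
  have hr : r % 2 = 1 := by
    have : ¬ (2 : ℤ) ∣ r := fun hd => p2.not_isUnit (hc.isUnit_of_dvd' h2x hd)
    omega
  refine ⟨hr, ?_⟩
  have hr8 : r ^ 2 % 8 = 1 := by
    have : r % 8 = 1 ∨ r % 8 = 3 ∨ r % 8 = 5 ∨ r % 8 = 7 := by omega
    rcases this with h | h | h | h <;> simp [pow_two, Int.mul_emod, h]
  obtain ⟨x1, rfl⟩ : (2 : ℤ) ∣ x' := by rcases hα with rfl | rfl <;> omega
  obtain ⟨X, hX⟩ : ∃ X, X = α * x1 := ⟨_, rfl⟩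
  have hxX : x = 2 * X := by rw [hx, hX]; ring
  have hP' : 4 * (X ^ 2 + 5 * r ^ 2) = κ * T := by rw [← hP, hxX]; ring
  obtain ⟨T2, rfl⟩ : (4 : ℤ) ∣ T := by rcases hκ with rfl | rfl <;> omega
  have hT2 : X ^ 2 + 5 * r ^ 2 = κ * T2 := by linarith
  obtain ⟨y2, rfl⟩ : (2 : ℤ) ∣ w := by
    apply p2.dvd_of_dvd_pow (n := 5); rw [← hw]; exact ⟨4 * x1 * T2, by ring⟩
  have h4 : x1 * T2 = 4 * y2 ^ 5 := by linarith
  have hX2 : X % 2 = 0 := by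
    by_contra hodd
    have hX8 : X ^ 2 % 8 = 1 := by
      have : X % 8 = 1 ∨ X % 8 = 3 ∨ X % 8 = 5 ∨ X % 8 = 7 := by omega
      rcases this with h | h | h | h <;> simp [pow_two, Int.mul_emod, h]
    have hT4 : T2 % 4 = 2 := by
      have : (κ * T2) % 8 = 6 := by rw [← hT2]; omega
      rcases hκ with rfl | rfl <;> omega
    have hx1 : x1 % 4 = 1 ∨ x1 % 4 = 3 := by rcases hα with rfl | rfl <;> omega
    have : (x1 * T2) % 4 = 0 := by rw [h4]; omega
    rcases hx1 with h | h <;> simp [Int.mul_emod, h, hT4] at this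
  have hT2o : ¬ (2 : ℤ) ∣ T2 := by
    have hX4 : X ^ 2 % 2 = 0 := by simp [pow_two, Int.mul_emod, hX2]
    have : (κ * T2) % 2 = 1 := by rw [← hT2]; omega
    rcases hκ with rfl | rfl <;> omega
  obtain ⟨x2, rfl⟩ : (2 : ℤ) ^ 2 ∣ x1 :=
    ((cop_of_prime Nat.prime_two hT2o).pow_left : IsCoprime ((2 : ℤ) ^ 2) T2).dvd_of_dvd_mul_right
      (by rw [h4]; exact ⟨y2 ^ 5, by ring⟩)
  exact ⟨X, x2, T2, y2, hxX, by rw [hX]; ring, hT2, by linarith⟩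

theorem no_solutions_exponent_five (x r y : ℤ) (hgcd : Int.gcd x r = 1)
    (hr0 : 0 < r) (hr : r < 10 ^ 6)
    (h : (x - 4*r)^3 + (x - 3*r)^3 + (x - 2*r)^3 + (x - r)^3 + x^3
        + (x + r)^3 + (x + 2*r)^3 + (x + 3*r)^3 + (x + 4*r)^3 = y ^ 5) :
    x * y = 0 := by
  by_contra hxy
  have hx0 : x ≠ 0 := left_ne_zero_of_mul hxy
  have hc : IsCoprime x r := Int.isCoprime_iff_gcd_eq_one.2 hgcd
  obtain ⟨α, κ, x', T, w, hακ, hx, hP, hw⟩ := step3 (x := x) (y := y) (r := r) rfl hc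
    (by rw [← h]; ring)
  have hα : α = 27 ∨ α = 1 := by tauto
  have hκ : κ = 1 ∨ κ = 27 := by tauto
  by_cases h2x : (2 : ℤ) ∣ x
  · obtain ⟨hr2, X, x2, T2, w2, hxX, hX, hXr, hw2⟩ := step2 hc h2x hα hκ hx hP hw
    have hXx : X ∣ x := ⟨2, by rw [hxX]; ring⟩
    have hX0 : X ≠ 0 := by rintro rfl; simp at hxX; exact hx0 hxX
    obtain ⟨u, v, hv, hu, hud, hcase⟩ := final_step (β := 4 * α) hκ
      (by rcases hα with rfl | rfl <;> norm_num) hr0.ne' hX0 hX (hc.of_isCoprime_of_dvd_left hXx) hXr hw2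
    rcases hcase with ⟨hXu, h5u, he, hcc⟩ | ⟨h5r, he, hcc⟩
    · rcases hακ with ⟨rfl, rfl⟩ | ⟨rfl, rfl, h3⟩
      · exact leaf2 u r v h5u (by linear_combination he)
      · exact leaf6 u v r hv hr2 (fun hd => h3 (hd.trans (hud.trans hXx))) h5u
          (by simpa using hcc) (by linear_combination he)
    · rcases hακ with ⟨rfl, rfl⟩ | ⟨rfl, rfl, h3⟩
      · refine leaf34 r u v 2700 hv (Or.inr ⟨rfl, hr2⟩) h5r hu ?_ hr0.ne' ?_ (by linear_combination he)
        · rw [abs_of_pos hr0]; linarith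
        · rw [show (5 * 2700 * u ^ 5 : ℤ) = 125 * (4 * 27) * u ^ 5 by ring]; exact hcc
      · refine leaf78 r (4 * u ^ 5) v hv ?_ (by linear_combination he)
        rw [show (125 * (4 * u ^ 5) : ℤ) = 125 * (4 * 1) * u ^ 5 by ring]; exact hcc
  · have hc2 : IsCoprime x (2 * r) := (cop_of_prime Nat.prime_two h2x).symm.mul_right hc
    obtain ⟨u, v, hv, hu, hud, hcase⟩ := final_step (β := α) (ρ := 2 * r) hκ
      (by rcases hα with rfl | rfl <;> norm_num) (by linarith) hx0 hx hc2 (by linear_combination hP) hw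
    rcases hcase with ⟨hXu, h5u, he, hcc⟩ | ⟨h5r, he, hcc⟩
    · rcases hακ with ⟨rfl, rfl⟩ | ⟨rfl, rfl, h3⟩
      · exact leaf1 u r v hv h5u hcc (by linear_combination he)
      · exact leaf5 u r v h5u (by linear_combination he)
    · rcases hακ with ⟨rfl, rfl⟩ | ⟨rfl, rfl, h3⟩
      · refine leaf34 (2 * r) u v 675 hv (Or.inl rfl) h5r hu ?_ (by linarith) ?_ (by linear_combination he)
        · rw [abs_of_pos (by linarith)]; linarith
        · rw [show (5 * 675 * u ^ 5 : ℤ) = 125 * 27 * u ^ 5 by ring]; exact hcc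
      · refine leaf78 (2 * r) (u ^ 5) v hv ?_ (by linear_combination he)
        rw [show (125 * u ^ 5 : ℤ) = 125 * 1 * u ^ 5 by ring]; exact hcc
end

section
/- Let x, r, y be integers with gcd(x, r) = 1, r > 0, and 3 ∣ x. If (x−4r)³ + (x−3r)³ + (x−2r)³ + (x−r)³ + x³ + (x+r)³ + (x+2r)³ + (x+3r)³ + (x+4r)³ = y⁷ (equivalently, 9x(x² + 20r²) = y⁷), then xy = 0. -/
section

open NumberField Polynomial



theorem ord2 : orderOf ((2:ℕ) : ZMod 7) = 3 := by
  rw [orderOf_eq_iff (by norm_num)]; decide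
theorem ord3 : orderOf ((3:ℕ) : ZMod 7) = 6 := by
  rw [orderOf_eq_iff (by norm_num)]; decide
theorem ord5 : orderOf ((5:ℕ) : ZMod 7) = 6 := by
  rw [orderOf_eq_iff (by norm_num)]; decide

theorem pid7 (K7 : Type) [Field K7] [NumberField K7] [IsCyclotomicExtension {7} ℚ K7] : IsPrincipalIdealRing (𝓞 K7) := by
  have : Fact (Nat.Prime 7) := ⟨by norm_num⟩
  apply RingOfIntegers.isPrincipalIdealRing_of_isPrincipal_of_pow_le_of_mem_primesOver_of_mem_Icc
  have hM : ⌊(4 / Real.pi) ^ InfinitePlace.nrComplexPlaces K7 *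
    ((Module.finrank ℚ K7).factorial / (Module.finrank ℚ K7) ^ (Module.finrank ℚ K7) * √|discr K7|)⌋₊ ≤ 4 := by
    rw [IsCyclotomicExtension.Rat.discr_prime 7 K7, IsCyclotomicExtension.finrank (n := 7) K7
    (cyclotomic.irreducible_rat (by simp)), IsCyclotomicExtension.Rat.nrComplexPlaces_eq_totient_div_two 7, Nat.totient_prime
      (by norm_num)]
    rw [← Nat.lt_succ_iff, Nat.floor_lt (by positivity)]
    have h1 : (4 / Real.pi) < 4/3.14 := by
      have := Real.pi_gt_d2
      gcongr
    have h2 : √|(((-1:ℤ)^((7-1)/2) * (7:ℕ)^(7-2) : ℤ):ℝ)| < 130 := by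
      rw [Real.sqrt_lt' (by norm_num)]; norm_num
    have h3 : (4 / Real.pi)^3 < (4/3.14)^3 := by
      have := Real.pi_pos
      gcongr
    refine lt_of_le_of_lt (b := (4/3.14:ℝ)^3 * ((720/6^6) * 130)) ?_ (by norm_num)
    have e1 : (7-1)/2 = 3 := by norm_num
    have e2 : ((7-1).factorial : ℝ) / ((7-1:ℕ):ℝ)^(7-1) = 720/6^6 := by norm_num [Nat.factorial]
    rw [e2, e1]
    exact mul_le_mul h3.le (mul_le_mul_of_nonneg_left h2.le (by norm_num)) (by positivity) (by positivity)
  intro p hp hpp P hP hle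
  exfalso
  have hp4 : p ≤ 4 := (Finset.mem_Icc.1 hp).2.trans hM
  replace hle := hle.trans hM
  have := Fact.mk hpp
  have := hP.1
  have := hP.2
  rw [IsCyclotomicExtension.Rat.inertiaDeg_eq_of_not_dvd (m := 7) p K7 P] at hle
  · have : p = 2 ∨ p = 3 := by
      interval_cases p <;> first | (left; rfl) | (right; rfl) | (exfalso; revert hpp; norm_num)
    rcases this with rfl | rfl
    · rw [ord2] at hle; norm_num at hle
    · rw [ord3] at hle; norm_num at hle
  · intro h
    have := (Nat.prime_dvd_prime_iff_eq hpp (by norm_num)).1 h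
    omega


section
variable (K : Type) [Field K] [NumberField K] [IsCyclotomicExtension {7} ℚ K]

theorem card_primes (p : ℕ) [Fact p.Prime] (k : ℕ) (hp : ¬ p ∣ 7) (ho : orderOf (p : ZMod 7) = k) :
    ((Ideal.span {(p:ℤ)}).primesOver (𝓞 K)).ncard * k = 6 := by
  have := IsCyclotomicExtension.isGalois {7} ℚ K
  have hpp : Nat.Prime p := Fact.out
  have : (Ideal.span {(p:ℤ)}).IsPrime := by
    rw [Ideal.span_singleton_prime (by exact_mod_cast hpp.ne_zero)]
    exact Nat.prime_iff_prime_int.1 hpp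
  have h := Ideal.ncard_primesOver_mul_ramificationIdxIn_mul_inertiaDegIn (Ideal.span {(p:ℤ)}) (𝓞 K) (K ≃ₐ[ℚ] K)
  rw [IsCyclotomicExtension.Rat.inertiaDegIn_eq_of_not_dvd p K (m := 7) hp,
    IsCyclotomicExtension.Rat.ramificationIdxIn_eq_of_not_dvd p K (m := 7) hp, ho, one_mul,
    IsGalois.card_aut_eq_finrank, IsCyclotomicExtension.finrank (n := 7) K
    (cyclotomic.irreducible_rat (by simp)), Nat.totient_prime (by norm_num)] at h
  exact h

theorem mem_pO (p : ℕ) [Fact p.Prime] (P : Ideal (𝓞 K)) (hP : P.IsMaximal) (h : (p : 𝓞 K) ∈ P) :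
    P ∈ (Ideal.span {(p:ℤ)}).primesOver (𝓞 K) := by
  refine ⟨hP.isPrime, ?_⟩
  have hpp : Nat.Prime p := Fact.out
  have h1 : Prime (p:ℤ) := Nat.prime_iff_prime_int.1 hpp
  have : (Ideal.span {(p:ℤ)}).IsMaximal :=
    PrincipalIdealRing.isMaximal_of_irreducible h1.irreducible
  constructor
  apply this.eq_of_le
  · exact Ideal.IsPrime.ne_top (Ideal.IsPrime.under ℤ P)
  · rw [Ideal.span_singleton_le_iff_mem]
    simpa [Ideal.mem_comap] using h

theorem clean_aux (g : Fin 5 → 𝓞 K) (hg : Pairwise fun i j => IsCoprime (g i) (g j)) :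
    ∃ i, IsCoprime (g i) (30 : 𝓞 K) := by
  by_contra! hc
  have h1 : ∀ i, ∃ M : Ideal (𝓞 K), M.IsMaximal ∧ g i ∈ M ∧ (30 : 𝓞 K) ∈ M := by
    intro i
    have : Ideal.span {g i, (30 : 𝓞 K)} ≠ ⊤ := by
      intro h
      apply hc i
      rw [← Ideal.isCoprime_span_singleton_iff, Ideal.isCoprime_iff_sup_eq, ← Ideal.span_union]
      exact h
    obtain ⟨M, hM, hle⟩ := Ideal.exists_le_maximal _ this
    exact ⟨M, hM, hle (Ideal.subset_span (by simp)), hle (Ideal.subset_span (by simp))⟩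
  choose M hM hgM h30 using h1
  haveI : Fact (Nat.Prime 2) := ⟨by norm_num⟩
  haveI : Fact (Nat.Prime 3) := ⟨by norm_num⟩
  haveI : Fact (Nat.Prime 5) := ⟨by norm_num⟩
  have c2 := card_primes K 2 3 (by norm_num) ord2
  have c3 := card_primes K 3 6 (by norm_num) ord3
  have c5 := card_primes K 5 6 (by norm_num) ord5
  set S2 := ((Ideal.span {((2:ℕ):ℤ)}).primesOver (𝓞 K))
  set S3 := ((Ideal.span {((3:ℕ):ℤ)}).primesOver (𝓞 K))
  set S5 := ((Ideal.span {((5:ℕ):ℤ)}).primesOver (𝓞 K))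
  have hmem : ∀ i, M i ∈ (S2 ∪ S3) ∪ S5 := by
    intro i
    have h := h30 i
    have e : (30 : 𝓞 K) = ((2:ℕ) : 𝓞 K) * ((3:ℕ) : 𝓞 K) * ((5:ℕ) : 𝓞 K) := by norm_num
    rw [e] at h
    rcases (hM i).isPrime.mem_or_mem h with h | h
    · rcases (hM i).isPrime.mem_or_mem h with h | h
      · exact Or.inl (Or.inl (mem_pO K 2 _ (hM i) h))
      · exact Or.inl (Or.inr (mem_pO K 3 _ (hM i) h))
    · exact Or.inr (mem_pO K 5 _ (hM i) h)
  have hinj : Function.Injective M := by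
    intro i j hij
    by_contra hne
    obtain ⟨a, b, hab⟩ := hg hne
    apply (hM i).ne_top
    rw [Ideal.eq_top_iff_one, ← hab]
    exact Ideal.add_mem _ (Ideal.mul_mem_left _ _ (hgM i)) (Ideal.mul_mem_left _ _ (by rw [hij]; exact hgM j))
  have hfin : ((S2 ∪ S3) ∪ S5).Finite := by
    refine Set.Finite.union (Set.Finite.union ?_ ?_) ?_ <;> apply Set.finite_of_ncard_ne_zero <;> omega
  have hcard : ((S2 ∪ S3) ∪ S5).ncard ≤ 4 := by
    have := Set.ncard_union_le (S2 ∪ S3) S5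
    have := Set.ncard_union_le S2 S3
    omega
  have h5 : (Set.range M).ncard ≤ ((S2 ∪ S3) ∪ S5).ncard :=
    Set.ncard_le_ncard (by rintro _ ⟨i, rfl⟩; exact hmem i) hfin
  rw [← Set.image_univ, Set.ncard_image_of_injective _ hinj, Set.ncard_univ, Nat.card_eq_fintype_card, Fintype.card_fin] at h5
  omega

theorem rank7 : Units.rank K = 2 := by
  rw [Units.rank]
  have h2 := InfinitePlace.card_add_two_mul_card_eq_rank K
  have h3 := InfinitePlace.card_eq_nrRealPlaces_add_nrComplexPlaces K
  have h1 := IsCyclotomicExtension.Rat.nrComplexPlaces_eq_totient_div_two 7 K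
  rw [IsCyclotomicExtension.finrank (n := 7) K (cyclotomic.irreducible_rat (by simp))] at h2
  rw [Nat.totient_prime (by norm_num)] at h1 h2
  omega

theorem units_gen : ∃ f : Fin 343 → (𝓞 K)ˣ, ∀ u, ∃ t v, u = f t * v ^ 7 := by
  suffices ∃ f : (Fin 7 × (Fin (Units.rank K) → Fin 7)) → (𝓞 K)ˣ, ∀ u, ∃ t v, u = f t * v ^ 7 by
    obtain ⟨f, hf⟩ := this
    have hc : Fintype.card (Fin 7 × (Fin (Units.rank K) → Fin 7)) = 343 := by
      simp [rank7 K]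
    refine ⟨fun t => f ((Fintype.equivFinOfCardEq hc).symm t), fun u => ?_⟩
    obtain ⟨t, v, h⟩ := hf u
    exact ⟨Fintype.equivFinOfCardEq hc t, v, by simpa using h⟩
  obtain ⟨τ, hτ⟩ := IsCyclic.exists_generator (α := Units.torsion K)
  refine ⟨fun t => (τ : (𝓞 K)ˣ) ^ (t.1 : ℕ) * ∏ i, Units.fundSystem K i ^ (t.2 i : ℕ), fun u => ?_⟩
  obtain ⟨⟨z, e⟩, h, -⟩ := Units.exist_unique_eq_mul_prod K u
  obtain ⟨k, rfl⟩ := hτ z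
  have key : ∀ (x : (𝓞 K)ˣ) (k : ℤ), x ^ k = x ^ (Fin.ofNat 7 (k % 7).toNat : ℕ) * (x ^ (k / 7)) ^ 7 := by
    intro x k
    have : (k % 7).toNat < 7 := by omega
    rw [← zpow_natCast, ← zpow_natCast, ← zpow_mul, ← zpow_add]
    congr 1
    simp [Fin.ofNat]
    omega
  refine ⟨(Fin.ofNat 7 (k % 7).toNat, fun i => Fin.ofNat 7 (e i % 7).toNat),
    (τ : (𝓞 K)ˣ) ^ (k / 7) * ∏ i, Units.fundSystem K i ^ (e i / 7), ?_⟩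
  rw [h, mul_pow, mul_mul_mul_comm, ← Finset.prod_pow, ← Finset.prod_mul_distrib]
  congr 1
  · simpa using key τ k
  · exact Finset.prod_congr rfl fun i _ => key _ _
end

end

section

structure Setup (R : Type) [CommRing R] (ζ : R) : Prop where
  hz : 1 + ζ + ζ^2 + ζ^3 + ζ^4 + ζ^5 + ζ^6 = 0
  prime : Prime (ζ - 1)
  res : ∀ x : R, ∃ n : ℤ, ζ - 1 ∣ x - n
  intdvd : ∀ n : ℤ, ζ - 1 ∣ (n : R) → 7 ∣ n
  clean : ∀ g : Fin 5 → R, (Pairwise fun i j => IsCoprime (g i) (g j)) → ∃ i, IsCoprime (g i) 30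
  ugen : ∃ f : Fin 343 → Rˣ, ∀ u, ∃ t v, u = f t * v ^ 7
  hom : ∃ φ : R →+* ZMod 43, φ ζ = 4

end

section

open NumberField Polynomial

theorem setup7' (K : Type) [Field K] [NumberField K] [IsCyclotomicExtension {7} ℚ K] :
    ∃ ζ : 𝓞 K, Setup (𝓞 K) ζ := by
  have : Fact (Nat.Prime 7) := ⟨by norm_num⟩
  have hζ := IsCyclotomicExtension.zeta_spec 7 ℚ K
  have hp : IsPrimitiveRoot hζ.toInteger 7 := hζ.toInteger_isPrimitiveRoot
  refine ⟨hζ.toInteger, ?_, hζ.zeta_sub_one_prime', ?_, ?_, clean_aux K, units_gen K, ?_⟩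
  · have := hp.geom_sum_eq_zero (by norm_num)
    simpa [Finset.sum_range_succ] using this
  · intro x
    have htop : x ∈ Algebra.adjoin ℤ {hζ.toInteger} := by
      rw [IsCyclotomicExtension.Rat.adjoin_singleton_eq_top hζ]; trivial
    induction htop using Algebra.adjoin_induction with
    | mem x hx => 
      rw [Set.mem_singleton_iff] at hx
      exact ⟨1, by rw [hx]; simp⟩
    | algebraMap r => exact ⟨r, by simp⟩
    | add x y _ _ h1 h2 =>
      obtain ⟨n, h1⟩ := h1
      obtain ⟨m, h2⟩ := h2
      exact ⟨n + m, by push_cast; convert dvd_add h1 h2 using 1; ring⟩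
    | mul x y _ _ h1 h2 =>
      obtain ⟨n, h1⟩ := h1
      obtain ⟨m, h2⟩ := h2
      refine ⟨n * m, by push_cast; convert dvd_add (h1.mul_right y) (h2.mul_left (n : 𝓞 K)) using 1; ring⟩
  · intro n h
    exact_mod_cast (IsCyclotomicExtension.Rat.zeta_sub_one_dvd_intCast_iff' 7 hζ).1 h
  · have hgen := hζ.integralPowerBasis_gen
    have hmin : minpoly ℤ hζ.toInteger = cyclotomic 7 ℤ := by
      rw [cyclotomic_eq_minpoly hζ (by norm_num), ← RingOfIntegers.minpoly_coe]
      rfl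
    have h0 : aeval (4 : ZMod 43) (minpoly ℤ hζ.integralPowerBasis.gen) = 0 := by
      rw [hgen, hmin, cyclotomic_prime]
      simp [Finset.sum_range_succ]
      reduce_mod_char
    have h1 := hζ.integralPowerBasis.lift_gen (4 : ZMod 43) h0
    generalize hζ.integralPowerBasis.lift (4 : ZMod 43) h0 = φ at h1
    rw [hgen] at h1
    exact ⟨φ.toRingHom, h1⟩

theorem setup7 : ∃ (R : Type) (_ : CommRing R) (_ : IsDomain R) (_ : IsPrincipalIdealRing R) (ζ : R),
    Setup R ζ := by
  have h0 := CyclotomicField.isCyclotomicExtension 7 ℚ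
  have : @IsCyclotomicExtension {7} ℚ (CyclotomicField 7 ℚ) _ _ DivisionRing.toRatAlgebra := by
    have e : (DivisionRing.toRatAlgebra : Algebra ℚ (CyclotomicField 7 ℚ)) = CyclotomicField.algebra 7 ℚ :=
      Subsingleton.elim _ _
    rw [e]
    exact h0
  have h := setup7' (CyclotomicField 7 ℚ)
  exact ⟨𝓞 (CyclotomicField 7 ℚ), inferInstance, inferInstance, pid7 _, h⟩

end

section

set_option linter.unusedSectionVars false
namespace Setup
variable {R : Type} [CommRing R] {ζ : R}

theorem z7 (S : Setup R ζ) : ζ ^ 7 = 1 := by linear_combination (ζ - 1) * S.hz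

theorem seven_dvd_L6 (S : Setup R ζ) : (7 : R) ∣ (ζ - 1) ^ 6 :=
  ⟨-(1 + 3*(ζ-1) + 5*(ζ-1)^2 + 5*(ζ-1)^3 + 3*(ζ-1)^4 + (ζ-1)^5), by linear_combination S.hz⟩

variable [IsDomain R]

theorem seven_eq (S : Setup R ζ) : ∃ e : Rˣ, (7 : R) = e * (ζ - 1) ^ 6 := by
  set w := -(1 + 3*(ζ-1) + 5*(ζ-1)^2 + 5*(ζ-1)^3 + 3*(ζ-1)^4 + (ζ-1)^5) with hw
  have h : (ζ - 1) ^ 6 = 7 * w := by rw [hw]; linear_combination S.hz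
  have h1 : w ∣ (ζ - 1) ^ 6 := ⟨7, by rw [h]; ring⟩
  obtain ⟨i, -, hi⟩ := (dvd_prime_pow S.prime _).1 h1
  have hu : IsUnit w := by
    rcases Nat.eq_zero_or_pos i with rfl | h0
    · rw [pow_zero] at hi; exact (associated_one_iff_isUnit).1 hi
    · exfalso
      apply S.prime.not_isUnit
      have h2 : ζ - 1 ∣ w := (dvd_pow_self _ h0.ne').trans hi.symm.dvd
      rw [isUnit_iff_dvd_one]
      have h3 : ζ - 1 ∣ w + 1 := ⟨-(3 + 5*(ζ-1) + 5*(ζ-1)^2 + 3*(ζ-1)^3 + (ζ-1)^4), by rw [hw]; ring⟩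
      have := dvd_sub h3 h2
      simpa using this
  obtain ⟨e, he⟩ := hu
  refine ⟨e⁻¹, ?_⟩
  rw [h, ← he, mul_comm (7 : R), Units.inv_mul_cancel_left]

theorem L6_dvd_seven (S : Setup R ζ) : (ζ - 1) ^ 6 ∣ (7 : R) := by
  obtain ⟨e, he⟩ := S.seven_eq
  exact ⟨e, by rw [he]; ring⟩

theorem int7 (S : Setup R ζ) {n : ℤ} (h : ζ - 1 ∣ (n : R)) : (7 : R) ∣ n := by
  obtain ⟨k, rfl⟩ := S.intdvd n h
  exact ⟨k, by push_cast; ring⟩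

theorem pow7 (S : Setup R ζ) (x : R) : ∃ n : ℤ, (7 : R) ∣ x ^ 7 - n := by
  obtain ⟨n, y, hy⟩ := S.res x
  obtain ⟨c, hc⟩ := S.seven_dvd_L6
  have hx : x = n + (ζ - 1) * y := by linear_combination hy
  refine ⟨n ^ 7, (n^6 * ((ζ - 1) * y) + 3 * n^5 * ((ζ - 1) * y)^2 + 5 * n^4 * ((ζ - 1) * y)^3
    + 5 * n^3 * ((ζ - 1) * y)^4 + 3 * n^2 * ((ζ - 1) * y)^5 + n * ((ζ - 1) * y)^6) + c * (ζ - 1) * y ^ 7, ?_⟩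
  rw [hx]; push_cast
  linear_combination (ζ - 1) * y ^ 7 * hc

theorem powform (L : R) (e : ℕ) (x A : R) (d : R) (h : x = 1 + d * L ^ (e+1) + L ^ (e + 2) * A) (j : ℕ) :
    ∃ B, x ^ j = 1 + j * d * L ^ (e+1) + L ^ (e + 2) * B := by
  induction j with
  | zero => exact ⟨0, by simp⟩
  | succ j ih =>
    obtain ⟨B, hB⟩ := ih
    refine ⟨A + B + L ^ e * (j * d * d) + j * d * L ^ (e+1) * A + B * d * L^(e+1) + L ^ (e+2) * A * B, ?_⟩
    rw [pow_succ, hB, h]; push_cast; ring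

theorem indep_step (S : Setup R ζ) (e : ℕ) (he : e ≤ 4) (x B : R) (d : ℤ) (n : ℤ)
    (hx : x = 1 + d * (ζ - 1) ^ (e+1) + (ζ - 1) ^ (e + 2) * B) (h : (7 : R) ∣ x - n) : 7 ∣ d := by
  have hL := S.prime
  have h6 : (ζ - 1) ^ 6 ∣ x - n := S.L6_dvd_seven.trans h
  have h1 : (7 : R) ∣ ((1 - n : ℤ) : R) := by
    apply S.int7
    have h2 : (ζ - 1) ∣ x - n := (dvd_pow_self _ (by norm_num)).trans h6
    have h3 : (ζ - 1) ∣ x - 1 := ⟨d * (ζ-1)^e + (ζ-1)^(e+1) * B, by rw [hx]; ring⟩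
    have := dvd_sub h2 h3
    convert this using 1; push_cast; ring
  have h2 : (ζ - 1) ^ 6 ∣ ((1 - n : ℤ) : R) := S.L6_dvd_seven.trans h1
  have h3 := dvd_sub h6 h2
  have h4 : (ζ - 1) ^ (e + 2) ∣ x - 1 := by
    refine (pow_dvd_pow _ (by omega : e + 2 ≤ 6)).trans ?_
    convert h3 using 1; push_cast; ring
  have h5 : (ζ - 1) ^ (e + 2) ∣ d * (ζ - 1) ^ (e+1) := by
    have := dvd_sub h4 (Dvd.intro B rfl : (ζ - 1) ^ (e + 2) ∣ (ζ - 1) ^ (e + 2) * B)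
    convert this using 1; rw [hx]; ring
  apply S.intdvd
  have h0 : (ζ - 1) ^ (e+1) ≠ 0 := pow_ne_zero _ hL.ne_zero
  rw [pow_succ, mul_comm] at h5
  exact (mul_dvd_mul_iff_right h0).1 h5

theorem z_unit (S : Setup R ζ) : ∃ z : Rˣ, (z : R) = ζ :=
  ⟨⟨ζ, ζ^6, by linear_combination S.z7, by linear_combination S.z7⟩, rfl⟩

theorem u1_unit (S : Setup R ζ) : ∃ u : Rˣ, (u : R) = ζ + ζ^6 := by
  have h : (ζ + ζ^6) * ((ζ^2+ζ^5)*(ζ^3+ζ^4)) = 1 := by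
    linear_combination (S.z7) * (2 + ζ^7 + ζ^2+ζ^3+ζ^4+ζ^5 + ζ + ζ^8) + S.hz
  exact ⟨⟨ζ + ζ^6, (ζ^2+ζ^5)*(ζ^3+ζ^4), h, by rw [mul_comm]; exact h⟩, rfl⟩
end Setup

end

section

set_option linter.unusedSectionVars false
namespace Setup
variable {R : Type} [CommRing R] {ζ : R} [IsDomain R]

theorem k2 (S : Setup R ζ) : ∃ A, 4 * (ζ + ζ^6) = 1 + 4 * (ζ - 1) ^ (1 + 1) + (ζ - 1) ^ (1 + 2) * A := by
  obtain ⟨c, hc⟩ := S.L6_dvd_seven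
  refine ⟨c * (ζ - 1)^3 + 4 * (1 + ζ + ζ^2 + ζ^3 + ζ^4 + ζ^5), ?_⟩
  linear_combination hc - 4 * (ζ - 2) * S.z7

theorem k3 (S : Setup R ζ) : ∃ A, (ζ + ζ^6)^8 - 3 * (ζ + ζ^6)^6 = 1 + 1 * (ζ - 1) ^ (3 + 1) + (ζ - 1) ^ (3 + 2) * A := by
  obtain ⟨c, hc⟩ := S.L6_dvd_seven
  have hy : ζ + ζ^6 = 2 + (ζ-1)^2 * ζ^6 := by linear_combination - (ζ - 2) * S.z7
  have h12 : ζ ^ 12 = 1 + (ζ - 1) * (1 + ζ + ζ^2 + ζ^3 + ζ^4 + ζ^5 + ζ^6 + ζ^7+ζ^8+ζ^9+ζ^10+ζ^11) := by ring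
  set y := (ζ-1)^2 * ζ^6 with hyd
  have hy2 : y ^ 2 = (ζ-1)^4 + (ζ-1)^5 * (1 + ζ + ζ^2 + ζ^3 + ζ^4 + ζ^5 + ζ^6 + ζ^7+ζ^8+ζ^9+ζ^10+ζ^11) := by
    rw [hyd]; linear_combination (ζ-1)^4 * h12
  have hy3 : y ^ 3 = (ζ-1)^5 * ((ζ-1) * ζ^18) := by rw [hyd]; ring
  refine ⟨(ζ-1) * c * (9 + 64 * y + 153 * y^2) + (1 + ζ + ζ^2 + ζ^3 + ζ^4 + ζ^5 + ζ^6 + ζ^7+ζ^8+ζ^9+ζ^10+ζ^11)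
    + ((ζ-1) * ζ^18) * (1312 + 940 * y + 412 * y^2 + 109 * y^3 + 16 * y^4 + y^5), ?_⟩
  rw [hy]
  linear_combination hc * (9 + 64 * y + 153 * y^2) + hy2 + hy3 * (1312 + 940 * y + 412 * y^2 + 109 * y^3 + 16 * y^4 + y^5)

theorem indep (S : Setup R ζ) (i j k : ℕ) (n : ℤ)
    (h : (7 : R) ∣ ζ^i * (ζ + ζ^6)^j * ((ζ + ζ^6)^8 - 3 * (ζ + ζ^6)^6)^k - n) : 7 ∣ i ∧ 7 ∣ j ∧ 7 ∣ k := by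
  obtain ⟨A, hA⟩ := S.k2
  obtain ⟨A', hA'⟩ := S.k3
  obtain ⟨B1, hB1⟩ := powform (ζ-1) 0 ζ 0 1 (by ring) i
  obtain ⟨B2, hB2⟩ := powform (ζ-1) 1 _ A 4 hA j
  obtain ⟨B3, hB3⟩ := powform (ζ-1) 3 _ A' 1 hA' k
  set u := ζ + ζ^6
  set v := u^8 - 3 * u^6
  have h1 : (7 : R) ∣ ζ^i * (4 * u)^j * v^k - ((4^j * n : ℤ) : R) := by
    obtain ⟨q, hq⟩ := h
    refine ⟨4^j * q, ?_⟩
    rw [mul_pow]; push_cast; linear_combination 4^j * hq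
  have hi : (7 : ℤ) ∣ i := by
    have e2 : ∃ C2, (4 * u) ^ j = 1 + (ζ-1)^2 * C2 := ⟨j * 4 + (ζ-1) * B2, by rw [hB2]; ring⟩
    have e3 : ∃ C3, v ^ k = 1 + (ζ-1)^4 * C3 := ⟨k * 1 + (ζ-1) * B3, by rw [hB3]; ring⟩
    obtain ⟨C2, e2⟩ := e2
    obtain ⟨C3, e3⟩ := e3
    refine S.indep_step 0 (by norm_num) _ (B1 + (1 + i * (ζ-1) + (ζ-1)^2 * B1) * (C2 + (ζ-1)^2 * C3 + (ζ-1)^4 * C2 * C3)) i _ ?_ h1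
    rw [hB1, e2, e3]; push_cast; ring
  obtain ⟨i', rfl⟩ := Int.natCast_dvd_natCast.1 hi
  rw [pow_mul, S.z7, one_pow, one_mul] at h1
  have hj : (7 : ℤ) ∣ 4 * j := by
    refine S.indep_step 1 (by norm_num) _ (B2 + (k * (ζ-1) + (ζ-1)^2*B3) * (1 + j * 4 * (ζ-1)^(1+1) + (ζ-1)^(1+2) * B2)) _ _ ?_ h1
    rw [hB2, hB3]; push_cast; ring
  have hj : 7 ∣ j := by omega
  have h7 : (7 : R) ∣ (4 * u)^j - 1 := by
    obtain ⟨j', rfl⟩ := hj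
    obtain ⟨m, hm⟩ := S.pow7 ((4*u)^j')
    rw [← pow_mul, mul_comm j'] at hm
    have h2 : ζ - 1 ∣ ((m - 1 : ℤ) : R) := by
      have a1 : ζ - 1 ∣ (4 * u)^(7*j') - m := ((dvd_pow_self _ (by norm_num : 6 ≠ 0)).trans S.L6_dvd_seven).trans hm
      have a2 : ζ - 1 ∣ (4 * u)^(7*j') - 1 := ⟨((7 * j' : ℕ) : R) * 4 * (ζ-1) + (ζ-1)^2 * B2, by rw [hB2]; ring⟩
      have := dvd_sub a2 a1
      convert this using 1; push_cast; ring
    have := dvd_add hm (S.int7 h2)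
    convert this using 1; push_cast; ring
  have hk : (7 : ℤ) ∣ k := by
    refine S.indep_step 3 (by norm_num) (v^k) B3 _ (4^j*n) ?_ ?_
    · rw [hB3]; push_cast; ring
    · have := dvd_sub h1 (h7.mul_right (v^k))
      convert this using 1; ring
  refine ⟨⟨i', rfl⟩, hj, by exact_mod_cast hk⟩

theorem v_unit (S : Setup R ζ) : ∃ u : Rˣ, (u : R) = (ζ + ζ^6)^8 - 3 * (ζ + ζ^6)^6 := by
  obtain ⟨u, hu⟩ := S.u1_unit
  have h : (ζ^3 + ζ^4) * ((ζ^2+ζ^5)*(ζ+ζ^6)) = 1 := by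
    linear_combination (S.z7) * (2 + ζ^7 + ζ^2+ζ^3+ζ^4+ζ^5 + ζ + ζ^8) + S.hz
  refine ⟨u^5 * ⟨ζ^3+ζ^4, _, h, by rw [mul_comm]; exact h⟩, ?_⟩
  have h3 : ζ^3+ζ^4 = (ζ+ζ^6)^3 - 3 * (ζ+ζ^6) := by
    linear_combination S.z7 * (-3 * ζ - 3 * ζ^6 - ζ^4 - ζ^11)
  push_cast
  rw [hu, h3]; ring

theorem kummer (S : Setup R ζ) (u : Rˣ) (n : ℤ) (h : (7 : R) ∣ u - n) : ∃ v : Rˣ, u = v ^ 7 := by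
  obtain ⟨z, hz⟩ := S.z_unit
  obtain ⟨a, ha⟩ := S.u1_unit
  obtain ⟨b, hb⟩ := S.v_unit
  obtain ⟨f, hf⟩ := S.ugen
  let Z : Fin 7 × Fin 7 × Fin 7 → Rˣ := fun p => z ^ (p.1 : ℕ) * a ^ (p.2.1 : ℕ) * b ^ (p.2.2 : ℕ)
  choose T V hTV using fun p => hf (Z p)
  have hinj : Function.Injective T := by
    intro p q hpq
    have e : ((Z p * Z q ^ 6 : Rˣ) : R) = ((f (T p) * V p * V q ^ 6 : Rˣ) : R) ^ 7 := by
      rw [hTV p, hTV q, hpq]; push_cast; ring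
    obtain ⟨n, hn⟩ := S.pow7 ((f (T p) * V p * V q ^ 6 : Rˣ) : R)
    rw [← e] at hn
    have := S.indep (p.1 + 6 * q.1) (p.2.1 + 6 * q.2.1) (p.2.2 + 6 * q.2.2) n (by
      convert hn using 2
      simp only [Z]; push_cast; rw [hz, ha, hb]; ring)
    obtain ⟨p1, p2, p3⟩ := p
    obtain ⟨q1, q2, q3⟩ := q
    simp only at this
    ext <;> simp only <;> omega
  have hsurj : Function.Surjective T :=
    ((Fintype.bijective_iff_injective_and_card T).2 ⟨hinj, by simp⟩).2
  obtain ⟨t, v, hu⟩ := hf u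
  obtain ⟨p, rfl⟩ := hsurj t
  have e1 : u = Z p * (v * (V p)⁻¹) ^ 7 := by
    have : f (T p) = Z p * (V p ^ 7)⁻¹ := by rw [eq_mul_inv_iff_mul_eq, ← hTV p]
    rw [hu, this, mul_pow, inv_pow]; 
    rw [mul_assoc, mul_comm (V p ^ 7)⁻¹]
  have e2 : Z p = u * (v⁻¹ * V p) ^ 7 := by
    rw [e1, mul_assoc, ← mul_pow, mul_mul_mul_comm]; simp
  obtain ⟨m, hm⟩ := S.pow7 ((v⁻¹ * V p : Rˣ) : R)
  have := S.indep p.1 p.2.1 p.2.2 (n * m) (by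
    have h1 : (7 : R) ∣ (Z p : R) - ((n * m : ℤ) : R) := by
      rw [e2]
      have := dvd_add (h.mul_right (((v⁻¹ * V p : Rˣ) : R)^7)) (hm.mul_left (n : R))
      convert this using 1; push_cast; ring
    convert h1 using 2
    simp only [Z]; push_cast; rw [hz, ha, hb])
  have hp : Z p = 1 := by
    have h1 : (p.1 : ℕ) = 0 := by have := p.1.2; omega
    have h2 : (p.2.1 : ℕ) = 0 := by have := p.2.1.2; omega
    have h3 : (p.2.2 : ℕ) = 0 := by have := p.2.2.2; omega
    simp [Z, h1, h2, h3]
  exact ⟨v * (V p)⁻¹, by rw [← one_mul (_ ^ 7), ← hp]; exact e1⟩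
end Setup

end

section

set_option linter.unusedSectionVars false
namespace Setup
variable {R : Type} [CommRing R] {ζ : R} [IsDomain R]

theorem zk_unit (S : Setup R ζ) (k : ℕ) (hk : ¬ 7 ∣ k) : ∃ e : Rˣ, ζ ^ k - 1 = e * (ζ - 1) := by
  have h1 : ζ - 1 ∣ ζ ^ k - 1 := by simpa using sub_dvd_pow_sub_pow ζ 1 k
  have h2 : ζ ^ k - 1 ∣ ζ - 1 := by
    have : ∃ m q, k * m = 7 * q + 1 := by
      have : k % 7 = 1 ∨ k % 7 = 2 ∨ k % 7 = 3 ∨ k % 7 = 4 ∨ k % 7 = 5 ∨ k % 7 = 6 := by omega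
      rcases this with h | h | h | h | h | h
      · exact ⟨1, k / 7, by omega⟩
      · exact ⟨4, k * 4 / 7, by omega⟩
      · exact ⟨5, k * 5 / 7, by omega⟩
      · exact ⟨2, k * 2 / 7, by omega⟩
      · exact ⟨3, k * 3 / 7, by omega⟩
      · exact ⟨6, k * 6 / 7, by omega⟩
    obtain ⟨m, q, hm⟩ := this
    have h3 := sub_dvd_pow_sub_pow (ζ ^ k) 1 m
    rwa [← pow_mul, hm, pow_succ, pow_mul, S.z7, one_pow, one_mul, one_pow] at h3
  obtain ⟨e, he⟩ := associated_of_dvd_dvd h1 h2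
  exact ⟨e, by rw [← he]; ring⟩

theorem zdiff (S : Setup R ζ) (i j : ℕ) (hi : i < 7) (hj : j < 7) (hij : i ≠ j) :
    ∃ e : Rˣ, ζ ^ i - ζ ^ j = e * (ζ - 1) := by
  obtain ⟨z, hz⟩ := S.z_unit
  rcases lt_or_gt_of_ne hij with h | h
  · obtain ⟨e, he⟩ := S.zk_unit (j - i) (by omega)
    refine ⟨- z ^ i * e, ?_⟩
    push_cast
    rw [mul_assoc, ← he, hz]
    obtain ⟨k, rfl⟩ : ∃ k, j = i + k := ⟨j - i, by omega⟩
    rw [Nat.add_sub_cancel_left]; ring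
  · obtain ⟨e, he⟩ := S.zk_unit (i - j) (by omega)
    refine ⟨z ^ j * e, ?_⟩
    push_cast
    rw [mul_assoc, ← he, hz]
    obtain ⟨k, rfl⟩ : ∃ k, i = j + k := ⟨i - j, by omega⟩
    rw [Nat.add_sub_cancel_left]; ring

theorem prodform (S : Setup R ζ) (X Y : R) : X ^ 7 - Y ^ 7 = ∏ i : Fin 7, (X - ζ ^ (i : ℕ) * Y) := by
  have h7 := S.z7
  have hz := S.hz
  have e1 : (ζ + ζ^6) + (ζ^2+ζ^5) + (ζ^3+ζ^4) = -1 := by linear_combination hz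
  have e2 : (ζ + ζ^6) * (ζ^2+ζ^5) + (ζ + ζ^6) * (ζ^3+ζ^4) + (ζ^2+ζ^5)*(ζ^3+ζ^4) = -2 := by
    linear_combination 2 * hz + (2 * ζ + 2 * ζ^2 + ζ^3 + ζ^4) * h7
  have e3 : (ζ + ζ^6) * ((ζ^2+ζ^5)*(ζ^3+ζ^4)) = 1 := by
    linear_combination h7 * (2 + ζ^7 + ζ^2+ζ^3+ζ^4+ζ^5 + ζ + ζ^8) + hz
  have q1 : (X - ζ * Y) * (X - ζ^6 * Y) = X^2 - (ζ + ζ^6) * (X * Y) + Y^2 := by linear_combination Y^2 * h7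
  have q2 : (X - ζ^2 * Y) * (X - ζ^5 * Y) = X^2 - (ζ^2 + ζ^5) * (X * Y) + Y^2 := by linear_combination Y^2 * h7
  have q3 : (X - ζ^3 * Y) * (X - ζ^4 * Y) = X^2 - (ζ^3 + ζ^4) * (X * Y) + Y^2 := by linear_combination Y^2 * h7
  have : ∏ i : Fin 7, (X - ζ ^ (i : ℕ) * Y) = (X - Y) * ((X - ζ * Y) * (X - ζ^6 * Y)) * ((X - ζ^2 * Y) * (X - ζ^5 * Y)) * ((X - ζ^3 * Y) * (X - ζ^4 * Y)) := by
    simp only [Fin.prod_univ_succ, Fin.prod_univ_zero]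
    simp
    ring
  rw [this, q1, q2, q3]
  generalize ζ + ζ^6 = c1 at *
  generalize ζ^2 + ζ^5 = c2 at *
  generalize ζ^3 + ζ^4 = c3 at *
  linear_combination (X - Y) * ((X^2+Y^2)^2 * (X*Y) * e1 - (X^2+Y^2) * (X*Y)^2 * e2 + (X*Y)^3 * e3)

theorem unit_quot (S : Setup R ζ) (η : Rˣ) (a b : R) (h : (7 : R) ∣ η * a ^ 7 - b ^ 7) (ha : ¬ ζ - 1 ∣ a) :
    ∃ v : Rˣ, η = v ^ 7 := by
  obtain ⟨n, hn⟩ := S.pow7 a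
  obtain ⟨m, hm⟩ := S.pow7 b
  have h7 : ¬ (7 : ℤ) ∣ n := by
    rintro ⟨k, rfl⟩
    apply ha
    have h1 : (7 : R) ∣ a ^ 7 := by
      have := dvd_add hn (Dvd.intro (k : R) rfl : (7 : R) ∣ 7 * k)
      convert this using 1; push_cast; ring
    exact S.prime.dvd_of_dvd_pow (((dvd_pow_self _ (by norm_num : 6 ≠ 0)).trans S.L6_dvd_seven).trans h1)
  have hc : IsCoprime n 7 := by
    rw [isCoprime_comm]
    exact (Irreducible.coprime_iff_not_dvd (Int.prime_iff_natAbs_prime.2 (by norm_num)).irreducible).2 h7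
  obtain ⟨p, q, hpq⟩ := hc
  apply S.kummer η (p * m)
  obtain ⟨A, hA⟩ := h
  obtain ⟨B, hB⟩ := hn
  obtain ⟨C, hC⟩ := hm
  have hpq' : (p : R) * n + q * 7 = 1 := by
    have := congrArg (Int.cast : ℤ → R) hpq
    push_cast at this; exact this
  refine ⟨p * A - p * η * B + p * C + η * q, ?_⟩
  push_cast
  linear_combination p * hA - p * η * hB + p * hC - (η : R) * hpq'
end Setup

variable {R : Type} [CommRing R] [IsDomain R] [IsPrincipalIdealRing R]

theorem split7 (d : R) (hd : d ≠ 0) : ∀ F F' w : R, IsCoprime F F' → F * F' = d * w ^ 7 →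
    ∃ d' w', F = d' * w' ^ 7 ∧ d' ∣ d := by
  induction d using UniqueFactorizationMonoid.induction_on_prime with
  | h₁ => exact absurd rfl hd
  | h₂ u hu =>
    intro F F' w hc h
    obtain ⟨u, rfl⟩ := hu
    have h1 : F * (F' * ((u⁻¹ : Rˣ) : R)) = w ^ 7 := by
      rw [← mul_assoc, h, mul_comm (u : R), mul_assoc, Units.mul_inv, mul_one]
    have hc' : IsCoprime F (F' * ((u⁻¹ : Rˣ) : R)) := hc.mul_right (isCoprime_one_right.of_isCoprime_of_dvd_right (Units.isUnit _).dvd)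
    obtain ⟨w', e, hw⟩ := exists_associated_pow_of_mul_eq_pow' hc' h1
    exact ⟨e, w', by rw [← hw]; ring, e.isUnit.dvd⟩
  | h₃ d p hd0 hp ih =>
    intro F F' w hc h
    have h1 : p ∣ F * F' := by rw [h]; exact ⟨d * w ^ 7, by ring⟩
    rcases hp.dvd_or_dvd h1 with ⟨F1, rfl⟩ | ⟨F1, rfl⟩
    · obtain ⟨d', w', h2, h3⟩ := ih hd0 F1 F' w hc.of_mul_left_right (mul_left_cancel₀ hp.ne_zero (by linear_combination h))
      exact ⟨p * d', w', by rw [h2]; ring, mul_dvd_mul_left p h3⟩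
    · obtain ⟨d', w', h2, h3⟩ := ih hd0 F F1 w hc.of_mul_right_right (mul_left_cancel₀ hp.ne_zero (by linear_combination h))
      exact ⟨d', w', h2, h3.mul_left p⟩

theorem split7u (d : R) (hd : d ≠ 0) (M : R) (F F' w : R) (hc : IsCoprime F F') (h : F * F' = d * w ^ 7)
    (hM : d ∣ M) (hF : IsCoprime F M) : ∃ (e : Rˣ) (w' : R), F = e * w' ^ 7 := by
  obtain ⟨d', w', h1, h2⟩ := split7 d hd F F' w hc h
  have hu : IsUnit d' := (hF.isUnit_of_dvd' (Dvd.intro _ h1.symm) (h2.trans hM))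
  obtain ⟨e, rfl⟩ := hu
  exact ⟨e, w', h1⟩

end

section

set_option linter.unusedSectionVars false
theorem dvd7 (n : ℤ) : (7 : ℤ) ∣ n ↔ (n : ZMod 7) = 0 := (ZMod.intCast_zmod_eq_zero_iff_dvd n 7).symm

namespace Setup
variable {R : Type} [CommRing R] {ζ : R} [IsDomain R] [IsPrincipalIdealRing R]

theorem L_ndvd30 (S : Setup R ζ) (N : ℕ) : ¬ ζ - 1 ∣ (30 : R) ^ N := by
  intro h
  have := S.prime.dvd_of_dvd_pow h
  have := S.intdvd 30 (by exact_mod_cast this)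
  norm_num at this

theorem rotate (S : Setup R ζ) (X Y : R) (hc : IsCoprime X Y) (h : ζ - 1 ∣ X ^ 7 - Y ^ 7) :
    ∃ j : ℕ, (ζ - 1) ^ 2 ∣ X - ζ ^ j * Y := by
  obtain ⟨x0, X', hX⟩ := S.res X
  obtain ⟨y0, Y', hY⟩ := S.res Y
  obtain ⟨x1, X'', hX'⟩ := S.res X'
  obtain ⟨y1, Y'', hY'⟩ := S.res Y'
  have h1 : (7 : ℤ) ∣ x0 ^ 7 - y0 ^ 7 := by
    apply S.intdvd
    have a1 : ζ - 1 ∣ X ^ 7 - x0 ^ 7 := (Dvd.intro _ hX.symm).trans (sub_dvd_pow_sub_pow _ _ _)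
    have a2 : ζ - 1 ∣ Y ^ 7 - y0 ^ 7 := (Dvd.intro _ hY.symm).trans (sub_dvd_pow_sub_pow _ _ _)
    have := dvd_add (dvd_sub h a1) a2
    convert this using 1; push_cast; ring
  have h2 : (7 : ℤ) ∣ x0 - y0 := by
    rw [dvd7] at h1 ⊢
    push_cast at h1 ⊢
    generalize (x0 : ZMod 7) = a at *
    generalize (y0 : ZMod 7) = b at *
    revert a b; decide
  have h3 : ¬ (7 : ℤ) ∣ y0 := by
    intro h4
    have h5 : (7 : ℤ) ∣ x0 := by omega
    have L7 : ζ - 1 ∣ (7 : R) := (dvd_pow_self _ (by norm_num : 6 ≠ 0)).trans S.L6_dvd_seven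
    have b1 : ζ - 1 ∣ Y := by
      obtain ⟨k, rfl⟩ := h4
      have := dvd_add (Dvd.intro _ hY.symm) (L7.mul_right (k : R))
      convert this using 1; push_cast; ring
    have b2 : ζ - 1 ∣ X := by
      obtain ⟨k, rfl⟩ := h5
      have := dvd_add (Dvd.intro _ hX.symm) (L7.mul_right (k : R))
      convert this using 1; push_cast; ring
    exact S.prime.not_isUnit (hc.isUnit_of_dvd' b2 b1)
  have h4 : ∃ j : ℕ, (7 : ℤ) ∣ x1 - y1 - j * y0 := by
    have : ∃ j : Fin 7, ((x1 - y1 : ℤ) : ZMod 7) - (j : ℕ) * (y0 : ZMod 7) = 0 := by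
      rw [dvd7] at h3
      push_cast at h3
      generalize ((x1 - y1 : ℤ) : ZMod 7) = a at *
      generalize (y0 : ZMod 7) = b at *
      revert a b; decide
    obtain ⟨j, hj⟩ := this
    refine ⟨j, ?_⟩
    rw [dvd7]
    push_cast at hj ⊢; exact hj
  obtain ⟨j, hj⟩ := h4
  refine ⟨j, ?_⟩
  have L27 : (ζ - 1) ^ 2 ∣ (7 : R) := (pow_dvd_pow _ (by norm_num : 2 ≤ 6)).trans S.L6_dvd_seven
  obtain ⟨c, hc'⟩ := L27
  obtain ⟨B, hB⟩ := powform (ζ-1) 0 ζ 0 1 (by ring) j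
  obtain ⟨p, hp⟩ := h2
  obtain ⟨q, hq⟩ := hj
  have hp' : (x0 : R) - y0 = 7 * p := by
    have := congrArg (Int.cast : ℤ → R) hp
    push_cast at this; exact this
  have hq' : (x1 : R) - y1 - j * y0 = 7 * q := by
    have := congrArg (Int.cast : ℤ → R) hq
    push_cast at this; exact this
  have eX : X = x0 + (ζ-1) * (x1 + (ζ-1) * X'') := by linear_combination hX + (ζ-1) * hX'
  have eY : Y = y0 + (ζ-1) * (y1 + (ζ-1) * Y'') := by linear_combination hY + (ζ-1) * hY'
  refine ⟨c * p + (ζ-1) * c * q + X'' - Y'' - B * Y - j * (y1 + (ζ-1) * Y''), ?_⟩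
  rw [hB]
  linear_combination eX - (1 + j * (ζ-1)) * eY + hp' + (ζ-1) * hq' + p * hc' + (ζ-1) * q * hc'

theorem descent_step (S : Setup R ζ) (k : ℕ)
    (ih : ∀ X Y d w N, IsCoprime X Y → X ^ 7 - Y ^ 7 = d * w ^ 7 → d ∣ (30 : R) ^ N → w ≠ 0 → ζ - 1 ∣ w →
      (ζ - 1) ^ (k + 1) ∣ w)
    (X Y d w : R) (N : ℕ) (hc : IsCoprime X Y) (h : X ^ 7 - Y ^ 7 = d * w ^ 7) (hd : d ∣ (30 : R) ^ N)
    (hw : w ≠ 0) (hLw : ζ - 1 ∣ w) (hXY : (ζ - 1) ^ 2 ∣ X - Y) : (ζ - 1) ^ (k + 2) ∣ w := by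
  have hL := S.prime
  have hL0 := hL.ne_zero
  have hLd : ¬ ζ - 1 ∣ d := fun h => S.L_ndvd30 N (h.trans hd)
  have hd0 : d ≠ 0 := by rintro rfl; exact hLd (dvd_zero _)
  obtain ⟨h0, hh0⟩ := hXY
  obtain ⟨w1, rfl⟩ := hLw
  have hw1 : w1 ≠ 0 := right_ne_zero_of_mul hw
  choose! e he using fun i : Fin 7 => (show ζ - 1 ∣ ζ ^ (i : ℕ) - 1 by simpa using sub_dvd_pow_sub_pow ζ 1 (i : ℕ))
  have hediff : ∀ i j : Fin 7, i ≠ j → ∃ u : Rˣ, e i - e j = u := by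
    intro i j hij
    obtain ⟨u, hu⟩ := S.zdiff i j i.2 j.2 (fun h => hij (Fin.ext h))
    refine ⟨u, mul_left_cancel₀ hL0 ?_⟩
    linear_combination hu - he i + he j
  have he0 : e 0 = 0 := by
    have := he 0
    simp only [Fin.val_zero, pow_zero, sub_self] at this
    exact (mul_eq_zero.1 this.symm).resolve_left hL0
  set h' := (ζ - 1) * h0 with hh'
  let g : Fin 7 → R := fun i => h' - e i * Y
  have hg : ∀ i, (ζ - 1) * g i = X - ζ ^ (i : ℕ) * Y := by
    intro i; simp only [g]; rw [hh']; linear_combination Y * he i - hh0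
  have hg0 : g 0 = h' := by simp [g, he0]
  have hprod : ∏ i, g i = d * w1 ^ 7 := by
    apply mul_left_cancel₀ (pow_ne_zero 7 hL0)
    have : (ζ - 1) ^ 7 * ∏ i, g i = ∏ i, ((ζ - 1) * g i) := by
      rw [Finset.prod_mul_distrib]; simp
    rw [this]
    simp_rw [hg]
    rw [← S.prodform, h]; ring
  have hcop : Pairwise fun i j => IsCoprime (g i) (g j) := by
    intro i j hij
    obtain ⟨u, hu⟩ := hediff i j hij
    obtain ⟨a, b, hab⟩ := hc
    have hY : Y = ((u⁻¹ : Rˣ) : R) * (g j - g i) := by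
      have : g j - g i = u * Y := by simp only [g]; rw [← hu]; ring
      rw [this, Units.inv_mul_cancel_left]
    refine ⟨a * (ζ - 1) - (a * ζ ^ (i : ℕ) + b) * ((u⁻¹ : Rˣ) : R), (a * ζ ^ (i : ℕ) + b) * ((u⁻¹ : Rˣ) : R), ?_⟩
    linear_combination hab + a * hg i - (a * ζ ^ (i : ℕ) + b) * hY
  have hco : ∀ i, IsCoprime (g i) (∏ j ∈ Finset.univ.erase i, g j) := fun i =>
    IsCoprime.prod_right fun j hj => hcop (Finset.ne_of_mem_erase hj).symm
  have hpr : ∀ i, g i * (∏ j ∈ Finset.univ.erase i, g j) = d * w1 ^ 7 := fun i => by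
    rw [Finset.mul_prod_erase _ _ (Finset.mem_univ i), hprod]
  obtain ⟨d0, w0, hgw, hd0d⟩ := split7 d hd0 _ _ _ (hco 0) (hpr 0)
  have hg0ne : g 0 ≠ 0 := by
    have : g 0 * (∏ j ∈ Finset.univ.erase 0, g j) ≠ 0 := by
      rw [hpr]; exact mul_ne_zero hd0 (pow_ne_zero _ hw1)
    exact left_ne_zero_of_mul this
  have hw0 : w0 ≠ 0 := by rintro rfl; apply hg0ne; rw [hgw]; simp
  have hLg0 : ζ - 1 ∣ g 0 := by rw [hg0, hh']; exact Dvd.intro _ rfl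
  have hLw0 : ζ - 1 ∣ w0 := by
    rw [hgw] at hLg0
    rcases hL.dvd_or_dvd hLg0 with h | h
    · exact absurd (h.trans hd0d) hLd
    · exact hL.dvd_of_dvd_pow h
  have clean2 : ∃ i j : Fin 6, i ≠ j ∧ IsCoprime (g i.succ) 30 ∧ IsCoprime (g j.succ) 30 := by
    obtain ⟨i, hi⟩ := S.clean (fun i => g i.castSucc.succ) (fun a b hab => hcop (by simpa using hab))
    obtain ⟨j, hj⟩ := S.clean (fun j => g (i.castSucc.succAbove j).succ) (fun a b hab => hcop (by simpa using hab))
    exact ⟨_, _, (Fin.succAbove_ne _ _).symm, hi, hj⟩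
  obtain ⟨i, j, hij, hi, hj⟩ := clean2
  obtain ⟨εi, si, hsi⟩ := split7u d hd0 _ _ _ _ (hco i.succ) (hpr i.succ) hd hi.pow_right
  obtain ⟨εj, sj, hsj⟩ := split7u d hd0 _ _ _ _ (hco j.succ) (hpr j.succ) hd hj.pow_right
  have hcs : IsCoprime si sj := by
    have h1 := hcop (show i.succ ≠ j.succ by simpa using hij)
    refine (h1.of_isCoprime_of_dvd_left ?_).of_isCoprime_of_dvd_right ?_
    · rw [hsi]; exact (dvd_pow_self _ (by norm_num)).mul_left _
    · rw [hsj]; exact (dvd_pow_self _ (by norm_num)).mul_left _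
  have hLsi : ¬ ζ - 1 ∣ si := by
    intro h1
    have h2 : ζ - 1 ∣ g i.succ := by rw [hsi]; exact (h1.trans (dvd_pow_self _ (by norm_num))).mul_left _
    exact hL.not_isUnit ((hcop (Fin.succ_ne_zero i)).isUnit_of_dvd' h2 hLg0)
  obtain ⟨ui, hui⟩ := hediff i.succ 0 (Fin.succ_ne_zero i)
  obtain ⟨uj, huj⟩ := hediff j.succ 0 (Fin.succ_ne_zero j)
  obtain ⟨uij, huij⟩ := hediff j.succ i.succ (by simpa using hij.symm)
  rw [he0, sub_zero] at hui huj
  have key : (uj : R) * (εi * si ^ 7) - ui * (εj * sj ^ 7) = uij * (d0 * w0 ^ 7) := by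
    rw [← hsi, ← hsj, ← hgw, hg0]
    simp only [g]
    rw [← huij, hui, huj]; ring
  have key2 : ((uj * εi * (ui * εj)⁻¹ : Rˣ) : R) * si ^ 7 - sj ^ 7 = (((ui * εj)⁻¹ * uij : Rˣ) : R) * d0 * w0 ^ 7 := by
    have : sj ^ 7 = (((ui * εj)⁻¹ : Rˣ) : R) * (((ui * εj) : Rˣ) * sj ^ 7) := by
      rw [Units.inv_mul_cancel_left]
    rw [this]; push_cast
    linear_combination (((ui * εj)⁻¹ : Rˣ) : R) * key
  obtain ⟨v, hv⟩ := S.unit_quot (uj * εi * (ui * εj)⁻¹) si sj (by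
    rw [key2]
    refine Dvd.dvd.mul_left ?_ _
    exact S.seven_dvd_L6.trans ((pow_dvd_pow_of_dvd hLw0 6).trans (pow_dvd_pow _ (by norm_num)))) hLsi
  rw [hv] at key2
  have := ih (v * si) sj ((((ui * εj)⁻¹ * uij : Rˣ) : R) * d0) w0 N
    ((isCoprime_mul_unit_left_left v.isUnit si sj).2 hcs)
    (by rw [← key2]; push_cast; ring)
    ((Units.mul_left_dvd).2 (hd0d.trans hd)) hw0 hLw0
  have h7 : ((ζ - 1) ^ (k+1)) ^ 7 ∣ w1 ^ 7 := by
    have h1 : ((ζ - 1) ^ (k+1)) ^ 7 ∣ d * w1 ^ 7 := by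
      rw [← hpr 0, hgw]
      exact ((pow_dvd_pow_of_dvd this 7).mul_left d0).mul_right _
    rw [← pow_mul] at h1 ⊢
    exact hL.pow_dvd_of_dvd_mul_left _ hLd h1
  have h8 := (IsIntegrallyClosed.pow_dvd_pow_iff (by norm_num)).1 h7
  have := mul_dvd_mul_left (ζ - 1) h8
  convert this using 1; ring

theorem descent (S : Setup R ζ) (X Y d w : R) (N : ℕ) (hc : IsCoprime X Y) (h : X ^ 7 - Y ^ 7 = d * w ^ 7) (hd : d ∣ (30 : R) ^ N)
    (hw : w ≠ 0) (hLw : ζ - 1 ∣ w) : False := by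
  have main : ∀ k : ℕ, ∀ X Y d w N, IsCoprime X Y → X ^ 7 - Y ^ 7 = d * w ^ 7 → d ∣ (30 : R) ^ N → w ≠ 0 → ζ - 1 ∣ w →
      (ζ - 1) ^ (k + 1) ∣ w := by
    intro k
    induction k with
    | zero => intro X Y d w N _ _ _ _ h; simpa using h
    | succ k ih =>
      intro X Y d w N hc h hd hw hLw
      obtain ⟨j, hj⟩ := S.rotate X Y hc (by rw [h]; exact (hLw.trans (dvd_pow_self _ (by norm_num))).mul_left _)
      refine S.descent_step k ih X (ζ ^ j * Y) d w N ?_ ?_ hd hw hLw hj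
      · obtain ⟨z, hz⟩ := S.z_unit
        rw [← hz]
        exact (isCoprime_mul_unit_left_right (z.isUnit.pow j) X Y).2 hc
      · rw [mul_pow, ← pow_mul, mul_comm j, pow_mul, S.z7, one_pow, one_mul, h]
  have hf : FiniteMultiplicity (ζ - 1) w := FiniteMultiplicity.of_not_isUnit S.prime.not_isUnit hw
  obtain ⟨n, hn⟩ := hf
  exact hn (main n X Y d w N hc h hd hw hLw)
end Setup

end

section

set_option linter.unusedSectionVars false
namespace Setup
variable {R : Type} [CommRing R] {ζ : R} [IsDomain R] [IsPrincipalIdealRing R]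

theorem cast0 (S : Setup R ζ) (k : ℤ) (hk : (k : R) = 0) : k = 0 := by
  have h7 : (7 : R) ≠ 0 := by
    obtain ⟨e, he⟩ := S.seven_eq
    rw [he]; exact mul_ne_zero e.ne_zero (pow_ne_zero _ S.prime.ne_zero)
  have : ∀ n : ℕ, ∀ k : ℤ, (k : R) = 0 → (7 : ℤ) ^ n ∣ k := by
    intro n
    induction n with
    | zero => intro k _; simp
    | succ n ih =>
      intro k hk
      obtain ⟨k', rfl⟩ := S.intdvd k (by rw [hk]; exact dvd_zero _)
      push_cast at hk
      have := ih k' ((mul_eq_zero.1 hk).resolve_left h7)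
      rw [pow_succ, mul_comm]
      exact mul_dvd_mul_left 7 this
  by_contra h0
  obtain ⟨n, hn⟩ := FiniteMultiplicity.of_not_isUnit (a := (7 : ℤ)) (by decide) h0
  exact hn (this _ k hk)

structure ABC (ζ A B C : R) : Prop where
  hA : A = ζ + ζ^6
  hB : B = ζ^2 + ζ^5
  hC : C = ζ^3 + ζ^4
  e1 : A + B + C = -1
  e3 : A * B * C = 1
  sA : A ^ 2 = 2 + B
  sB : B ^ 2 = 2 + C
  sC : C ^ 2 = 2 + A
  AB : A * B = A + C
  BC : B * C = A + B
  CA : C * A = B + C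

theorem abc (S : Setup R ζ) : ∃ A B C, ABC ζ A B C := by
  have h7 := S.z7
  have hz := S.hz
  refine ⟨_, _, _, rfl, rfl, rfl, ?_, ?_, ?_, ?_, ?_, ?_, ?_, ?_⟩
  · linear_combination hz
  · linear_combination h7 * (2 + ζ^7 + ζ^2+ζ^3+ζ^4+ζ^5 + ζ + ζ^8) + hz
  · linear_combination h7 * (2 + ζ^5)
  · linear_combination h7 * (2 + ζ^3)
  · linear_combination h7 * (2 + ζ)
  · linear_combination h7 * (ζ + ζ^4)
  · linear_combination h7 * (ζ + ζ^2)
  · linear_combination h7 * (ζ^2 + ζ^3)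

structure LL (ζ l1 l2 l3 : R) (u1 u2 u3 d12 d13 d23 : Rˣ) : Prop where
  h1 : l1 = u1 * (ζ - 1)^2
  h2 : l2 = u2 * (ζ - 1)^2
  h3 : l3 = u3 * (ζ - 1)^2
  h12 : l1 - l2 = d12 * (ζ - 1)^2
  h13 : l1 - l3 = d13 * (ζ - 1)^2
  h23 : l2 - l3 = d23 * (ζ - 1)^2
  p : ∀ m n : R, (n - l1 * m) * (n - l2 * m) * (n - l3 * m) = n^3 - 7*n^2*m + 14*n*m^2 - 7*m^3

theorem ll (S : Setup R ζ) {A B C : R} (h : ABC ζ A B C) :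
    ∃ u1 u2 u3 d12 d13 d23 : Rˣ, LL ζ (2 - A) (2 - B) (2 - C) u1 u2 u3 d12 d13 d23 := by
  obtain ⟨z, hz⟩ := S.z_unit
  have h7 := S.z7
  obtain ⟨a2, ha2⟩ := S.zk_unit 2 (by norm_num)
  obtain ⟨a3, ha3⟩ := S.zk_unit 3 (by norm_num)
  obtain ⟨a4, ha4⟩ := S.zk_unit 4 (by norm_num)
  refine ⟨-z^6, -(a2^2 * z^5), -(a3^2*z^4), -(z * a4), -(z * a2 * a3), -(z^2*a2), ?_, ?_, ?_, ?_, ?_, ?_, ?_⟩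
  · push_cast; rw [h.hA, hz]; linear_combination (ζ-2) * h7
  · push_cast; rw [h.hB, hz]
    linear_combination (ζ^2-2) * h7 - ζ^5 * (ζ^2 - 1 + a2 * (ζ - 1)) * ha2
  · push_cast; rw [h.hC, hz]
    linear_combination (ζ^3-2) * h7 - ζ^4 * (ζ^3 - 1 + a3 * (ζ - 1)) * ha3
  · push_cast; rw [h.hA, h.hB, hz]
    linear_combination -ζ * (ζ-1) * ha4
  · push_cast; rw [h.hA, h.hC, hz]
    linear_combination -ζ * (ζ^2-1) * ha3 - ζ * a3 * (ζ-1) * ha2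
  · push_cast; rw [h.hB, h.hC, hz]
    linear_combination -ζ^2 * (ζ-1) * ha2
  · intro m n
    have e2 : A * B + B * C + C * A = -2 := by linear_combination h.AB + h.BC + h.CA + 2 * h.e1
    linear_combination (n^2*m - 4 * n * m^2 + 4 * m^3) * h.e1 + (n * m^2 - 2 * m^3) * e2 + m^3 * h.e3

theorem LL_prod {l1 l2 l3 : R} {u1 u2 u3 d12 d13 d23 : Rˣ} (h : LL ζ l1 l2 l3 u1 u2 u3 d12 d13 d23) : l1 * l2 * l3 = 7 := by
  have := h.p 1 0
  linear_combination -this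

theorem lemE (S : Setup R ζ) (m n e s t : ℤ) (N : ℕ) (hn : n ≠ 0) (hc : IsCoprime m n) (h7 : 7 ∣ n)
    (hs : 49 * n = e * s ^ 14) (he : e ∣ 30 ^ N)
    (h : 7*m^3 - 14*m^2*n + 7*m*n^2 - n^3 = 7*t^7) : False := by
  obtain ⟨A, B, C, habc⟩ := S.abc
  obtain ⟨u1, u2, u3, d12, d13, d23, hl⟩ := S.ll habc
  have hlp := LL_prod hl
  have hR0 := S.cast0
  set l1 := 2 - A
  set l2 := 2 - B
  set l3 := 2 - C
  have hL := S.prime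
  have hL0 := hL.ne_zero
  obtain ⟨n', rfl⟩ := h7
  obtain ⟨ε, hε⟩ := S.seven_eq
  obtain ⟨k, hk⟩ : ∃ k : R, k = ε * (ζ-1)^4 * n' := ⟨_, rfl⟩
  have hnk : ((7 * n' : ℤ) : R) = (ζ - 1)^2 * k := by rw [hk]; push_cast; linear_combination n' * hε
  have hLk : ζ - 1 ∣ k := ⟨ε * (ζ-1)^3 * n', by rw [hk]; ring⟩
  have hmk : IsCoprime (m : R) k := by
    have : IsCoprime (m : R) ((7 * n' : ℤ) : R) := by simpa using hc.map (Int.castRingHom R)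
    rw [hnk] at this; exact this.of_mul_right_right
  let b : Rˣ → R := fun u => m - ((u⁻¹ : Rˣ) : R) * k
  have hbl : ∀ (u : Rˣ) (l : R), l = u * (ζ-1)^2 → ((7 * n' : ℤ) : R) - l * m = - (l * b u) := by
    intro u l hu
    simp only [b]; rw [hnk, hu]
    have := u.mul_inv
    linear_combination - (ζ-1)^2 * k * this
  have hp := hl.p m ((7 * n' : ℤ) : R)
  rw [hbl u1 l1 hl.h1, hbl u2 l2 hl.h2, hbl u3 l3 hl.h3] at hp
  have h70 : (7 : R) ≠ 0 := by
    intro h0; have := hR0 7 (by exact_mod_cast h0); norm_num at this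
  have hbt : b u1 * b u2 * b u3 = t ^ 7 := by
    apply mul_left_cancel₀ h70
    have h' := congrArg (Int.cast : ℤ → R) h
    push_cast at h' hp
    linear_combination - hp + h' - (b u1 * b u2 * b u3) * hlp
  have hbk : ∀ u, IsCoprime (b u) k := by
    intro u
    have : b u = m + k * (-((u⁻¹ : Rˣ) : R)) := by simp only [b]; ring
    rw [this]
    exact (IsCoprime.add_mul_left_left hmk _)
  have hdiff : ∀ (u u' d : Rˣ), u * (ζ-1)^2 - u' * (ζ-1)^2 = d * (ζ-1)^2 → b u - b u' = ((d * u⁻¹ * u'⁻¹ : Rˣ) : R) * k := by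
    intro u u' d h
    have h1 : (u : R) - u' = d := by
      apply mul_right_cancel₀ (pow_ne_zero 2 hL0)
      linear_combination h
    simp only [b]; push_cast
    rw [← h1]
    have := u.mul_inv
    have := u'.mul_inv
    linear_combination - k * ((u'⁻¹ : Rˣ) : R) * u.mul_inv + k * ((u⁻¹ : Rˣ) : R) * u'.mul_inv
  have hcop : ∀ (u u' d : Rˣ), u * (ζ-1)^2 - u' * (ζ-1)^2 = d * (ζ-1)^2 → IsCoprime (b u) (b u') := by
    intro u u' d h
    have h1 := hdiff u u' d h
    have h2 : b u' = -(((d * u⁻¹ * u'⁻¹ : Rˣ) : R) * k) + b u * 1 := by linear_combination - h1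
    rw [h2]
    refine IsCoprime.add_mul_left_right ?_ 1
    rw [IsCoprime.neg_right_iff]
    exact (isCoprime_mul_unit_left_right (Units.isUnit _) _ _).2 (hbk u)
  have c12 := hcop u1 u2 d12 (by rw [← hl.h1, ← hl.h2, hl.h12])
  have c13 := hcop u1 u3 d13 (by rw [← hl.h1, ← hl.h3, hl.h13])
  have c23 := hcop u2 u3 d23 (by rw [← hl.h2, ← hl.h3, hl.h23])
  obtain ⟨ε1, X1, hX1⟩ := split7u 1 one_ne_zero 1 (b u1) (b u2 * b u3) t (c12.mul_right c13) (by linear_combination hbt) dvd_rfl isCoprime_one_right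
  obtain ⟨ε2, X2, hX2⟩ := split7u 1 one_ne_zero 1 (b u2) (b u1 * b u3) t (c12.symm.mul_right c23) (by linear_combination hbt) dvd_rfl isCoprime_one_right
  have hd := hdiff u1 u2 d12 (by rw [← hl.h1, ← hl.h2, hl.h12])
  rw [hX1, hX2] at hd
  have heN : (e : R) ∣ 30 ^ N := by
    obtain ⟨q, hq⟩ := he
    exact ⟨q, by have := congrArg (Int.cast : ℤ → R) hq; push_cast at this; exact this⟩
  have hLe : ¬ ζ - 1 ∣ (e : R) := fun h => S.L_ndvd30 N (h.trans heN)
  have hs' : (ε : R)^2 * (ζ-1)^14 * k = e * s ^ 14 := by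
    have := congrArg (Int.cast : ℤ → R) hs
    push_cast at this hnk
    linear_combination this - 49 * hnk - (7 + ε * (ζ-1)^6) * (ζ-1)^2 * k * hε
  have hLs : ζ - 1 ∣ (s : R) := by
    have : ζ - 1 ∣ (e : R) * s ^ 14 := by rw [← hs']; exact ⟨ε^2 * (ζ-1)^13 * k, by ring⟩
    rcases hL.dvd_or_dvd this with h | h
    · exact absurd h hLe
    · exact hL.dvd_of_dvd_pow h
  obtain ⟨s', hs1⟩ := hLs
  have hk2 : (ε : R)^2 * k = e * (s' ^ 2) ^ 7 := by
    apply mul_left_cancel₀ (pow_ne_zero 14 hL0)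
    rw [hs1] at hs'
    linear_combination hs'
  have hk3 : k = ((ε⁻¹ ^ 2 : Rˣ) : R) * e * (s' ^ 2) ^ 7 := by
    have : k = ((ε⁻¹ ^ 2 : Rˣ) : R) * (((ε ^ 2 : Rˣ) : R) * k) := by
      rw [← mul_assoc, ← Units.val_mul]; simp
    rw [this]; push_cast at hk2 ⊢; linear_combination (((ε⁻¹ : Rˣ) : R))^2 * hk2
  have hLs' : ζ - 1 ∣ s' ^ 2 := by
    have h1 : ζ - 1 ∣ (e : R) * (s' ^ 2) ^ 7 := by rw [← hk2]; exact hLk.mul_left _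
    rcases hL.dvd_or_dvd h1 with h | h
    · exact absurd h hLe
    · exact hL.dvd_of_dvd_pow h
  have hw0 : s' ^ 2 ≠ 0 := by
    intro h0
    rw [h0] at hk3
    have : k = 0 := by rw [hk3]; ring
    rw [this, mul_zero] at hnk
    exact hn (hR0 _ hnk)
  have hLX1 : ¬ ζ - 1 ∣ X1 := by
    intro h1
    have h2 : ζ - 1 ∣ b u1 := by rw [hX1]; exact (h1.trans (dvd_pow_self _ (by norm_num))).mul_left _
    exact hL.not_isUnit ((hbk u1).isUnit_of_dvd' h2 hLk)
  obtain ⟨D, hD⟩ : ∃ D : Rˣ, D = ε2⁻¹ * (d12 * u1⁻¹ * u2⁻¹) * ε⁻¹ ^ 2 := ⟨_, rfl⟩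
  have key : ((ε1 * ε2⁻¹ : Rˣ) : R) * X1 ^ 7 - X2 ^ 7 = D * e * (s'^2)^7 := by
    rw [hk3] at hd
    rw [hD]; push_cast at hd ⊢
    linear_combination ((ε2⁻¹ : Rˣ) : R) * hd + X2^7 * ε2.mul_inv
  obtain ⟨v, hv⟩ := S.unit_quot _ X1 X2 (by
    rw [key]
    refine Dvd.dvd.mul_left ?_ _
    exact S.seven_dvd_L6.trans ((pow_dvd_pow_of_dvd hLs' 6).trans (pow_dvd_pow _ (by norm_num)))) hLX1
  rw [hv] at key
  refine S.descent (v * X1) X2 (D * e) (s'^2) N ?_ ?_ (Units.mul_left_dvd.2 heN) hw0 hLs'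
  · refine (isCoprime_mul_unit_left_left v.isUnit _ _).2 ?_
    refine (c12.of_isCoprime_of_dvd_left ?_).of_isCoprime_of_dvd_right ?_
    · rw [hX1]; exact (dvd_pow_self _ (by norm_num)).mul_left _
    · rw [hX2]; exact (dvd_pow_self _ (by norm_num)).mul_left _
  · rw [← key]; push_cast; ring

theorem lemF (S : Setup R ζ) (m n t : ℤ) (hc : IsCoprime m n) (h7 : ¬ 7 ∣ n)
    (h : n^3 - 7*n^2*m + 14*n*m^2 - 7*m^3 = t^7) {A B C : R} (habc : ABC ζ A B C) (κ1 κ2 κ3 : Rˣ) (q : ℤ)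
    (hk1 : (7 : R) ∣ κ1 * (n - (2 - A) * m) - q) (hk2 : (7 : R) ∣ κ2 * (n - (2 - B) * m) - q)
    (hk3 : (7 : R) ∣ κ3 * (n - (2 - C) * m) - q) :
    ∃ w1 w2 w3 : R, (κ1 : R) * ((n : R) - (2 - A) * (m : R)) = w1 ^ 7 ∧ (κ2 : R) * ((n : R) - (2 - B) * (m : R)) = w2 ^ 7 ∧
      (κ3 : R) * ((n : R) - (2 - C) * (m : R)) = w3 ^ 7 := by
  obtain ⟨u1, u2, u3, d12, d13, d23, hl⟩ := S.ll habc
  set l1 := 2 - A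
  set l2 := 2 - B
  set l3 := 2 - C
  have hL := S.prime
  have hp := hl.p m n
  have h' := congrArg (Int.cast : ℤ → R) h
  push_cast at h'
  rw [h'] at hp
  have hmn : IsCoprime (m : R) n := by simpa using hc.map (Int.castRingHom R)
  have L7 : ζ - 1 ∣ (7 : R) := (dvd_pow_self _ (by norm_num : 6 ≠ 0)).trans S.L6_dvd_seven
  have hnL : IsCoprime (n : R) (ζ - 1) := by
    have h1 : IsCoprime n 7 := by
      rw [isCoprime_comm]
      exact (Irreducible.coprime_iff_not_dvd (Int.prime_iff_natAbs_prime.2 (by norm_num)).irreducible).2 h7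
    have h2 : IsCoprime (n : R) ((7 : ℤ) : R) := by simpa using h1.map (Int.castRingHom R)
    exact h2.of_isCoprime_of_dvd_right (by exact_mod_cast L7)
  have hFm : ∀ l : R, IsCoprime (n - l * m) (m : R) := by
    intro l
    have : (n : R) - l * m = n + m * (-l) := by ring
    rw [this]; exact IsCoprime.add_mul_left_left hmn.symm _
  have hFL : ∀ (l : R) (u : Rˣ), l = u * (ζ - 1)^2 → IsCoprime (n - l * m) (ζ - 1) := by
    intro l u hu
    have : (n : R) - l * m = n + (ζ - 1) * (-u * (ζ - 1) * m) := by rw [hu]; ring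
    rw [this]; exact IsCoprime.add_mul_left_left hnL _
  have hcop : ∀ (l l' : R) (u d : Rˣ), l = u * (ζ - 1)^2 → l - l' = d * (ζ - 1)^2 → IsCoprime (n - l * m) (n - l' * m) := by
    intro l l' u d hu hd
    have : (n : R) - l' * m = (d : R) * ((ζ - 1)^2 * m) + (n - l * m) * 1 := by linear_combination m * hd
    rw [this]
    refine IsCoprime.add_mul_left_right ?_ 1
    exact (isCoprime_mul_unit_left_right (Units.isUnit _) _ _).2 (((hFL l u hu).pow_right).mul_right (hFm l))
  have c12 := hcop l1 l2 u1 d12 hl.h1 hl.h12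
  have c13 := hcop l1 l3 u1 d13 hl.h1 hl.h13
  have c23 := hcop l2 l3 u2 d23 hl.h2 hl.h23
  have fin : ∀ (F F' : R) (κ : Rˣ), IsCoprime F F' → F * F' = t ^ 7 → IsCoprime F (ζ - 1) → (7 : R) ∣ κ * F - q → ∃ w, κ * F = w ^ 7 := by
    intro F F' κ hF hFF hFL hk
    obtain ⟨ε, X, hX⟩ := split7u 1 one_ne_zero 1 F F' t hF (by linear_combination hFF) dvd_rfl isCoprime_one_right
    have hLX : ¬ ζ - 1 ∣ X := by
      intro h1
      have h2 : ζ - 1 ∣ F := by rw [hX]; exact (h1.trans (dvd_pow_self _ (by norm_num))).mul_left _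
      exact hL.not_isUnit (hFL.isUnit_of_dvd' h2 dvd_rfl)
    have hq : (7 : R) ∣ (q : R) - q ^ 7 := by
      have : (7 : ℤ) ∣ q - q ^ 7 := by
        rw [dvd7]; push_cast
        generalize (q : ZMod 7) = a
        revert a; decide
      obtain ⟨r, hr⟩ := this
      exact ⟨r, by have := congrArg (Int.cast : ℤ → R) hr; push_cast at this; exact this⟩
    obtain ⟨v, hv⟩ := S.unit_quot (κ * ε) X q (by
      have := dvd_add hk hq
      convert this using 1
      rw [hX]; push_cast; ring) hLX
    refine ⟨v * X, ?_⟩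
    have hv' := congrArg (Units.val) hv
    push_cast at hv'
    rw [hX, mul_pow, ← hv']; ring
  obtain ⟨w1, hw1⟩ := fin _ _ κ1 (c12.mul_right c13) (by linear_combination hp) (hFL l1 u1 hl.h1) hk1
  obtain ⟨w2, hw2⟩ := fin _ _ κ2 (c12.symm.mul_right c23) (by linear_combination hp) (hFL l2 u2 hl.h2) hk2
  obtain ⟨w3, hw3⟩ := fin _ _ κ3 (c13.symm.mul_right c23.symm) (by linear_combination hp) (hFL l3 u3 hl.h3) hk3
  exact ⟨w1, w2, w3, hw1, hw2, hw3⟩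
end Setup

end

section

set_option linter.unusedSectionVars false

theorem z43pow : ∀ x : ZMod 43, (x ^ 7) ^ 7 = x ^ 7 := by decide

set_option maxRecDepth 100000 in
theorem f2z : ∀ s : ZMod 43, s ^ 7 = s → ∀ m : ZMod 43,
    ((15 * 8)^2 * (20 * (3^5*5^5 * s)^2 - (2 - 15) * m)) ^ 7 = ((15 * 8)^2 * (20 * (3^5*5^5 * s)^2 - (2 - 15) * m)) →
    ((8 * 19)^2 * (20 * (3^5*5^5 * s)^2 - (2 - 8) * m)) ^ 7 = ((8 * 19)^2 * (20 * (3^5*5^5 * s)^2 - (2 - 8) * m)) →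
    ((19 * 15)^2 * (20 * (3^5*5^5 * s)^2 - (2 - 19) * m)) ^ 7 = ((19 * 15)^2 * (20 * (3^5*5^5 * s)^2 - (2 - 19) * m)) →
    m = 0 ∧ s = 0 := by decide +kernel

set_option maxRecDepth 100000 in
theorem f4z : ∀ s : ZMod 43, s ^ 7 = s → ∀ m : ZMod 43,
    (8 * (20 * (2^4*3^5*5^5 * s)^2 - (2 - 15) * m)) ^ 7 = (8 * (20 * (2^4*3^5*5^5 * s)^2 - (2 - 15) * m)) →
    (19 * (20 * (2^4*3^5*5^5 * s)^2 - (2 - 8) * m)) ^ 7 = (19 * (20 * (2^4*3^5*5^5 * s)^2 - (2 - 8) * m)) →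
    (15 * (20 * (2^4*3^5*5^5 * s)^2 - (2 - 19) * m)) ^ 7 = (15 * (20 * (2^4*3^5*5^5 * s)^2 - (2 - 19) * m)) →
    m = 0 ∧ s = 0 := by decide +kernel

namespace Setup
variable {R : Type} [CommRing R] {ζ : R} [IsDomain R] [IsPrincipalIdealRing R]

theorem no43 (m n c s : ℤ) (hc : IsCoprime m n) (hn : n = 20 * (c * s^7)^2) (h : (m : ZMod 43) = 0 ∧ ((s : ZMod 43) ^ 7) = 0) : False := by
  have hm : (43 : ℤ) ∣ m := (ZMod.intCast_zmod_eq_zero_iff_dvd m 43).1 h.1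
  have h2 : (s : ZMod 43) = 0 := by
    have h2 := h.2
    clear h hm
    generalize (s : ZMod 43) = a at *
    revert a; decide
  have hs : (43 : ℤ) ∣ s := (ZMod.intCast_zmod_eq_zero_iff_dvd s 43).1 h2
  have hn' : (43 : ℤ) ∣ n := by
    obtain ⟨k, rfl⟩ := hs
    exact ⟨20 * c^2 * 43^13 * k^14, by rw [hn]; ring⟩
  exact absurd (hc.isUnit_of_dvd' hm hn') (by decide)

theorem unitsABC {A B C : R} (h : ABC ζ A B C) : ∃ a b c : Rˣ, (a : R) = A ∧ (b : R) = B ∧ (c : R) = C :=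
  ⟨⟨A, B * C, by linear_combination h.e3, by linear_combination h.e3⟩, ⟨B, A * C, by linear_combination h.e3, by linear_combination h.e3⟩,
    ⟨C, A * B, by linear_combination h.e3, by linear_combination h.e3⟩, rfl, rfl, rfl⟩

theorem phiABC {A B C : R} (h : ABC ζ A B C) (φ : R →+* ZMod 43) (hφ : φ ζ = 4) : φ A = 15 ∧ φ B = 8 ∧ φ C = 19 := by
  rw [h.hA, h.hB, h.hC]
  simp only [map_add, map_pow, hφ]
  decide

theorem lemF2 (S : Setup R ζ) (m b s t : ℤ) (hc : IsCoprime m (20*b^2)) (h7 : ¬ 7 ∣ 20*b^2) (hm : 7 ∣ m - 5 * b^2)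
    (hb : b = 3^5*5^5 * s^7)
    (h : (20*b^2)^3 - 7*(20*b^2)^2*m + 14*(20*b^2)*m^2 - 7*m^3 = t^7) : False := by
  obtain ⟨A, B, C, habc⟩ := S.abc
  obtain ⟨a, b', c, ha, hb', hcc⟩ := unitsABC habc
  obtain ⟨k, hk⟩ := hm
  have hm' : (m : R) = 5 * b^2 + 7 * k := by
    have := congrArg (Int.cast : ℤ → R) hk
    push_cast at this; linear_combination this
  have e3 := habc.e3
  obtain ⟨w1, w2, w3, h1, h2, h3⟩ := S.lemF m (20*b^2) t hc h7 h habc ((a*b')^2) ((b'*c)^2) ((c*a)^2) (5*b^2)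
    ⟨-(A*B)^2*(2-A)*k, by push_cast; rw [ha, hb', hm']; linear_combination 5 * (b:R)^2 * ((A*B*C+1) * e3 - (A*B)^2 * habc.sC)⟩
    ⟨-(B*C)^2*(2-B)*k, by push_cast; rw [hcc, hb', hm']; linear_combination 5 * (b:R)^2 * ((A*B*C+1) * e3 - (B*C)^2 * habc.sA)⟩
    ⟨-(C*A)^2*(2-C)*k, by push_cast; rw [hcc, ha, hm']; linear_combination 5 * (b:R)^2 * ((A*B*C+1) * e3 - (C*A)^2 * habc.sB)⟩
  obtain ⟨φ, hφ⟩ := S.hom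
  obtain ⟨pA, pB, pC⟩ := phiABC habc φ hφ
  push_cast at h1 h2 h3
  rw [ha, hb'] at h1
  rw [hcc, hb'] at h2
  rw [hcc, ha] at h3
  replace h1 := congrArg φ h1
  replace h2 := congrArg φ h2
  replace h3 := congrArg φ h3
  simp only [map_mul, map_pow, map_sub, pA, pB, pC, map_intCast, map_ofNat] at h1 h2 h3
  have hbs : (b : ZMod 43) = 3^5*5^5 * (s : ZMod 43)^7 := by rw [hb]; push_cast; ring
  rw [hbs] at h1 h2 h3
  refine no43 m (20*b^2) (3^5*5^5) s hc (by rw [hb]) (f2z _ (z43pow _) _ ?_ ?_ ?_)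
  · rw [h1, z43pow]
  · rw [h2, z43pow]
  · rw [h3, z43pow]

theorem lemF4 (S : Setup R ζ) (m b s t : ℤ) (hc : IsCoprime m (20*b^2)) (h7 : ¬ 7 ∣ 20*b^2) (hm : 7 ∣ m - 2 * b^2)
    (hb : b = 2^4*3^5*5^5 * s^7)
    (h : (20*b^2)^3 - 7*(20*b^2)^2*m + 14*(20*b^2)*m^2 - 7*m^3 = t^7) : False := by
  obtain ⟨A, B, C, habc⟩ := S.abc
  obtain ⟨a, b', c, ha, hb', hcc⟩ := unitsABC habc
  obtain ⟨k, hk⟩ := hm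
  have hm' : (m : R) = 2 * b^2 + 7 * k := by
    have := congrArg (Int.cast : ℤ → R) hk
    push_cast at this; linear_combination this
  have e1 := habc.e1
  obtain ⟨w1, w2, w3, h1, h2, h3⟩ := S.lemF m (20*b^2) t hc h7 h habc b' c a (-2*b^2)
    ⟨2*B*b^2-B*(2-A)*k, by push_cast; rw [hb', hm']; linear_combination 2 * (b:R)^2 * (e1 + habc.AB)⟩
    ⟨2*C*b^2-C*(2-B)*k, by push_cast; rw [hcc, hm']; linear_combination 2 * (b:R)^2 * (e1 + habc.BC)⟩
    ⟨2*A*b^2-A*(2-C)*k, by push_cast; rw [ha, hm']; linear_combination 2 * (b:R)^2 * (e1 + habc.CA)⟩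
  obtain ⟨φ, hφ⟩ := S.hom
  obtain ⟨pA, pB, pC⟩ := phiABC habc φ hφ
  push_cast at h1 h2 h3
  rw [hb'] at h1
  rw [hcc] at h2
  rw [ha] at h3
  replace h1 := congrArg φ h1
  replace h2 := congrArg φ h2
  replace h3 := congrArg φ h3
  simp only [map_mul, map_pow, map_sub, pA, pB, pC, map_intCast, map_ofNat] at h1 h2 h3
  have hbs : (b : ZMod 43) = 2^4*3^5*5^5 * (s : ZMod 43)^7 := by rw [hb]; push_cast; ring
  rw [hbs] at h1 h2 h3
  refine no43 m (20*b^2) (2^4*3^5*5^5) s hc (by rw [hb]) (f4z _ (z43pow _) _ ?_ ?_ ?_)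
  · rw [h1, z43pow]
  · rw [h2, z43pow]
  · rw [h3, z43pow]
end Setup

end

section

theorem form20 : ∀ n : ℕ, ∀ A B C : ℤ, 0 < A → A ≤ n → A * C - B ^ 2 = 5 →
    ∃ x y : ℤ, A * x^2 + 2 * B * x * y + C * y^2 = 1 ∨ A * x^2 + 2 * B * x * y + C * y^2 = 2 := by
  intro n
  induction n with
  | zero => intro A B C h1 h2; omega
  | succ n ih =>
    intro A B C hA hn h
    by_cases hA2 : A ≤ 2
    · refine ⟨1, 0, ?_⟩
      have : A = 1 ∨ A = 2 := by omega
      rcases this with rfl | rfl <;> norm_num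
    obtain ⟨q, r, hq, hr1, hr2⟩ : ∃ q r : ℤ, B = A * q + r ∧ -A ≤ 2 * r ∧ 2 * r ≤ A := by
      have h1 := Int.emod_add_mul_ediv B A
      have h2 := Int.emod_nonneg B hA.ne'
      have h3 := Int.emod_lt_of_pos B hA
      by_cases h4 : 2 * (B % A) ≤ A
      · exact ⟨B / A, B % A, by linarith, by omega, h4⟩
      · exact ⟨B / A + 1, B % A - A, by linarith, by omega, by omega⟩
    set C' := C - 2 * q * B + q^2 * A with hC'
    have h' : A * C' - r ^ 2 = 5 := by
      have : r = B - A * q := by linarith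
      rw [this, hC']; linear_combination h
    have hC0 : 0 < C' := by
      by_contra h0
      nlinarith [sq_nonneg r]
    have hCA : C' < A := by
      by_contra h0
      push Not at h0
      nlinarith
    obtain ⟨x, y, hxy⟩ := ih C' (-r) A hC0 (by push_cast at hn; omega) (by linear_combination h')
    refine ⟨-y - q * x, x, ?_⟩
    have e : A * (-y - q * x)^2 + 2 * B * (-y - q * x) * x + C * x^2
        = C' * x^2 + 2 * (-r) * x * y + A * y^2 := by
      rw [hC', hq]; ring
    rw [e]; exact hxy

theorem no128 (c d : ℤ) (h : 2 ^ 7 = c^2 + 5 * d^2) : False := by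
  have b1 : d ≤ 5 := by nlinarith [sq_nonneg c]
  have b2 : -5 ≤ d := by nlinarith [sq_nonneg c]
  have b3 : c ≤ 11 := by nlinarith [sq_nonneg d]
  have b4 : -11 ≤ c := by nlinarith [sq_nonneg d]
  interval_cases d <;> interval_cases c <;> omega

theorem norm1 (c d : ℤ) (h : 1 ^ 7 = c^2 + 5 * d^2) : d = 0 ∧ (c = 1 ∨ c = -1) := by
  have hd : d = 0 := by nlinarith [sq_nonneg c, sq_nonneg d]
  refine ⟨hd, ?_⟩
  rw [hd] at h
  have : (c - 1) * (c + 1) = 0 := by linear_combination -h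
  rcases mul_eq_zero.1 this with h | h
  · left; omega
  · right; omega

theorem sqrt5 (P Q w : ℤ) (hc : IsCoprime P Q) (h : P^2 + 5 * Q^2 = w^7) :
    ∃ a b : ℤ, P = a * (a^6 - 105*a^4*b^2 + 875*a^2*b^4 - 875*b^6) ∧ Q = b * (7*a^6 - 175*a^4*b^2 + 525*a^2*b^4 - 125*b^6) := by
  have hw : 0 < w := by
    by_contra h0
    have h1 : w ^ 7 ≤ 0 := Odd.pow_nonpos (by decide) (by omega)
    have hP : P = 0 := by nlinarith [sq_nonneg P, sq_nonneg Q]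
    have hQ : Q = 0 := by nlinarith [sq_nonneg P, sq_nonneg Q]
    rw [hP, hQ] at hc; obtain ⟨a, b, hab⟩ := hc; simp at hab
  have hcw : IsCoprime w Q := by
    have h1 : IsCoprime (P^2) Q := hc.pow_left
    have h2 : IsCoprime (w^7) Q := by
      rw [← h, show P^2 + 5 * Q^2 = P^2 + Q * (5 * Q) by ring]
      exact IsCoprime.add_mul_left_left h1 _
    exact (IsCoprime.pow_left_iff (by norm_num)).1 h2
  obtain ⟨j, Q', hQ⟩ := hcw
  obtain ⟨x, y, hxy⟩ := form20 w.toNat w (P * Q') (w^6 * Q'^2 + 5 * j * (1 + Q' * Q)) hw (by omega) (by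
    linear_combination Q'^2 * (-h) + 5 * (1 + Q' * Q) * hQ)
  set v := w * x^2 + 2 * (P * Q') * x * y + (w^6 * Q'^2 + 5 * j * (1 + Q' * Q)) * y^2 with hv
  let α : ℤ√(-5) := ⟨P, Q⟩
  let δ : ℤ√(-5) := ⟨w * x + P * Q' * y, y⟩
  have hδN : (w * x + P * Q' * y)^2 + 5 * y^2 = w * v := by
    rw [hv]
    linear_combination y^2 * (Q'^2 * h - 5 * (1 + Q' * Q) * hQ)
  have hδ : δ = α * (⟨Q' * y, 0⟩ : ℤ√(-5)) + (w : ℤ√(-5)) * ⟨x, j * y⟩ := by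
    ext
    · simp [δ, α]; ring
    · simp [δ, α]; linear_combination -y * hQ
  have hα : α * star α = (w : ℤ√(-5)) ^ 7 := by
    have : ((w : ℤ√(-5)) ^ 7) = ((w^7 : ℤ) : ℤ√(-5)) := by push_cast; rfl
    rw [this]
    generalize w^7 = K at h
    ext <;> simp [α]
    · linear_combination h
    · ring
  have hdvd : α ∣ δ ^ 7 := by
    have h1 : δ - (w : ℤ√(-5)) * ⟨x, j * y⟩ ∣ δ^7 - ((w : ℤ√(-5)) * ⟨x, j * y⟩)^7 := sub_dvd_pow_sub_pow _ _ _
    have h2 : α ∣ δ^7 - ((w : ℤ√(-5)) * ⟨x, j * y⟩)^7 := by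
      refine Dvd.dvd.trans ⟨(⟨Q' * y, 0⟩ : ℤ√(-5)), ?_⟩ h1
      rw [hδ]; ring
    have h3 : α ∣ ((w : ℤ√(-5)) * ⟨x, j * y⟩)^7 := by
      rw [mul_pow, ← hα]; exact (Dvd.intro _ rfl).mul_right _
    have := dvd_add h2 h3
    simpa using this
  obtain ⟨μ, hμ⟩ := hdvd
  have hN : v ^ 7 = μ.norm := by
    have h1 := congrArg Zsqrtd.norm hμ
    have h2 : δ.norm = w * v := by rw [← hδN]; simp [δ, Zsqrtd.norm]; ring
    have h3 : α.norm = w^7 := by rw [← h]; simp [α, Zsqrtd.norm]; ring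
    rw [Zsqrtd.norm_mul, h3] at h1
    have h4 : (δ^7).norm = δ.norm^7 := map_pow Zsqrtd.normMonoidHom δ 7
    rw [h4, h2, mul_pow] at h1
    exact mul_left_cancel₀ (pow_ne_zero 7 hw.ne') h1
  obtain ⟨c, d⟩ := μ
  have hN' : v^7 = c^2 + 5 * d^2 := by rw [hN]; simp [Zsqrtd.norm]; ring
  have hd7 : ∀ a b : ℤ, (⟨a, b⟩ : ℤ√(-5))^7 = ⟨a * (a^6 - 105*a^4*b^2 + 875*a^2*b^4 - 875*b^6), b * (7*a^6 - 175*a^4*b^2 + 525*a^2*b^4 - 125*b^6)⟩ := by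
    intro a b
    have h2 : (⟨a, b⟩ : ℤ√(-5))^2 = ⟨a^2 - 5 * b^2, 2 * a * b⟩ := by
      rw [pow_two]; ext <;> simp <;> ring
    have h3 : (⟨a, b⟩ : ℤ√(-5))^7 = ⟨a, b⟩ * (⟨a, b⟩^2 * ⟨a, b⟩^2 * ⟨a, b⟩^2) := by ring
    rw [h3, h2]
    ext <;> simp <;> ring
  rcases hxy with h1 | h1
  · rw [h1] at hN'
    obtain ⟨hd, hc'⟩ := norm1 c d hN'
    subst hd
    rw [hd7] at hμ
    have r1 := congrArg Zsqrtd.re hμ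
    have r2 := congrArg Zsqrtd.im hμ
    simp [α] at r1 r2
    rcases hc' with rfl | rfl
    · exact ⟨w * x + P * Q' * y, y, by linear_combination -r1, by linear_combination -r2⟩
    · exact ⟨-(w * x + P * Q' * y), -y, by linear_combination r1, by linear_combination r2⟩
  · exfalso
    rw [h1] at hN'
    exact no128 c d hN'

end

section

theorem copp (p : ℕ) (hp : p.Prime) (X : ℤ) (h : ¬ (p : ℤ) ∣ X) : IsCoprime (p : ℤ) X :=
  (Irreducible.coprime_iff_not_dvd (Nat.prime_iff_prime_int.1 hp).irreducible).2 h

theorem cop2 (X : ℤ) (h : ¬ 2 ∣ X) : IsCoprime (2 : ℤ) X := copp 2 (by norm_num) X h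
theorem cop3 (X : ℤ) (h : ¬ 3 ∣ X) : IsCoprime (3 : ℤ) X := copp 3 (by norm_num) X h
theorem cop5 (X : ℤ) (h : ¬ 5 ∣ X) : IsCoprime (5 : ℤ) X := copp 5 (by norm_num) X h
theorem cop7 (X : ℤ) (h : ¬ 7 ∣ X) : IsCoprime (7 : ℤ) X := copp 7 (by norm_num) X h

theorem splitZ (F M c y : ℤ) (hc0 : c ≠ 0) (h : F * M = c * y ^ 7) (h1 : IsCoprime F M) (h2 : IsCoprime c M) :
    ∃ s t : ℤ, F = c * s ^ 7 ∧ M = t ^ 7 := by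
  obtain ⟨F', rfl⟩ : c ∣ F := h2.dvd_of_dvd_mul_right (Dvd.intro _ h.symm)
  have h3 : F' * M = y ^ 7 := mul_left_cancel₀ hc0 (by linear_combination h)
  have h4 : IsCoprime F' M := h1.of_mul_left_right
  obtain ⟨s, hs⟩ := Int.eq_pow_of_mul_eq_pow_odd_left h4 (by decide) h3
  obtain ⟨t, ht⟩ := Int.eq_pow_of_mul_eq_pow_odd_right h4 (by decide) h3
  exact ⟨s, t, by rw [hs], ht⟩

theorem z49pow : ∀ x : ZMod 49, (x ^ 7) ^ 7 = x ^ 7 := by decide +kernel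

theorem m49a1 : ∀ s : ZMod 49, s ^ 7 = s → s ≠ 0 → ∀ b : ZMod 49,
  ((3^5*s)^6 - 105*(3^5*s)^4*b^2 + 875*(3^5*s)^2*b^4 - 875*b^6)^7 ≠ ((3^5*s)^6 - 105*(3^5*s)^4*b^2 + 875*(3^5*s)^2*b^4 - 875*b^6) := by
  decide +kernel

theorem m49a3 : ∀ s : ZMod 49, s ^ 7 = s → s ≠ 0 → ∀ b : ZMod 49,
  ((2^4*3^5*s)^6 - 105*(2^4*3^5*s)^4*b^2 + 875*(2^4*3^5*s)^2*b^4 - 875*b^6)^7 ≠ ((2^4*3^5*s)^6 - 105*(2^4*3^5*s)^4*b^2 + 875*(2^4*3^5*s)^2*b^4 - 875*b^6) := by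
  decide +kernel

theorem m49b2 : ∀ s : ZMod 49, s ^ 7 = s → s ≠ 0 → ∀ a : ZMod 49,
  (7*a^6 - 175*a^4*(3^5*5^5*s)^2 + 525*a^2*(3^5*5^5*s)^4 - 125*(3^5*5^5*s)^6)^7 = (7*a^6 - 175*a^4*(3^5*5^5*s)^2 + 525*a^2*(3^5*5^5*s)^4 - 125*(3^5*5^5*s)^6) →
  7 * (a^2) = 0 := by
  decide +kernel

theorem m49b4 : ∀ s : ZMod 49, s ^ 7 = s → s ≠ 0 → ∀ a : ZMod 49,
  (7*a^6 - 175*a^4*(2^4*3^5*5^5*s)^2 + 525*a^2*(2^4*3^5*5^5*s)^4 - 125*(2^4*3^5*5^5*s)^6)^7 = (7*a^6 - 175*a^4*(2^4*3^5*5^5*s)^2 + 525*a^2*(2^4*3^5*5^5*s)^4 - 125*(2^4*3^5*5^5*s)^6) →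
  7 * (a^2 + 3 * (2^4*3^5*5^5*s)^2) = 0 := by
  decide +kernel

theorem par (a b : ℤ) (hc : IsCoprime (a * (a^6 - 105*a^4*b^2 + 875*a^2*b^4 - 875*b^6)) (b * (7*a^6 - 175*a^4*b^2 + 525*a^2*b^4 - 125*b^6))) :
    (¬ 2 ∣ a^2 + 5 * b^2) ∧ (¬ 2 ∣ (a^6 - 105*a^4*b^2 + 875*a^2*b^4 - 875*b^6)) ∧ (¬ 2 ∣ (7*a^6 - 175*a^4*b^2 + 525*a^2*b^4 - 125*b^6)) := by
  have h : ¬ ((2 : ℤ) ∣ (a * (a^6 - 105*a^4*b^2 + 875*a^2*b^4 - 875*b^6)) ∧ (2 : ℤ) ∣ (b * (7*a^6 - 175*a^4*b^2 + 525*a^2*b^4 - 125*b^6))) := by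
    rintro ⟨h1, h2⟩
    exact absurd (hc.isUnit_of_dvd' h1 h2) (by decide)
  have e : ∀ n : ℤ, (2 : ℤ) ∣ n ↔ (n : ZMod 2) = 0 := fun n => (ZMod.intCast_zmod_eq_zero_iff_dvd n 2).symm
  simp only [e] at h ⊢
  push_cast at h ⊢
  clear hc
  generalize (a : ZMod 2) = a at *
  generalize (b : ZMod 2) = b at *
  revert a b; decide

theorem n3H (a b : ℤ) (hc : IsCoprime a b) : ¬ 3 ∣ (a^6 - 105*a^4*b^2 + 875*a^2*b^4 - 875*b^6) := by
  have h : ¬ ((3 : ℤ) ∣ a ∧ (3 : ℤ) ∣ b) := by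
    rintro ⟨h1, h2⟩
    exact absurd (hc.isUnit_of_dvd' h1 h2) (by decide)
  have e : ∀ n : ℤ, (3 : ℤ) ∣ n ↔ (n : ZMod 3) = 0 := fun n => (ZMod.intCast_zmod_eq_zero_iff_dvd n 3).symm
  simp only [e] at h ⊢
  push_cast at h ⊢
  clear hc
  generalize (a : ZMod 3) = a at *
  generalize (b : ZMod 3) = b at *
  revert a b; decide

theorem n3G (a b : ℤ) (hc : IsCoprime a b) : ¬ 3 ∣ (7*a^6 - 175*a^4*b^2 + 525*a^2*b^4 - 125*b^6) := by
  have h : ¬ ((3 : ℤ) ∣ a ∧ (3 : ℤ) ∣ b) := by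
    rintro ⟨h1, h2⟩
    exact absurd (hc.isUnit_of_dvd' h1 h2) (by decide)
  have e : ∀ n : ℤ, (3 : ℤ) ∣ n ↔ (n : ZMod 3) = 0 := fun n => (ZMod.intCast_zmod_eq_zero_iff_dvd n 3).symm
  simp only [e] at h ⊢
  push_cast at h ⊢
  clear hc
  generalize (a : ZMod 3) = a at *
  generalize (b : ZMod 3) = b at *
  revert a b; decide

theorem n5G (a b : ℤ) (h : ¬ 5 ∣ a) : ¬ 5 ∣ (7*a^6 - 175*a^4*b^2 + 525*a^2*b^4 - 125*b^6) := by
  have e : ∀ n : ℤ, (5 : ℤ) ∣ n ↔ (n : ZMod 5) = 0 := fun n => (ZMod.intCast_zmod_eq_zero_iff_dvd n 5).symm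
  simp only [e] at h ⊢
  push_cast at h ⊢
  generalize (a : ZMod 5) = a at *
  generalize (b : ZMod 5) = b at *
  revert a b; decide

theorem n5m (a b : ℤ) (h : ¬ 5 ∣ a) : ¬ 5 ∣ a^2 + 5 * b^2 := by
  intro h1
  have : (5 : ℤ) ∣ a^2 := by omega
  exact h (Prime.dvd_of_dvd_pow (by norm_num) this)

theorem mcop (a b : ℤ) (hc : IsCoprime a b) (h5 : ¬ 5 ∣ a) : IsCoprime (a^2+5*b^2) a ∧ IsCoprime (a^2+5*b^2) b := by
  constructor
  · have : IsCoprime (5 * b^2) a := (cop5 a h5).mul_left hc.symm.pow_left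
    rw [show a^2+5*b^2 = 5*b^2 + a * a by ring]
    exact IsCoprime.add_mul_left_left this _
  · rw [show a^2+5*b^2 = a^2 + b * (5*b) by ring]
    exact IsCoprime.add_mul_left_left hc.pow_left _

theorem atype (P Q w v c : ℤ) (hc0 : c ≠ 0) (hcc : c = 3^5 ∨ c = 2^4*3^5) (hP : P ≠ 0) (hPc : P = c * w ^ 7)
    (h5 : ¬ 5 ∣ P) (hc : IsCoprime P Q) (h : P^2 + 5 * Q^2 = v^7) : False := by
  obtain ⟨R, _, _, _, ζ, S⟩ := setup7
  obtain ⟨a, b, rfl, rfl⟩ := sqrt5 P Q v hc h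
  obtain ⟨p1, p2, -⟩ := par a b hc
  have hab : IsCoprime a b := hc.of_mul_left_left.of_mul_right_left
  have ha0 : a ≠ 0 := left_ne_zero_of_mul hP
  have h5a : ¬ 5 ∣ a := fun h => h5 (h.mul_right _)
  have h3 := n3H a b hab
  have hcH : IsCoprime c (a^6 - 105*a^4*b^2 + 875*a^2*b^4 - 875*b^6) := by
    rcases hcc with rfl | rfl
    · exact (cop3 _ h3).pow_left
    · exact (cop2 _ p2).pow_left.mul_left (cop3 _ h3).pow_left
  have haH : IsCoprime a (-125*b^6) := by
    rw [show -125*b^6 = -(5^3*b^6) by ring, IsCoprime.neg_right_iff]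
    exact (cop5 a h5a).symm.pow_right.mul_right hab.pow_right
  by_cases h7 : 7 ∣ a
  · obtain ⟨H', hH', hH7⟩ : ∃ H', (a^6 - 105*a^4*b^2 + 875*a^2*b^4 - 875*b^6) = 7 * H' ∧ IsCoprime a H' := by
      obtain ⟨a1, ha1⟩ := h7
      refine ⟨a * (a1 * a^4 - 15*a^3*b^2 + 125*a*b^4) + (-125*b^6), by rw [ha1]; ring, ?_⟩
      rw [add_comm]; exact IsCoprime.add_mul_left_right haH _
    have h7w : 7 ∣ w := by
      have : (7 : ℤ) ∣ c * w^7 := by rw [← hPc]; exact h7.mul_right _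
      have h7c : IsCoprime (7 : ℤ) c := by rcases hcc with rfl | rfl <;> exact cop7 _ (by norm_num)
      exact Prime.dvd_of_dvd_pow (by norm_num) (h7c.dvd_of_dvd_mul_left this)
    have h77 : IsCoprime (7 : ℤ) H' := hH7.of_isCoprime_of_dvd_left h7
    rw [hH'] at hPc hcH
    obtain ⟨w', rfl⟩ := h7w
    obtain ⟨s, t, hs, ht⟩ := splitZ (7 * a) H' c (7 * w') hc0 (by linear_combination hPc) (h77.mul_left hH7) hcH.of_mul_right_right
    have hm := mcop a b hab h5a
    refine S.lemE (a^2+5*b^2) (4*a^2) (4*c^2) s (-t) 10 (by positivity) ?_ ?_ ?_ ?_ ?_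
    · rw [show 4*a^2 = 2^2*a^2 by ring]
      exact (cop2 _ p1).symm.pow_right.mul_right hm.1.pow_right
    · exact (h7.trans (dvd_pow_self _ (by norm_num))).mul_left _
    · linear_combination 4 * (7 * a + c * s^7) * hs
    · rcases hcc with rfl | rfl <;> norm_num
    · rw [show (-t)^7 = -t^7 by ring, ← ht]; linear_combination -hH'
  · have haH2 : IsCoprime a (a^6 - 105*a^4*b^2 + 875*a^2*b^4 - 875*b^6) := by
      rw [show (a^6 - 105*a^4*b^2 + 875*a^2*b^4 - 875*b^6) = 7 * (-125*b^6) + a * (a^5 - 105*a^3*b^2 + 875*a*b^4) by ring]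
      exact IsCoprime.add_mul_left_right ((cop7 a h7).symm.mul_right haH) _
    obtain ⟨s, t, hs, ht⟩ := splitZ a _ c w hc0 hPc haH2 hcH
    have ht' := congrArg (Int.cast : ℤ → ZMod 49) ht
    have hs0 : (s : ZMod 49)^7 ≠ 0 := by
      intro h0
      have : (49 : ℤ) ∣ s^7 := (ZMod.intCast_zmod_eq_zero_iff_dvd _ 49).1 (by push_cast; exact h0)
      apply h7; rw [hs]
      exact (Dvd.dvd.trans (by norm_num) this).mul_left c
    push_cast at ht'
    rcases hcc with rfl | rfl
    · have hs2 : (a : ZMod 49) = 3^5 * (s : ZMod 49)^7 := by rw [hs]; norm_num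
      rw [hs2] at ht'
      exact m49a1 _ (z49pow _) hs0 b (by rw [ht', z49pow])
    · have hs2 : (a : ZMod 49) = 2^4*3^5 * (s : ZMod 49)^7 := by rw [hs]; norm_num
      rw [hs2] at ht'
      exact m49a3 _ (z49pow _) hs0 b (by rw [ht', z49pow])

theorem btype (P Q w v c : ℤ) (hc0 : c ≠ 0) (hcc : c = 3^5*5^5 ∨ c = 2^4*3^5*5^5) (hQ : Q ≠ 0) (hQc : Q = c * w ^ 7)
    (h5 : ¬ 5 ∣ P) (hc : IsCoprime P Q) (h : P^2 + 5 * Q^2 = v^7) : False := by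
  obtain ⟨R, _, _, _, ζ, S⟩ := setup7
  obtain ⟨a, b, rfl, rfl⟩ := sqrt5 P Q v hc h
  obtain ⟨p1, -, p2⟩ := par a b hc
  have hab : IsCoprime a b := hc.of_mul_left_left.of_mul_right_left
  have hb0 : b ≠ 0 := left_ne_zero_of_mul hQ
  have h5a : ¬ 5 ∣ a := fun h => h5 (h.mul_right _)
  have h3 := n3G a b hab
  have h5G := n5G a b h5a
  have hcG : IsCoprime c (7*a^6 - 175*a^4*b^2 + 525*a^2*b^4 - 125*b^6) := by
    rcases hcc with rfl | rfl
    · exact (cop3 _ h3).pow_left.mul_left (cop5 _ h5G).pow_left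
    · exact ((cop2 _ p2).pow_left.mul_left (cop3 _ h3).pow_left).mul_left (cop5 _ h5G).pow_left
  have hba : IsCoprime b (a^6) := hab.symm.pow_right
  have hm := mcop a b hab h5a
  have hmn : IsCoprime (a^2+5*b^2) (20*b^2) := by
    rw [show 20*b^2 = 2^2*5*b^2 by ring]
    exact ((cop2 _ p1).symm.pow_right.mul_right (cop5 _ (n5m a b h5a)).symm).mul_right hm.2.pow_right
  by_cases h7 : 7 ∣ b
  · obtain ⟨G', hG', hG7⟩ : ∃ G', (7*a^6 - 175*a^4*b^2 + 525*a^2*b^4 - 125*b^6) = 7 * G' ∧ IsCoprime b G' := by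
      obtain ⟨b1, hb1⟩ := h7
      refine ⟨a^6 + b * (-25*a^4*b + 75*a^2*b^3 - 125*b1*b^4), by rw [hb1]; ring, ?_⟩
      exact IsCoprime.add_mul_left_right hba _
    have h7w : 7 ∣ w := by
      have : (7 : ℤ) ∣ c * w^7 := by rw [← hQc]; exact h7.mul_right _
      have h7c : IsCoprime (7 : ℤ) c := by rcases hcc with rfl | rfl <;> exact cop7 _ (by norm_num)
      exact Prime.dvd_of_dvd_pow (by norm_num) (h7c.dvd_of_dvd_mul_left this)
    have h77 : IsCoprime (7 : ℤ) G' := hG7.of_isCoprime_of_dvd_left h7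
    rw [hG'] at hQc hcG
    obtain ⟨w', rfl⟩ := h7w
    obtain ⟨s, t, hs, ht⟩ := splitZ (7 * b) G' c (7 * w') hc0 (by linear_combination hQc) (h77.mul_left hG7) hcG.of_mul_right_right
    refine S.lemE (a^2+5*b^2) (20*b^2) (20*c^2) s t 11 (by positivity) hmn ?_ ?_ ?_ ?_
    · exact (h7.trans (dvd_pow_self _ (by norm_num))).mul_left _
    · linear_combination 20 * (7 * b + c * s^7) * hs
    · rcases hcc with rfl | rfl <;> norm_num
    · rw [← ht]; linear_combination hG'
  · have hbG : IsCoprime b (7*a^6 - 175*a^4*b^2 + 525*a^2*b^4 - 125*b^6) := by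
      rw [show (7*a^6 - 175*a^4*b^2 + 525*a^2*b^4 - 125*b^6) = 7 * a^6 + b * (- 175*a^4*b + 525*a^2*b^3 - 125*b^5) by ring]
      exact IsCoprime.add_mul_left_right ((cop7 b h7).symm.mul_right hba) _
    obtain ⟨s, t, hs, ht⟩ := splitZ b _ c w hc0 hQc hbG hcG
    have ht' := congrArg (Int.cast : ℤ → ZMod 49) ht
    have hs0 : (s : ZMod 49)^7 ≠ 0 := by
      intro h0
      have : (49 : ℤ) ∣ s^7 := (ZMod.intCast_zmod_eq_zero_iff_dvd _ 49).1 (by push_cast; exact h0)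
      apply h7; rw [hs]
      exact (Dvd.dvd.trans (by norm_num) this).mul_left c
    have h7n : ¬ 7 ∣ 20 * b^2 := by
      intro h0
      have h1 : (7 : ℤ) ∣ b^2 := by omega
      exact h7 (Prime.dvd_of_dvd_pow (by norm_num) h1)
    have hF : (20*b^2)^3 - 7*(20*b^2)^2*(a^2+5*b^2) + 14*(20*b^2)*(a^2+5*b^2)^2 - 7*(a^2+5*b^2)^3 = (-t)^7 := by
      rw [show (-t)^7 = -t^7 by ring, ← ht]; ring
    push_cast at ht'
    rcases hcc with rfl | rfl
    · have hs2 : (b : ZMod 49) = 3^5*5^5 * (s : ZMod 49)^7 := by rw [hs]; norm_num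
      rw [hs2] at ht'
      have := m49b2 _ (z49pow _) hs0 a (by rw [ht', z49pow])
      have h49 : (49 : ℤ) ∣ 7 * a^2 := (ZMod.intCast_zmod_eq_zero_iff_dvd _ 49).1 (by push_cast; exact this)
      exact S.lemF2 (a^2+5*b^2) b s (-t) hmn h7n (by omega) hs hF
    · have hs2 : (b : ZMod 49) = 2^4*3^5*5^5 * (s : ZMod 49)^7 := by rw [hs]; norm_num
      rw [hs2] at ht'
      have := m49b4 _ (z49pow _) hs0 a (by rw [ht', z49pow])
      rw [← hs2] at this
      have h49 : (49 : ℤ) ∣ 7 * (a^2 + 3 * b^2) := (ZMod.intCast_zmod_eq_zero_iff_dvd _ 49).1 (by push_cast; exact this)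
      exact S.lemF4 (a^2+5*b^2) b s (-t) hmn h7n (by omega) hs hF

end

theorem pdvd (p : ℕ) (hp : p.Prime) (y : ℤ) (h : (p : ℤ) ∣ y ^ 7) : (p : ℤ) ∣ y :=
  Prime.dvd_of_dvd_pow (Nat.prime_iff_prime_int.1 hp) h

theorem sq1 (z : ℤ) (h : ¬ 2 ∣ z) : ∃ k, z ^ 2 = 8 * k + 1 := by
  have : z % 8 = 1 ∨ z % 8 = 3 ∨ z % 8 = 5 ∨ z % 8 = 7 := by omega
  have h2 : z ^ 2 % 8 = 1 := by
    rcases this with h | h | h | h <;> simp [pow_two, Int.mul_emod, h]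
  exact ⟨z^2/8, by omega⟩

theorem odd6 (a b : ℤ) (ha : ¬ 2 ∣ a) (hb : ¬ 2 ∣ b) (Y : ℤ) (h : a * (a^2 + 5*b^2) = 16 * Y) : False := by
  obtain ⟨k, hk⟩ := sq1 a ha
  obtain ⟨l, hl⟩ := sq1 b hb
  have h1 : a * (a^2+5*b^2) = 8 * (a * (k + 5 * l)) + 6 * a := by rw [hk, hl]; ring
  omega

theorem odd6' (a b : ℤ) (ha : ¬ 2 ∣ a) (hb : ¬ 2 ∣ b) (Y : ℤ) (h : a * (b^2 + 5*a^2) = 16 * Y) : False := by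
  obtain ⟨k, hk⟩ := sq1 a ha
  obtain ⟨l, hl⟩ := sq1 b hb
  have h1 : a * (b^2+5*a^2) = 8 * (a * (l + 5 * k)) + 6 * a := by rw [hk, hl]; ring
  omega

theorem ndvd_of (p : ℕ) (hp : p.Prime) (x r : ℤ) (hc : IsCoprime x r) (h : (p : ℤ) ∣ x) : ¬ (p : ℤ) ∣ r := by
  intro h2
  exact (Nat.prime_iff_prime_int.1 hp).not_unit (hc.isUnit_of_dvd' h h2)

theorem sqn (p : ℕ) (hp : p.Prime) (u k N : ℤ) (h : ¬ (p : ℤ) ∣ u) (hN : N = u ^ 2 + p * k) : ¬ (p : ℤ) ∣ N := by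
  intro h2
  rw [hN] at h2
  have h3 : (p : ℤ) ∣ u ^ 2 := (Int.dvd_add_left (Dvd.intro _ rfl)).1 h2
  exact h (Prime.dvd_of_dvd_pow (Nat.prime_iff_prime_int.1 hp) h3)

theorem no_solutions_exponent_seven (x r y : ℤ) (hgcd : Int.gcd x r = 1)
    (hr : 0 < r) (h3 : 3 ∣ x)
    (h : (x - 4*r)^3 + (x - 3*r)^3 + (x - 2*r)^3 + (x - r)^3 + x^3
        + (x + r)^3 + (x + 2*r)^3 + (x + 3*r)^3 + (x + 4*r)^3 = y ^ 7) :
    x * y = 0 := by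
  by_contra hxy
  have hx : x ≠ 0 := left_ne_zero_of_mul hxy
  have hc : IsCoprime x r := Int.isCoprime_iff_gcd_eq_one.2 hgcd
  have e : 9 * (x * (x^2 + 20*r^2)) = y^7 := by rw [← h]; ring
  clear h hxy hgcd
  have h3r : ¬ 3 ∣ r := ndvd_of 3 (by norm_num) x r hc h3
  have h3y : 3 ∣ y := pdvd 3 (by norm_num) y (by rw [← e]; exact Dvd.dvd.mul_right (by norm_num) _)
  obtain ⟨y1, rfl⟩ := h3y
  have e1 : x * (x^2 + 20*r^2) = 3^5 * y1^7 := by linarith [show (3*y1)^7 = 9 * (3^5*y1^7) by ring]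
  clear e
  have n3 : ∀ X u v : ℤ, 3 ∣ X → ¬ 3 ∣ v → ¬ 3 ∣ X ^ 2 * u + 5 * v ^ 2 := by
    intro X u v hX hv h0
    have h1 : (3 : ℤ) ∣ X^2 * u := (hX.trans (dvd_pow_self _ (by norm_num))).mul_right _
    have h2 : (3 : ℤ) ∣ v^2 := by omega
    exact hv (Prime.dvd_of_dvd_pow (by norm_num) h2)
  by_cases h2 : 2 ∣ x
  · have h2r : ¬ 2 ∣ r := ndvd_of 2 (by norm_num) x r hc h2
    obtain ⟨x, rfl⟩ := h2
    have h3 : 3 ∣ x := by omega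
    have hx : x ≠ 0 := by omega
    have hc : IsCoprime x r := hc.of_mul_left_right
    have h2y : 2 ∣ y1 := by
      apply pdvd 2 (by norm_num)
      have : x * ((2*x)^2 + 20*r^2) * 2 = 243 * y1 ^ 7 := by linear_combination e1
      push_cast; omega
    obtain ⟨y, rfl⟩ := h2y
    have e2 : x * (x^2 + 5*r^2) = 2^4 * 3^5 * y^7 := by linarith [show (2*x)*((2*x)^2 + 20*r^2) = 8 * (x * (x^2 + 5*r^2)) by ring, show (2*y)^7 = 8 * (2^4*y^7) by ring]
    clear e1
    have h2x : 2 ∣ x := by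
      by_contra h0
      exact odd6 x r h0 h2r (3^5*y^7) (by linear_combination e2)
    by_cases h5 : 5 ∣ x
    · have h5r : ¬ 5 ∣ r := ndvd_of 5 (by norm_num) x r hc h5
      obtain ⟨x, rfl⟩ := h5
      have hx : x ≠ 0 := by omega
      have hc : IsCoprime x r := hc.of_mul_left_right
      have h2x : 2 ∣ x := by omega
      have h3 : 3 ∣ x := by omega
      have h5y : 5 ∣ y := by
        apply pdvd 5 (by norm_num)
        have : x * ((5*x)^2 + 5*r^2) * 5 = 3888 * y ^ 7 := by linear_combination e2
        push_cast; omega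
      obtain ⟨y, rfl⟩ := h5y
      have e3 : x * (r^2 + 5*x^2) = 2^4 * 3^5 * 5^5 * y^7 := by linarith [show (5*x)*((5*x)^2 + 5*r^2) = 25 * (x * (r^2 + 5*x^2)) by ring, show (5*y)^7 = 25 * (5^5*y^7) by ring]
      obtain ⟨s, t, hs, ht⟩ := splitZ x (r^2 + 5*x^2) (2^4 * 3^5 * 5^5) y (by norm_num) e3
        (by
          rw [show r^2 + 5*x^2 = r^2 + x * (5 * x) by ring]
          exact IsCoprime.add_mul_left_right hc.pow_right _)
        (by
          obtain ⟨k, hk⟩ := h2x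
          obtain ⟨l, hl⟩ := h3
          refine (((cop2 _ ?_).pow_left).mul_left (cop3 _ ?_).pow_left).mul_left (cop5 _ ?_).pow_left
          · exact sqn 2 (by norm_num) r (5*k*x) _ h2r (by push_cast; linear_combination 5 * x * hk)
          · exact sqn 3 (by norm_num) r (5*l*x) _ h3r (by push_cast; linear_combination 5 * x * hl)
          · exact sqn 5 (by norm_num) r (x*x) _ h5r (by push_cast; ring))
      exact btype r x s t _ (by norm_num) (Or.inr rfl) hx hs h5r hc.symm ht
    · obtain ⟨s, t, hs, ht⟩ := splitZ x (x^2 + 5*r^2) (2^4 * 3^5) y (by norm_num) e2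
        (mcop x r hc h5).1.symm
        (by
          refine ((cop2 _ ?_).pow_left).mul_left (cop3 _ ?_).pow_left
          · obtain ⟨k, hk⟩ := h2x
            exact sqn 2 (by norm_num) r (2*r^2 + k*x) _ h2r (by push_cast; linear_combination x * hk)
          · simpa using n3 x 1 r h3 h3r)
      exact atype x r s t _ (by norm_num) (Or.inr rfl) hx hs h5 hc ht
  · have hc2 : IsCoprime x (2 * r) := (cop2 x h2).symm.mul_right hc
    have h32 : ¬ 3 ∣ 2 * r := by omega
    by_cases h5 : 5 ∣ x
    · have h5r : ¬ 5 ∣ 2 * r := ndvd_of 5 (by norm_num) x _ hc2 h5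
      obtain ⟨x, rfl⟩ := h5
      have hx : x ≠ 0 := by omega
      have hc : IsCoprime x (2*r) := hc2.of_mul_left_right
      have h3 : 3 ∣ x := by omega
      have h5y : 5 ∣ y1 := by
        apply pdvd 5 (by norm_num)
        have : x * ((5*x)^2 + 20*r^2) * 5 = 243 * y1 ^ 7 := by linear_combination e1
        push_cast; omega
      obtain ⟨y, rfl⟩ := h5y
      have e3 : x * ((2*r)^2 + 5*x^2) = 3^5 * 5^5 * y^7 := by linarith [show (5*x)*((5*x)^2 + 20*r^2) = 25 * (x * ((2*r)^2 + 5*x^2)) by ring, show (5*y)^7 = 25 * (5^5*y^7) by ring]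
      obtain ⟨s, t, hs, ht⟩ := splitZ x ((2*r)^2 + 5*x^2) (3^5 * 5^5) y (by norm_num) e3
        (by
          rw [show (2*r)^2 + 5*x^2 = (2*r)^2 + x * (5 * x) by ring]
          exact IsCoprime.add_mul_left_right hc.pow_right _)
        (by
          obtain ⟨l, hl⟩ := h3
          refine ((cop3 _ ?_).pow_left).mul_left (cop5 _ ?_).pow_left
          · exact sqn 3 (by norm_num) (2*r) (5*l*x) _ h32 (by push_cast; linear_combination 5 * x * hl)
          · exact sqn 5 (by norm_num) (2*r) (x*x) _ h5r (by push_cast; ring))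
      exact btype (2*r) x s t _ (by norm_num) (Or.inl rfl) hx hs h5r hc.symm ht
    · obtain ⟨s, t, hs, ht⟩ := splitZ x (x^2 + 5*(2*r)^2) (3^5) y1 (by norm_num) (by linear_combination e1)
        (mcop x (2*r) hc2 h5).1.symm
        ((cop3 _ (by simpa using n3 x 1 (2*r) h3 h32)).pow_left)
      exact atype x (2*r) s t _ (by norm_num) (Or.inl rfl) hx hs h5 hc2 ht
end

section
/- Let p ≥ 3 be a prime and let x, r, y be integers with gcd(x, r) = 1 such that 2 ∣ x and 4 ∤ x. Then the equation 9x(x² + 20r²) = y^p has no solutions; that is, there are no integers x, r, y with gcd(x, r) = 1, x ≡ 2 (mod 4), and 9x(x² + 20r²) = y^p. -/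
theorem no_solutions_x_exactly_div_by_two (p : ℕ) (hp : p.Prime) (hp3 : 3 ≤ p)
    (x r y : ℤ) (hgcd : Int.gcd x r = 1) (h2 : 2 ∣ x) (h4 : ¬ 4 ∣ x) :
    9 * x * (x ^ 2 + 20 * r ^ 2) ≠ y ^ p := by
  intro h
  obtain ⟨k, rfl⟩ := h2
  have hr : r % 2 = 1 := by
    by_contra hr
    have h2r : (2 : ℤ) ∣ r := by omega
    have := Int.dvd_coe_gcd (Dvd.intro k rfl : (2 : ℤ) ∣ 2 * k) h2r
    rw [hgcd] at this
    norm_num at this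
  obtain ⟨a, rfl⟩ : ∃ a, k = 2 * a + 1 := ⟨k / 2, by omega⟩
  obtain ⟨b, rfl⟩ : ∃ b, r = 2 * b + 1 := ⟨r / 2, by omega⟩
  obtain ⟨m, hm⟩ : ∃ m : ℤ, y ^ p = 16 * (2 * m + 1) := by
    refine ⟨9 * a * (2 * (a * (a + 1) + 5 * b * (b + 1) + 1) + 1)
      + 9 * (a * (a + 1) + 5 * b * (b + 1) + 1) + 4, ?_⟩
    rw [← h]; ring
  have hy : (2 : ℤ) ∣ y := by
    apply Int.prime_two.dvd_of_dvd_pow (n := p)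
    rw [hm]; omega
  obtain ⟨z, rfl⟩ := hy
  have hp4 : p ≠ 4 := by rintro rfl; norm_num at hp
  by_cases h3 : p = 3
  · subst h3
    have hz3 : z ^ 3 = 2 * (2 * m + 1) := by
      rw [mul_pow] at hm; omega
    have hz : (2 : ℤ) ∣ z := by
      apply Int.prime_two.dvd_of_dvd_pow (n := 3)
      rw [hz3]; omega
    obtain ⟨w, rfl⟩ := hz
    rw [mul_pow] at hz3; omega
  · have h5 : (2 * z) ^ 5 ∣ (2 * z) ^ p := pow_dvd_pow _ (by omega)
    rw [hm, mul_pow] at h5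
    have := (Dvd.intro _ rfl : (2 : ℤ) ^ 5 ∣ 2 ^ 5 * z ^ 5).trans h5
    omega
end
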